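/- arXiv:2510.18451 — 2 statements merged into one kernel-verified Lean document; each statement's English description precedes it below -/
import Mathlib

section
/- Let τ₁ > 2 and let Ψ : (0,∞) → (0,∞) be given by Ψ(q) = q^{−τ₁}. If ω : (0,∞) → (0,∞) is given by ω(q) = q^{−τ₂} for some τ₂ with 0 < τ₂ < τ₁(τ₁ − 2), then dim_H(E(Ψ,ω)) = 2/(τ₁ + τ₂). -/
open Filter Set

/-- A real number `x` is `Ψ`-approximable: `|x - p/q| ≤ Ψ q` for infinitely many
pairs `(p, q) ∈ ℤ × ℕ` (with `q > 0`).  `WSet Ψ` is the set `W(Ψ)` of such `x`. -/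
def WSet (Ψ : ℝ → ℝ) : Set ℝ :=
  {x : ℝ | {pq : ℤ × ℕ | 0 < pq.2 ∧ |x - (pq.1 : ℝ) / (pq.2 : ℝ)| ≤ Ψ (pq.2 : ℝ)}.Infinite}

/-- `ESet Ψ ω` is the set `E(Ψ, ω)` of `x ∈ W(Ψ)` such that for all sufficiently large
`q ∈ ℕ` one has `|x - p/q| ≥ (1 - ω q) * Ψ q` for every `p ∈ ℤ`. -/
def ESet (Ψ ω : ℝ → ℝ) : Set ℝ :=
  {x : ℝ | x ∈ WSet Ψ ∧ ∃ Q : ℕ, ∀ q : ℕ, Q ≤ q → ∀ p : ℤ,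
    (1 - ω (q : ℝ)) * Ψ (q : ℝ) ≤ |x - (p : ℝ) / (q : ℝ)|}

/-!
Write `σ = τ₁ + τ₂`. For a fraction `p/q` the set `(1 - ω q) Ψ q ≤ |y - p/q| ≤ Ψ q` consists of
two intervals of length `ω q · Ψ q = q^(-σ)`.

*Upper bound.* A point of `E(Ψ, ω)` satisfies the lower inequality for all large `q` and the upper
one infinitely often, so it lies in infinitely many of these intervals. In a bounded region there
are `O(q)` of them for each `q`, and `∑ q · q^(-σ d)` converges for `d > 2/σ`.

*Lower bound.* Attach to each rational `ρ` of denominator `q` the right-hand interval `cell ρ`,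
and call `ρ'` a successor of `ρ` if `cell ρ' ⊆ cell ρ` and no point of `cell ρ'` is too close to a
fraction with denominator in `(q, ρ'.den]`. The limit of an infinite chain of successors lies in
`E(Ψ, ω)`.

Every `ρ` with large denominator has at least `q^(-σ) N² / 256` successors with denominators in
`[N/8, N]`, for all large `N`. To see this, discard from the middle half of the cell its bad
points, which lie within `2 s^(-τ₁)` of a fraction `r/s` with `s > q`. Because `ρ` repels other
fractions, only `s ≥ q^(τ₁ - 1)/2` occur, and a dyadic union bound shows that they spoil at most
an eighth of the cell: the largest of these balls has radius about `q^(-τ₁(τ₁ - 1))`, which is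
negligible against the length `q^(-σ)` exactly because `τ₂ < τ₁(τ₁ - 2)`. Dirichlet's theorem
places a rational of denominator `k ≤ N` within `1/(k N)` of each remaining point. Denominators
`k < N/8` account for only part of these points, so there must be many rationals with `k ≥ N/8`;
these are successors.

Choosing the same number of successors for all nodes of a generation, and `N` growing fast, gives
a tree whose paths are the mixed-radix expansions of the numbers in `[0, 1)`. Rationals with
denominators at most `N` are `1/N²`-separated, and from this the map sending a limit point to the
number encoded by its path is seen to be Hölder of any given exponent `s < 2/σ`; so the limit set
has dimension at least `s`.
-/

theorem natCast_rpow_neg_le_one {τ : ℝ} (hτ : 0 ≤ τ) (q : ℕ) : (q : ℝ) ^ (-τ) ≤ 1 := by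
  rcases q.eq_zero_or_pos with rfl | hq
  · exact_mod_cast Real.zero_rpow_le_one _
  · exact Real.rpow_le_one_of_one_le_of_nonpos (by exact_mod_cast hq) (neg_nonpos.2 hτ)

theorem eventually_mul_rpow_le_rpow (c : ℝ) {a b : ℝ} (hab : a < b) :
    ∀ᶠ x : ℝ in atTop, c * x ^ a ≤ x ^ b := by
  filter_upwards [(tendsto_rpow_atTop (sub_pos.2 hab)).eventually_ge_atTop c, eventually_gt_atTop 0]
    with x hx hx₀
  calc c * x ^ a ≤ x ^ (b - a) * x ^ a := by gcongr
    _ = x ^ b := by rw [← Real.rpow_add hx₀, sub_add_cancel]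

theorem cast_sub_eq_cast_mod_sub_mod {i j m : ℕ} (h : i / m = j / m) :
    (j : ℝ) - i = ((j % m : ℕ) : ℝ) - (i % m : ℕ) := by
  rw [sub_eq_sub_iff_add_eq_add]
  norm_cast
  linarith [h ▸ Nat.div_add_mod i m, Nat.div_add_mod j m]

theorem exists_strictMonoOn_Iio_forall_mem {α : Type*} [LinearOrder α] [Nonempty α] {F : Finset α}
    {m : ℕ} (h : m ≤ F.card) : ∃ c : ℕ → α, StrictMonoOn c (Iio m) ∧ ∀ i < m, c i ∈ F := by
  let c (i : ℕ) : α := if hi : i < m then F.orderEmbOfCardLe h ⟨i, hi⟩ else Classical.arbitrary α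
  have hc {i : ℕ} (hi : i < m) : c i = F.orderEmbOfCardLe h ⟨i, hi⟩ := dif_pos hi
  refine ⟨c, fun i hi j hj hij => ?_, fun i hi => ?_⟩
  · rw [hc hi, hc hj]
    exact (F.orderEmbOfCardLe h).strictMono hij
  · rw [hc hi]
    exact F.orderEmbOfCardLe_mem h _

/-! ### The upper bound -/

section UpperBound

open MeasureTheory Measure Topology
open scoped ENNReal NNReal

theorem hausdorffMeasure_setOf_infinite_eq_zero {X ι : Type*} [EMetricSpace X]
    [MeasurableSpace X] [BorelSpace X] [Countable ι] {d : ℝ} (hd : 0 < d) (t : ι → Set X)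
    (ht : ∑' i, Metric.ediam (t i) ^ d ≠ ∞) : μH[d] {x | {i | x ∈ t i}.Infinite} = 0 := by
  have htail := ENNReal.tendsto_tsum_compl_atTop_zero ht
  have hdiam : Tendsto
      (fun S : Finset ι => (∑' i : {i // i ∉ S}, Metric.ediam (t i) ^ d) ^ d⁻¹) atTop (𝓝 0) := by
    have := (ENNReal.continuous_rpow_const (y := d⁻¹)).tendsto 0
    rw [ENNReal.zero_rpow_of_pos (inv_pos.2 hd)] at this
    exact this.comp htail
  have hle := hausdorffMeasure_le_liminf_tsum d {x | {i | x ∈ t i}.Infinite} _ hdiam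
    (fun S (i : {i // i ∉ S}) => t i)
    (Eventually.of_forall fun S i => by
      rw [← ENNReal.rpow_le_rpow_iff hd, ENNReal.rpow_inv_rpow hd.ne']
      exact ENNReal.le_tsum (f := fun i : {i // i ∉ S} => Metric.ediam (t i) ^ d) i)
    (Eventually.of_forall fun S x hx => by
      obtain ⟨i, hi, hiS⟩ := Set.Infinite.exists_notMem_finset hx S
      exact mem_iUnion.2 ⟨⟨i, hiS⟩, hi⟩)
  rw [htail.liminf_eq] at hle
  exact le_antisymm hle zero_le

/-- One of the two intervals that make up `{x | (1 - ω q) * Ψ q ≤ |x - p / q| ≤ Ψ q}`: the part to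
the right of `p / q` for the sign `u = 1`, the part to the left for `u = -1`. -/
def halfShell (Ψ ω : ℝ → ℝ) (p : ℤ) (q : ℕ) (u : ℤˣ) : Set ℝ :=
  {x | (u : ℤ) * (x - p / q) ∈ Icc ((1 - ω q) * Ψ q) (Ψ q)}

theorem ediam_halfShell_le (Ψ ω : ℝ → ℝ) (p : ℤ) (q : ℕ) (u : ℤˣ) :
    Metric.ediam (halfShell Ψ ω p q u) ≤ ENNReal.ofReal (ω q * Ψ q) := by
  refine Metric.ediam_le fun x hx y hy => ?_
  have hxy : |x - y| ≤ ω q * Ψ q := by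
    obtain ⟨hx₁, hx₂⟩ := hx
    obtain ⟨hy₁, hy₂⟩ := hy
    rcases Int.units_eq_one_or u with rfl | rfl <;>
      simp only [Units.val_one, Units.val_neg, Int.cast_neg, Int.cast_one] at hx₁ hx₂ hy₁ hy₂ <;>
      rw [abs_le] <;> constructor <;> linarith
  rw [edist_dist, Real.dist_eq]
  exact ENNReal.ofReal_le_ofReal hxy

theorem exists_mem_halfShell {Ψ ω : ℝ → ℝ} {p : ℤ} {q : ℕ} {x : ℝ}
    (hx : |x - p / q| ∈ Icc ((1 - ω q) * Ψ q) (Ψ q)) : ∃ u, x ∈ halfShell Ψ ω p q u := by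
  rcases abs_choice (x - p / q) with h | h <;> rw [h] at hx
  · exact ⟨1, by simpa [halfShell] using hx⟩
  · exact ⟨-1, by simpa [halfShell] using hx⟩

/-- The pairs `(p, q)` for which `x` lies in the shell `(1 - ω q) * Ψ q ≤ |x - p / q| ≤ Ψ q`. -/
def shellPairs (Ψ ω : ℝ → ℝ) (x : ℝ) : Set (ℤ × ℕ) :=
  {pq | 0 < pq.2 ∧ |x - pq.1 / pq.2| ∈ Icc ((1 - ω pq.2) * Ψ pq.2) (Ψ pq.2)}

theorem abs_num_le_of_abs_sub_div_le {p : ℤ} {q n : ℕ} {x : ℝ} (hx : |x| ≤ n) (hq : 0 < q)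
    (h : |x - p / q| ≤ 1) : |p| ≤ (n + 1) * q := by
  have hq' : (0 : ℝ) < q := by exact_mod_cast hq
  have hpq : |(p : ℝ) / q| ≤ n + 1 := by
    rw [abs_sub_comm] at h
    linarith [abs_sub_abs_le_abs_sub ((p : ℝ) / q) x]
  rw [abs_div, abs_of_pos hq', div_le_iff₀ hq'] at hpq
  exact_mod_cast hpq

theorem infinite_shellPairs_of_mem_ESet {Ψ ω : ℝ → ℝ} {x : ℝ} (hΨ : ∀ q : ℕ, 0 < q → Ψ q ≤ 1)
    (hx : x ∈ ESet Ψ ω) : (shellPairs Ψ ω x).Infinite := by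
  obtain ⟨hW, Q, hQ⟩ := hx
  obtain ⟨n, hn⟩ := exists_nat_ge |x|
  have hsmall : {pq : ℤ × ℕ | (0 < pq.2 ∧ |x - pq.1 / pq.2| ≤ Ψ pq.2) ∧ pq.2 < Q}.Finite := by
    refine ((finite_Icc (-((n + 1) * Q : ℤ)) ((n + 1) * Q)).prod (finite_Iio Q)).subset ?_
    rintro ⟨p, q⟩ ⟨⟨hq, hpq⟩, hqQ⟩
    refine ⟨abs_le.1 ?_, hqQ⟩
    refine (abs_num_le_of_abs_sub_div_le hn hq (hpq.trans (hΨ q hq))).trans ?_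
    gcongr
  refine (hW.sdiff hsmall).mono ?_
  rintro ⟨p, q⟩ ⟨⟨hq, hpq⟩, hqQ⟩
  exact ⟨hq, hQ q (not_lt.1 fun h => hqQ ⟨⟨hq, hpq⟩, h⟩) p, hpq⟩

/-- The numerators of the fractions of denominator `q` that can be within distance `1` of a point of
`[-n, n]`. -/
noncomputable def numerators (n q : ℕ) : Finset ℤ :=
  Finset.Icc (-((n + 1) * q : ℤ)) ((n + 1) * q)

theorem card_numerators_prod_units_le (n : ℕ) {q : ℕ} (hq : 0 < q) :
    Fintype.card (numerators n q × ℤˣ) ≤ 6 * (n + 1) * q := by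
  rw [Fintype.card_prod, Fintype.card_coe, numerators, Int.card_Icc, Fintype.card_units_int]
  have : 1 ≤ (n + 1) * q := Nat.mul_pos n.succ_pos hq
  lia

/-- The index `q` stands for the denominator `q + 1`. -/
theorem tsum_ediam_halfShell_rpow_ne_top {Ψ ω : ℝ → ℝ} {d : ℝ≥0}
    (hsum : ∑' q : ℕ, (q : ℝ≥0∞) * ENNReal.ofReal (ω q * Ψ q) ^ (d : ℝ) ≠ ∞) (n : ℕ) :
    ∑' i : Σ q : ℕ, numerators n (q + 1) × ℤˣ,
      Metric.ediam (halfShell Ψ ω i.2.1 (i.1 + 1) i.2.2) ^ (d : ℝ) ≠ ∞ := by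
  refine ne_top_of_le_ne_top (ENNReal.mul_ne_top (ENNReal.natCast_ne_top (6 * (n + 1))) hsum) ?_
  calc _ ≤ ∑' i : Σ q : ℕ, numerators n (q + 1) × ℤˣ,
          ENNReal.ofReal (ω (i.1 + 1 : ℕ) * Ψ (i.1 + 1 : ℕ)) ^ (d : ℝ) :=
        ENNReal.tsum_le_tsum fun i => by gcongr; exact ediam_halfShell_le ..
    _ = ∑' q : ℕ, Fintype.card (numerators n (q + 1) × ℤˣ) *
          ENNReal.ofReal (ω (q + 1 : ℕ) * Ψ (q + 1 : ℕ)) ^ (d : ℝ) := by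
        rw [ENNReal.tsum_sigma']
        simp only [tsum_fintype, Finset.sum_const, Finset.card_univ, nsmul_eq_mul]
    _ ≤ ∑' q : ℕ, (6 * (n + 1) : ℕ) *
          ((q + 1 : ℕ) * ENNReal.ofReal (ω (q + 1 : ℕ) * Ψ (q + 1 : ℕ)) ^ (d : ℝ)) := by
        refine ENNReal.tsum_le_tsum fun q => ?_
        rw [← mul_assoc]
        gcongr
        exact_mod_cast card_numerators_prod_units_le n q.succ_pos
    _ ≤ _ := by
        rw [ENNReal.tsum_mul_left]
        refine mul_le_mul_right ?_ _
        exact ENNReal.tsum_comp_le_tsum_of_injective (add_left_injective 1)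
          fun q : ℕ => (q : ℝ≥0∞) * ENNReal.ofReal (ω q * Ψ q) ^ (d : ℝ)

theorem dimH_setOf_infinite_shellPairs_le {Ψ ω : ℝ → ℝ} {d : ℝ≥0} (hd : 0 < d)
    (hΨ : ∀ q : ℕ, 0 < q → Ψ q ≤ 1)
    (hsum : ∑' q : ℕ, (q : ℝ≥0∞) * ENNReal.ofReal (ω q * Ψ q) ^ (d : ℝ) ≠ ∞) (n : ℕ) :
    dimH {x : ℝ | |x| ≤ n ∧ (shellPairs Ψ ω x).Infinite} ≤ d := by
  let t : (Σ q : ℕ, numerators n (q + 1) × ℤˣ) → Set ℝ :=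
    fun i => halfShell Ψ ω i.2.1 (i.1 + 1) i.2.2
  have hsub : {x : ℝ | |x| ≤ n ∧ (shellPairs Ψ ω x).Infinite} ⊆ {x | {i | x ∈ t i}.Infinite} := by
    rintro x ⟨hxn, hx⟩
    refine (hx.mono ?_).of_image
      fun i : (Σ q : ℕ, numerators n (q + 1) × ℤˣ) => ((i.2.1 : ℤ), i.1 + 1)
    rintro ⟨p, q⟩ ⟨hq, hpq⟩
    obtain ⟨q, rfl⟩ := Nat.exists_eq_succ_of_ne_zero hq.ne'
    obtain ⟨u, hu⟩ := exists_mem_halfShell hpq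
    have hp := abs_num_le_of_abs_sub_div_le hxn hq (hpq.2.trans (hΨ _ hq))
    exact ⟨⟨q, ⟨p, Finset.mem_Icc.2 (abs_le.1 hp)⟩, u⟩, hu, rfl⟩
  refine dimH_le_of_hausdorffMeasure_ne_top (ne_top_of_le_ne_top ENNReal.zero_ne_top ?_)
  exact (measure_mono hsub).trans_eq
    (hausdorffMeasure_setOf_infinite_eq_zero hd t (tsum_ediam_halfShell_rpow_ne_top hsum n))

theorem dimH_ESet_le_of_tsum_ne_top {Ψ ω : ℝ → ℝ} {d : ℝ≥0} (hd : 0 < d)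
    (hΨ : ∀ q : ℕ, 0 < q → Ψ q ≤ 1)
    (hsum : ∑' q : ℕ, (q : ℝ≥0∞) * ENNReal.ofReal (ω q * Ψ q) ^ (d : ℝ) ≠ ∞) :
    dimH (ESet Ψ ω) ≤ d := by
  have hcover : ESet Ψ ω ⊆ ⋃ n : ℕ, {x : ℝ | |x| ≤ n ∧ (shellPairs Ψ ω x).Infinite} :=
    fun x hx => mem_iUnion.2 <| (exists_nat_ge |x|).imp fun _ hn =>
      ⟨hn, infinite_shellPairs_of_mem_ESet hΨ hx⟩
  refine (dimH_mono hcover).trans ?_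
  rw [dimH_iUnion]
  exact iSup_le fun n => dimH_setOf_infinite_shellPairs_le hd hΨ hsum n

theorem tsum_natCast_mul_ofReal_rpow_ne_top {σ d : ℝ} (hd : 0 ≤ d) (hσd : 2 < σ * d) :
    ∑' q : ℕ, (q : ℝ≥0∞) * ENNReal.ofReal ((q : ℝ) ^ (-σ)) ^ d ≠ ∞ := by
  have hterm (q : ℕ) : (q : ℝ≥0∞) * ENNReal.ofReal ((q : ℝ) ^ (-σ)) ^ d =
      ENNReal.ofReal ((q : ℝ) ^ (1 - σ * d)) := by
    rcases q.eq_zero_or_pos with rfl | hq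
    · simp [Real.zero_rpow (by linarith : 1 - σ * d ≠ 0)]
    · have hq' : (0 : ℝ) < q := by exact_mod_cast hq
      rw [ENNReal.ofReal_rpow_of_nonneg (by positivity) hd, ← ENNReal.ofReal_natCast,
        ← ENNReal.ofReal_mul hq'.le, ← Real.rpow_mul hq'.le, sub_eq_add_neg, Real.rpow_add hq',
        Real.rpow_one, neg_mul]
  simp_rw [hterm]
  exact (Real.summable_nat_rpow.2 (by linarith)).tsum_ofReal_ne_top

theorem dimH_ESet_rpow_le {τ₁ τ₂ : ℝ} (hτ₁ : 0 ≤ τ₁) (hσ : 0 < τ₁ + τ₂) :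
    dimH (ESet (fun q : ℝ => q ^ (-τ₁)) (fun q : ℝ => q ^ (-τ₂))) ≤
      ENNReal.ofReal (2 / (τ₁ + τ₂)) := by
  refine ENNReal.le_of_forall_pos_le_add fun ε hε _ => ?_
  have hd : 2 / (τ₁ + τ₂) < (Real.toNNReal (2 / (τ₁ + τ₂)) + ε : ℝ≥0) := by
    push_cast
    rw [Real.coe_toNNReal _ (by positivity)]
    linarith [NNReal.coe_pos.2 hε]
  refine (dimH_ESet_le_of_tsum_ne_top (d := Real.toNNReal (2 / (τ₁ + τ₂)) + ε) (by positivity)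
    (fun q _ => natCast_rpow_neg_le_one hτ₁ q) ?_).trans_eq (by simp [ENNReal.ofReal])
  have hprod (q : ℕ) : (q : ℝ) ^ (-τ₂) * (q : ℝ) ^ (-τ₁) = (q : ℝ) ^ (-(τ₁ + τ₂)) := by
    rw [← Real.rpow_add' (by positivity) (by linarith), neg_add_rev]
  simp_rw [hprod]
  refine tsum_natCast_mul_ofReal_rpow_ne_top (by positivity) ?_
  rwa [div_lt_iff₀' hσ] at hd

end UpperBound

/-! ### Lower bounds for Hausdorff dimension from separated trees -/

section SeparatedTree

open scoped ENNReal NNReal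

theorem mul_dimH_le_dimH_image {X Y : Type*} [EMetricSpace X] [EMetricSpace Y] {f : X → Y}
    {A : Set X} {C s : ℝ≥0} (hs : 0 < s)
    (hf : ∀ x ∈ A, ∀ y ∈ A, edist x y ≤ C * edist (f x) (f y) ^ (s : ℝ)) :
    s * dimH A ≤ dimH (f '' A) := by
  rcases A.eq_empty_or_nonempty with rfl | ⟨a, -⟩
  · simp
  have : Nonempty X := ⟨a⟩
  have hinj : InjOn f A := fun x hx y hy hxy => by
    have h := hf x hx y hy
    rwa [hxy, edist_self, ENNReal.zero_rpow_of_pos (by exact_mod_cast hs), mul_zero,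
      nonpos_iff_eq_zero, edist_eq_zero] at h
  have hinv : HolderOnWith C s (Function.invFunOn f A) (f '' A) := by
    rintro _ ⟨x, hx, rfl⟩ _ ⟨y, hy, rfl⟩
    rw [hinj.leftInvOn_invFunOn hx, hinj.leftInvOn_invFunOn hy]
    exact hf x hx y hy
  have hdim := hinv.dimH_image_le hs
  rwa [hinj.invFunOn_image Subset.rfl, ENNReal.le_div_iff_mul_le
    (Or.inl (by exact_mod_cast hs.ne')) (Or.inl ENNReal.coe_ne_top), mul_comm] at hdim

/-- The first `k` mixed-radix digits of `t ∈ [0, 1)`, for the radices `m 0, m 1, …`, read as one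
natural number below `m 0 * ⋯ * m (k - 1)`. -/
noncomputable def mixedRadixPrefix (m : ℕ → ℕ) (t : ℝ) (k : ℕ) : ℕ :=
  ⌊t * ∏ i ∈ Finset.range k, (m i : ℝ)⌋₊

theorem mixedRadixPrefix_succ_div {m : ℕ → ℕ} (t : ℝ) {k : ℕ} (hm : m k ≠ 0) :
    mixedRadixPrefix m t (k + 1) / m k = mixedRadixPrefix m t k := by
  have hm' : (m k : ℝ) ≠ 0 := by exact_mod_cast hm
  rw [mixedRadixPrefix, ← Nat.floor_div_natCast, Finset.prod_range_succ, ← mul_assoc,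
    mul_div_cancel_right₀ _ hm', mixedRadixPrefix]

theorem mixedRadixPrefix_zero (m : ℕ → ℕ) {t : ℝ} (ht : t ∈ Ico (0 : ℝ) 1) :
    mixedRadixPrefix m t 0 = 0 := by
  simpa [mixedRadixPrefix, Nat.floor_eq_zero] using ht.2

theorem mixedRadixPrefix_mono (m : ℕ → ℕ) {t t' : ℝ} (h : t ≤ t') (k : ℕ) :
    mixedRadixPrefix m t k ≤ mixedRadixPrefix m t' k :=
  Nat.floor_mono (by gcongr)

theorem sub_mul_prod_lt_mixedRadixPrefix_sub (m : ℕ → ℕ) {t : ℝ} (ht : 0 ≤ t) (t' : ℝ) (k : ℕ) :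
    (t' - t) * ∏ i ∈ Finset.range k, (m i : ℝ) <
      mixedRadixPrefix m t' k - mixedRadixPrefix m t k + 1 := by
  have hlo : (mixedRadixPrefix m t k : ℝ) ≤ t * ∏ i ∈ Finset.range k, (m i : ℝ) :=
    Nat.floor_le (by positivity)
  have hup : t' * ∏ i ∈ Finset.range k, (m i : ℝ) < mixedRadixPrefix m t' k + 1 :=
    Nat.lt_floor_add_one _
  linarith

theorem two_pow_le_prod {m : ℕ → ℕ} (hm : ∀ k, 2 ≤ m k) (k : ℕ) :
    (2 : ℝ) ^ k ≤ ∏ i ∈ Finset.range k, (m i : ℝ) := by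
  simpa using Finset.prod_le_prod (s := Finset.range k) (f := fun _ => (2 : ℝ))
    (fun _ _ => zero_le_two) fun i _ => by exact_mod_cast hm i

theorem exists_mixedRadixPrefix_eq_and_succ_lt {m : ℕ → ℕ} (hm : ∀ k, 2 ≤ m k) {t t' : ℝ}
    (ht : t ∈ Ico (0 : ℝ) 1) (ht' : t' ∈ Ico (0 : ℝ) 1) (h : t < t') :
    ∃ k, mixedRadixPrefix m t k = mixedRadixPrefix m t' k ∧
      mixedRadixPrefix m t (k + 1) < mixedRadixPrefix m t' (k + 1) := by
  by_contra! hcon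
  have heq (k : ℕ) : mixedRadixPrefix m t k = mixedRadixPrefix m t' k := by
    induction k with
    | zero => rw [mixedRadixPrefix_zero m ht, mixedRadixPrefix_zero m ht']
    | succ k ih => exact (mixedRadixPrefix_mono m h.le _).antisymm (hcon k ih)
  obtain ⟨k, hk⟩ := pow_unbounded_of_one_lt (t' - t)⁻¹ (one_lt_two (α := ℝ))
  have hlt := sub_mul_prod_lt_mixedRadixPrefix_sub m ht.1 t' k
  rw [heq k, sub_self, zero_add] at hlt
  have : (t' - t) * (t' - t)⁻¹ < 1 := by
    refine lt_of_le_of_lt ?_ hlt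
    exact mul_le_mul_of_nonneg_left (hk.le.trans (two_pow_le_prod hm k)) (sub_nonneg.2 h.le)
  rw [mul_inv_cancel₀ (by linarith)] at this
  exact this.false

variable {X : Type*} [MetricSpace X] {m : ℕ → ℕ} {K : ℕ → ℕ → Set X} {ε : ℕ → ℝ} {C s : ℝ}

theorem sub_le_mul_dist_rpow_of_mem_tree (hm : ∀ k, 2 ≤ m k) (hε : ∀ k, 0 < ε k)
    (hs : 0 ≤ s) (hs₁ : s ≤ 1)
    (hsep : ∀ k i j, i < j → i / m k = j / m k → ∀ x ∈ K (k + 1) i, ∀ y ∈ K (k + 1) j,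
      ((j : ℝ) - i) * ε k ≤ dist x y)
    (hgrowth : ∀ k, (2 / (m k * ε k)) ^ s ≤ C * ∏ i ∈ Finset.range k, (m i : ℝ)) {t t' : ℝ}
    (ht : t ∈ Ico (0 : ℝ) 1) (ht' : t' ∈ Ico (0 : ℝ) 1) (htt' : t < t') {x x' : X}
    (hx : ∀ k, x ∈ K k (mixedRadixPrefix m t k)) (hx' : ∀ k, x' ∈ K k (mixedRadixPrefix m t' k)) :
    t' - t ≤ C * dist x x' ^ s := by
  obtain ⟨k, heq, hlt⟩ := exists_mixedRadixPrefix_eq_and_succ_lt hm ht ht' htt'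
  set M := ∏ i ∈ Finset.range k, (m i : ℝ)
  set D : ℝ := (mixedRadixPrefix m t' (k + 1) : ℝ) - mixedRadixPrefix m t (k + 1)
  have hm₀ (i : ℕ) : 0 < m i := two_pos.trans_le (hm i)
  have hmk : (0 : ℝ) < m k := by exact_mod_cast hm₀ k
  have hM : 0 < M := Finset.prod_pos fun i _ => by exact_mod_cast hm₀ i
  have hεk := hε k
  have hdist : D * ε k ≤ dist x x' := by
    refine hsep k _ _ hlt ?_ _ (hx _) _ (hx' _)
    rw [mixedRadixPrefix_succ_div _ (hm₀ k).ne', mixedRadixPrefix_succ_div _ (hm₀ k).ne', heq]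
  have hD : 1 ≤ D := le_sub_iff_add_le'.2 (by exact_mod_cast hlt)
  have hle_one : (t' - t) * M ≤ 1 := by
    simpa [heq] using (sub_mul_prod_lt_mixedRadixPrefix_sub m ht.1 t' k).le
  have hle_dist : (t' - t) * M ≤ 2 / (m k * ε k) * dist x x' := by
    have hD' : (t' - t) * M * m k ≤ 2 * D := by
      have := sub_mul_prod_lt_mixedRadixPrefix_sub m ht.1 t' (k + 1)
      rw [Finset.prod_range_succ, ← mul_assoc] at this
      linarith
    rw [div_mul_eq_mul_div, le_div_iff₀ (by positivity)]
    calc (t' - t) * M * (m k * ε k) = (t' - t) * M * m k * ε k := by ring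
      _ ≤ 2 * D * ε k := by gcongr
      _ ≤ 2 * dist x x' := by linarith
  have hpos : 0 ≤ (t' - t) * M := mul_nonneg (sub_nonneg.2 htt'.le) hM.le
  refine le_of_mul_le_mul_right ?_ hM
  calc (t' - t) * M ≤ ((t' - t) * M) ^ s := Real.self_le_rpow_of_le_one hpos hle_one hs₁
    _ ≤ (2 / (m k * ε k) * dist x x') ^ s := by gcongr
    _ = (2 / (m k * ε k)) ^ s * dist x x' ^ s := Real.mul_rpow (by positivity) dist_nonneg
    _ ≤ C * M * dist x x' ^ s := by gcongr; exact hgrowth k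
    _ = C * dist x x' ^ s * M := by ring

/-- The sets of generation `k` are indexed by the mixed-radix prefixes of length `k`, and `K k j`
contains its successors `K (k + 1) i` with `i / m k = j`. -/
theorem le_dimH_of_separated_tree {E : Set X} (hm : ∀ k, 2 ≤ m k) (hε : ∀ k, 0 < ε k)
    (hs : 0 < s) (hs₁ : s ≤ 1) (hne : ∀ k j, (K k j).Nonempty) (hcpt : ∀ k j, IsCompact (K k j))
    (hnest : ∀ k j, K (k + 1) j ⊆ K k (j / m k))
    (hsep : ∀ k i j, i < j → i / m k = j / m k → ∀ x ∈ K (k + 1) i, ∀ y ∈ K (k + 1) j,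
      ((j : ℝ) - i) * ε k ≤ dist x y)
    (hgrowth : ∀ k, (2 / (m k * ε k)) ^ s ≤ C * ∏ i ∈ Finset.range k, (m i : ℝ))
    (hE : ∀ b : ℕ → ℕ, (∀ k, b (k + 1) / m k = b k) → ⋂ k, K k (b k) ⊆ E) :
    ENNReal.ofReal s ≤ dimH E := by
  have hpath (t : ℝ) (k : ℕ) : mixedRadixPrefix m t (k + 1) / m k = mixedRadixPrefix m t k :=
    mixedRadixPrefix_succ_div t (two_pos.trans_le (hm k)).ne'
  have hlimit (t : ℝ) : (⋂ k, K k (mixedRadixPrefix m t k)).Nonempty :=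
    IsCompact.nonempty_iInter_of_sequence_nonempty_isCompact_isClosed _
      (fun k => by simpa only [hpath] using hnest k (mixedRadixPrefix m t (k + 1)))
      (fun k => hne k _) (hcpt 0 _) fun k => (hcpt k _).isClosed
  choose g hg using hlimit
  simp only [mem_iInter] at hg
  have hdist : ∀ t ∈ Ico (0 : ℝ) 1, ∀ t' ∈ Ico (0 : ℝ) 1,
      dist t t' ≤ C * dist (g t) (g t') ^ s := by
    intro t ht t' ht'
    rcases lt_trichotomy t t' with h | rfl | h
    · rw [dist_comm, Real.dist_eq, abs_of_pos (sub_pos.2 h)]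
      exact sub_le_mul_dist_rpow_of_mem_tree hm hε hs.le hs₁ hsep hgrowth ht ht' h (hg t) (hg t')
    · simp [Real.zero_rpow hs.ne']
    · rw [Real.dist_eq, abs_of_pos (sub_pos.2 h), dist_comm (g t)]
      exact sub_le_mul_dist_rpow_of_mem_tree hm hε hs.le hs₁ hsep hgrowth ht' ht h (hg t') (hg t)
  have hdim : s.toNNReal * dimH (Ico (0 : ℝ) 1) ≤ dimH (g '' Ico (0 : ℝ) 1) := by
    refine mul_dimH_le_dimH_image (C := C.toNNReal) (Real.toNNReal_pos.2 hs) fun t ht t' ht' => ?_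
    rw [Real.coe_toNNReal _ hs.le, edist_dist, edist_dist,
      ENNReal.ofReal_rpow_of_nonneg dist_nonneg hs.le]
    exact (ENNReal.ofReal_le_ofReal (hdist t ht t' ht')).trans_eq
      (ENNReal.ofReal_mul' (by positivity))
  have hIco : dimH (Ico (0 : ℝ) 1) = 1 := by
    simpa using Real.dimH_of_mem_nhds (E := ℝ) (Ico_mem_nhds (by norm_num : (0 : ℝ) < 1 / 2)
      (by norm_num : (1 / 2 : ℝ) < 1))
  rw [hIco, mul_one] at hdim
  refine hdim.trans (dimH_mono (image_subset_iff.2 fun t _ => ?_))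
  exact hE _ (hpath t) (mem_iInter.2 (hg t))

end SeparatedTree

/-! ### Separation of rationals -/

section RationalSeparation

theorem one_div_den_mul_den_le_abs_sub {a b : ℚ} (h : a ≠ b) :
    1 / ((a.den : ℝ) * b.den) ≤ |(a : ℝ) - b| := by
  have hnum : (a.num * b.den - b.num * a.den : ℤ) ≠ 0 := fun h₀ =>
    h (Rat.eq_iff_mul_eq_mul.2 (sub_eq_zero.1 h₀))
  have hsub : (a : ℝ) - b = ((a.num * b.den - b.num * a.den : ℤ) : ℝ) / (a.den * b.den) := by
    rw [Rat.cast_def a, Rat.cast_def b, div_sub_div _ _ (by simp) (by simp)]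
    push_cast
    ring
  rw [hsub, abs_div, abs_of_nonneg (by positivity : (0 : ℝ) ≤ a.den * b.den)]
  gcongr
  exact_mod_cast Int.one_le_abs hnum

theorem exists_rat_cast_eq_div (r : ℤ) {s : ℕ} (hs : 0 < s) :
    ∃ ρ : ℚ, (ρ : ℝ) = r / s ∧ ρ.den ≤ s := by
  refine ⟨r / s, by push_cast; rfl, Nat.le_of_dvd hs ?_⟩
  have := Rat.den_dvd r s
  rw [← Rat.intCast_div_eq_divInt] at this
  exact_mod_cast this

theorem den_dvd_of_div_eq {ρ : ℚ} {r : ℤ} {s : ℕ} (h : (r : ℝ) / s = ρ) : ρ.den ∣ s := by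
  have hρ : ρ = Rat.divInt r s := by
    rw [← Rat.intCast_div_eq_divInt]
    exact_mod_cast h.symm
  exact_mod_cast hρ ▸ Rat.den_dvd r s

theorem one_div_den_mul_le_abs_sub_div {ρ : ℚ} {r : ℤ} {s : ℕ} (hs : 0 < s)
    (h : (r : ℝ) / s ≠ ρ) : 1 / ((ρ.den : ℝ) * s) ≤ |(ρ : ℝ) - r / s| := by
  obtain ⟨ρ', hρ', hden⟩ := exists_rat_cast_eq_div r hs
  rw [← hρ'] at h ⊢
  refine le_trans ?_ (one_div_den_mul_den_le_abs_sub fun h₀ => h (by rw [h₀]))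
  gcongr

theorem one_div_sq_le_abs_sub {a b : ℚ} {D : ℝ} (ha : a.den ≤ D) (hb : b.den ≤ D) (h : a ≠ b) :
    1 / D ^ 2 ≤ |(a : ℝ) - b| := by
  have hD : 0 ≤ D := (Nat.cast_nonneg _).trans ha
  refine le_trans ?_ (one_div_den_mul_den_le_abs_sub h)
  rw [sq]
  gcongr

theorem sub_div_sq_le_sub_of_strictMonoOn {e : ℕ → ℚ} {D : ℝ} {i j : ℕ} (hij : i ≤ j)
    (he : StrictMonoOn e (Icc i j)) (hden : ∀ l ∈ Icc i j, (e l).den ≤ D) :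
    ((j : ℝ) - i) / D ^ 2 ≤ (e j : ℝ) - e i := by
  induction j, hij using Nat.le_induction with
  | base => simp
  | succ j hij ih =>
    have hsub : Icc i j ⊆ Icc i (j + 1) := Icc_subset_Icc_right j.le_succ
    have hprev := ih (he.mono hsub) fun l hl => hden l (hsub hl)
    have hj : j ∈ Icc i (j + 1) := ⟨hij, j.le_succ⟩
    have hj' : j + 1 ∈ Icc i (j + 1) := ⟨hij.trans j.le_succ, le_rfl⟩
    have hlt : e j < e (j + 1) := he hj hj' j.lt_succ_self
    have hstep := one_div_sq_le_abs_sub (hden _ hj') (hden _ hj) hlt.ne'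
    rw [abs_of_pos (sub_pos.2 (by exact_mod_cast hlt))] at hstep
    push_cast
    rw [add_sub_right_comm, add_div]
    linarith

end RationalSeparation

/-! ### Cells, successors and the tree -/

section Cells

open scoped ENNReal

/-- The right-hand component of `{x | (1 - ω q) * Ψ q ≤ |x - ρ| ≤ Ψ q}`, where `q` is the reduced
denominator of the rational `ρ`. -/
def cell (Ψ ω : ℝ → ℝ) (ρ : ℚ) : Set ℝ :=
  Icc ((ρ : ℝ) + (1 - ω ρ.den) * Ψ ρ.den) (ρ + Ψ ρ.den)

/-- `ρ'` is an admissible successor of `ρ` in the construction of a point of `ESet Ψ ω`: moving from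
the cell of `ρ` to that of `ρ'` violates the lower bound for no denominator in `(ρ.den, ρ'.den]`. -/
structure IsSuccessor (Ψ ω : ℝ → ℝ) (ρ ρ' : ℚ) : Prop where
  den_lt : ρ.den < ρ'.den
  cell_subset : cell Ψ ω ρ' ⊆ cell Ψ ω ρ
  le_abs_sub : ∀ y ∈ cell Ψ ω ρ', ∀ s : ℕ, ρ.den < s → s ≤ ρ'.den → ∀ r : ℤ,
    (1 - ω s) * Ψ s ≤ |y - r / s|

/-- Every rational with denominator in `[q₀, n]` has at least `m` successors `c 0 < c 1 < ⋯` of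
denominator at most `N`, with cells short enough for the successors to remain separated. -/
def HasSuccessors (Ψ ω : ℝ → ℝ) (q₀ n N m : ℕ) : Prop :=
  ∀ ρ : ℚ, q₀ ≤ ρ.den → ρ.den ≤ n → ∃ c : ℕ → ℚ, StrictMonoOn c (Iio m) ∧
    ∀ i < m, IsSuccessor Ψ ω ρ (c i) ∧ (c i).den ≤ N ∧ Ψ (c i).den ≤ 1 / (2 * N ^ 2)

/-- The `j`-th vertex of generation `k` in the tree with the given root in which the vertices of
generation `k` have `m k` children each, the `i`-th child of `ρ` being `child k ρ i`. -/
def treeNode (root : ℚ) (m : ℕ → ℕ) (child : ℕ → ℚ → ℕ → ℚ) : ℕ → ℕ → ℚ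
  | 0, _ => root
  | k + 1, j => child k (treeNode root m child k (j / m k)) (j % m k)

variable {Ψ ω : ℝ → ℝ}

theorem cell_nonempty (hΨ : ∀ q : ℕ, 0 ≤ Ψ q) (hω : ∀ q : ℕ, 0 ≤ ω q) (ρ : ℚ) :
    (cell Ψ ω ρ).Nonempty :=
  nonempty_Icc.2 (by nlinarith [hΨ ρ.den, hω ρ.den])

theorem cell_subset_Icc (hΨ : ∀ q : ℕ, 0 ≤ Ψ q) (hω : ∀ q : ℕ, ω q ≤ 1) (ρ : ℚ) :
    cell Ψ ω ρ ⊆ Icc (ρ : ℝ) (ρ + Ψ ρ.den) :=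
  Icc_subset_Icc_left (le_add_of_nonneg_right (mul_nonneg (sub_nonneg.2 (hω _)) (hΨ _)))

theorem abs_sub_le_of_mem_cell (hΨ : ∀ q : ℕ, 0 ≤ Ψ q) (hω : ∀ q : ℕ, ω q ≤ 1) {ρ : ℚ} {x : ℝ}
    (hx : x ∈ cell Ψ ω ρ) : |x - ρ| ≤ Ψ ρ.den := by
  obtain ⟨hle, hle'⟩ := cell_subset_Icc hΨ hω ρ hx
  rw [abs_of_nonneg (sub_nonneg.2 hle)]
  linarith

theorem mem_ESet_of_chain (hΨ : ∀ q : ℕ, 0 ≤ Ψ q) (hω : ∀ q : ℕ, ω q ≤ 1) {ρ : ℕ → ℚ}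
    (hρ : ∀ k, IsSuccessor Ψ ω (ρ k) (ρ (k + 1))) {x : ℝ} (hx : ∀ k, x ∈ cell Ψ ω (ρ k)) :
    x ∈ ESet Ψ ω := by
  have hmono : StrictMono fun k => (ρ k).den := strictMono_nat_of_lt_succ fun k => (hρ k).den_lt
  constructor
  · have hinj : Function.Injective fun k => ((ρ k).num, (ρ k).den) := fun a b hab =>
      hmono.injective (Prod.ext_iff.1 hab).2
    refine (Set.infinite_range_of_injective hinj).mono ?_
    rintro _ ⟨k, rfl⟩
    refine ⟨(ρ k).den_pos, ?_⟩
    rw [← Rat.cast_def]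
    exact abs_sub_le_of_mem_cell hΨ hω (hx k)
  · refine ⟨(ρ 0).den + 1, fun q hq p => ?_⟩
    have hex : ∃ k, q ≤ (ρ k).den := ⟨q, hmono.id_le q⟩
    classical
    obtain ⟨k, hk⟩ : ∃ k, Nat.find hex = k + 1 := Nat.exists_eq_succ_of_ne_zero fun h₀ =>
      absurd (h₀ ▸ Nat.find_spec hex) (by lia)
    exact (hρ k).le_abs_sub x (hx _) q (not_le.1 (Nat.find_min hex (by lia)))
      (hk ▸ Nat.find_spec hex) p

theorem sub_mul_le_dist_of_mem_cell (hΨ : ∀ q : ℕ, 0 ≤ Ψ q) (hω : ∀ q : ℕ, ω q ≤ 1)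
    {c : ℕ → ℚ} {N i j : ℕ} (hij : i < j) (hc : StrictMonoOn c (Icc i j))
    (hden : ∀ l ∈ Icc i j, (c l).den ≤ N) (hsmall : Ψ (c i).den ≤ 1 / (2 * N ^ 2)) {x y : ℝ}
    (hx : x ∈ cell Ψ ω (c i)) (hy : y ∈ cell Ψ ω (c j)) :
    ((j : ℝ) - i) * (1 / (2 * N ^ 2)) ≤ dist x y := by
  have hsep := sub_div_sq_le_sub_of_strictMonoOn (D := N) hij.le hc fun l hl => by
    exact_mod_cast hden l hl
  have hx' := (cell_subset_Icc hΨ hω _ hx).2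
  have hy' := (cell_subset_Icc hΨ hω _ hy).1
  have hone : 1 / (2 * (N : ℝ) ^ 2) ≤ ((j : ℝ) - i) * (1 / (2 * N ^ 2)) := by
    refine le_mul_of_one_le_left (by positivity) ?_
    exact le_sub_iff_add_le'.2 (by exact_mod_cast hij)
  have hhalf : ((j : ℝ) - i) / N ^ 2 = 2 * (((j : ℝ) - i) * (1 / (2 * N ^ 2))) := by ring
  rw [Real.dist_eq, abs_sub_comm]
  exact le_trans (by linarith) (le_abs_self _)

theorem le_dimH_ESet_of_tree (hΨ : ∀ q : ℕ, 0 ≤ Ψ q) (hω₀ : ∀ q : ℕ, 0 ≤ ω q)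
    (hω₁ : ∀ q : ℕ, ω q ≤ 1) {s C : ℝ} (hs : 0 < s) (hs₁ : s ≤ 1) {q₀ : ℕ} {N m : ℕ → ℕ} {ρ₀ : ℚ}
    (hρ₀ : q₀ ≤ ρ₀.den) (hρ₀N : ρ₀.den ≤ N 0) (hm : ∀ k, 2 ≤ m k) (hN : ∀ k, 0 < N k)
    (hsucc : ∀ k, HasSuccessors Ψ ω q₀ (N k) (N (k + 1)) (m k))
    (hgrowth : ∀ k, (2 / (m k * (1 / (2 * (N (k + 1) : ℝ) ^ 2)))) ^ s ≤
      C * ∏ i ∈ Finset.range k, (m i : ℝ)) :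
    ENNReal.ofReal s ≤ dimH (ESet Ψ ω) := by
  choose! child hmono hchild using hsucc
  have hlt (k j : ℕ) : j % m k < m k := Nat.mod_lt _ (two_pos.trans_le (hm k))
  have hden (k j : ℕ) : q₀ ≤ (treeNode ρ₀ m child k j).den ∧
      (treeNode ρ₀ m child k j).den ≤ N k := by
    induction k generalizing j with
    | zero => exact ⟨hρ₀, hρ₀N⟩
    | succ k ih =>
      obtain ⟨hle, hle'⟩ := ih (j / m k)
      obtain ⟨hs, hN, -⟩ := hchild k _ hle hle' _ (hlt k j)
      exact ⟨hle.trans hs.den_lt.le, hN⟩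
  have hstep (k j : ℕ) : IsSuccessor Ψ ω (treeNode ρ₀ m child k (j / m k))
      (treeNode ρ₀ m child (k + 1) j) :=
    (hchild k _ (hden k _).1 (hden k _).2 _ (hlt k j)).1
  refine le_dimH_of_separated_tree (K := fun k j => cell Ψ ω (treeNode ρ₀ m child k j)) hm
    (fun k => by have := hN (k + 1); positivity) hs hs₁ (fun k j => cell_nonempty hΨ hω₀ _)
    (fun k j => isCompact_Icc) (fun k j => (hstep k j).cell_subset) ?_ hgrowth ?_
  · intro k i j hij hdiv x hx y hy
    have hmod := cast_sub_eq_cast_mod_sub_mod hdiv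
    rw [hmod]
    simp only [treeNode, hdiv] at hx hy
    obtain ⟨hle, hle'⟩ := hden k (j / m k)
    have hc := hchild k _ hle hle'
    have hsub : Icc (i % m k) (j % m k) ⊆ Iio (m k) := fun l hl => hl.2.trans_lt (hlt k j)
    exact sub_mul_le_dist_of_mem_cell hΨ hω₁
      (by rwa [← Nat.cast_lt (α := ℝ), ← sub_pos, ← hmod, sub_pos, Nat.cast_lt])
      ((hmono k _ hle hle').mono hsub) (fun l hl => (hc l (hsub hl)).2.1)
      (hc _ (hlt k i)).2.2 hx hy
  · intro b hb x hx
    exact mem_ESet_of_chain hΨ hω₁ (fun k => by simpa only [hb] using hstep k (b (k + 1)))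
      (mem_iInter.1 hx)

/-- The scales `N k` are chosen before any rational: the number of successors which
`HasSuccessors` provides at each step does not depend on the vertex. -/
theorem exists_scales {κ σ s : ℝ} (hκ : 0 < κ) (hsσ : s * σ < 2) {q₀ : ℕ}
    (hsucc : ∀ n, ∀ᶠ N : ℕ in atTop,
      HasSuccessors Ψ ω q₀ n N ⌈κ * (n : ℝ) ^ (-σ) * (N : ℝ) ^ 2⌉₊) :
    ∃ N m : ℕ → ℕ, N 0 = q₀ + 1 ∧ ∀ k, 0 < N k ∧ 2 ≤ m k ∧
      HasSuccessors Ψ ω q₀ (N k) (N (k + 1)) (m k) ∧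
      κ * (N k : ℝ) ^ (-σ) * (N (k + 1) : ℝ) ^ 2 ≤ m k ∧
      (N (k + 1) : ℝ) ^ (s * σ) ≤ m k := by
  have hnext : ∀ n : ℕ, 0 < n → ∃ N : ℕ, 0 < N ∧
      HasSuccessors Ψ ω q₀ n N ⌈κ * (n : ℝ) ^ (-σ) * (N : ℝ) ^ 2⌉₊ ∧
      2 ≤ κ * (n : ℝ) ^ (-σ) * (N : ℝ) ^ 2 ∧
      (N : ℝ) ^ (s * σ) ≤ κ * (n : ℝ) ^ (-σ) * (N : ℝ) ^ 2 := by
    intro n hn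
    have hc : 0 < κ * (n : ℝ) ^ (-σ) := by positivity
    have hpow {a : ℝ} (ha : a < 2) (c : ℝ) :
        ∀ᶠ N : ℕ in atTop, c * (N : ℝ) ^ a ≤ κ * (n : ℝ) ^ (-σ) * (N : ℝ) ^ 2 := by
      filter_upwards [tendsto_natCast_atTop_atTop.eventually
        (eventually_mul_rpow_le_rpow (c / (κ * (n : ℝ) ^ (-σ))) ha)] with N hN
      rwa [Real.rpow_two, div_mul_eq_mul_div, div_le_iff₀' hc] at hN
    obtain ⟨N, hN, hN₀, htwo, hrpow⟩ := ((hsucc n).and ((eventually_gt_atTop 0).and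
      ((hpow two_pos 2).and (hpow hsσ 1)))).exists
    exact ⟨N, hN₀, hN, by simpa using htwo, by simpa using hrpow⟩
  choose! f hf₀ hf using hnext
  have hpos (k : ℕ) : 0 < f^[k] (q₀ + 1) := by
    induction k with
    | zero => exact q₀.succ_pos
    | succ k ih => rw [Function.iterate_succ_apply']; exact hf₀ _ ih
  refine ⟨fun k => f^[k] (q₀ + 1), fun k =>
    ⌈κ * (f^[k] (q₀ + 1) : ℝ) ^ (-σ) * (f^[k + 1] (q₀ + 1) : ℝ) ^ 2⌉₊, rfl, fun k => ?_⟩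
  simp only [Function.iterate_succ_apply']
  obtain ⟨hs, htwo, hrpow⟩ := hf _ (hpos k)
  exact ⟨hpos k, by exact_mod_cast htwo.trans (Nat.le_ceil _), hs, Nat.le_ceil _,
    hrpow.trans (Nat.le_ceil _)⟩

theorem le_dimH_ESet_of_eventually_hasSuccessors (hΨ : ∀ q : ℕ, 0 ≤ Ψ q)
    (hω₀ : ∀ q : ℕ, 0 ≤ ω q) (hω₁ : ∀ q : ℕ, ω q ≤ 1) {κ σ s : ℝ} (hκ : 0 < κ) (hσ : 0 ≤ σ)
    (hs : 0 < s) (hs₁ : s ≤ 1) (hsσ : s * σ < 2) {q₀ : ℕ}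
    (hsucc : ∀ n, ∀ᶠ N : ℕ in atTop,
      HasSuccessors Ψ ω q₀ n N ⌈κ * (n : ℝ) ^ (-σ) * (N : ℝ) ^ 2⌉₊) :
    ENNReal.ofReal s ≤ dimH (ESet Ψ ω) := by
  obtain ⟨N, m, hN₀, hNm⟩ := exists_scales hκ hsσ hsucc
  choose hN hm hstep hmany hmrpow using hNm
  have hroot : (((q₀ + 1 : ℕ) : ℚ)⁻¹).den = q₀ + 1 := Rat.inv_natCast_den_of_pos q₀.succ_pos
  have hone : 1 ≤ (N 0 : ℝ) ^ (s * σ) :=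
    Real.one_le_rpow (by exact_mod_cast hN 0) (by positivity)
  have hprod (k : ℕ) : 1 ≤ ∏ i ∈ Finset.range k, (m i : ℝ) :=
    (one_le_pow₀ one_le_two).trans (two_pow_le_prod hm k)
  have hscale (k : ℕ) :
      (N k : ℝ) ^ (s * σ) ≤ (N 0 : ℝ) ^ (s * σ) * ∏ i ∈ Finset.range k, (m i : ℝ) := by
    cases k with
    | zero => simp
    | succ k =>
      rw [Finset.prod_range_succ, ← mul_assoc]
      exact (hmrpow k).trans (le_mul_of_one_le_left (by positivity)
        (one_le_mul_of_one_le_of_one_le hone (hprod k)))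
  refine le_dimH_ESet_of_tree hΨ hω₀ hω₁ hs hs₁ (C := (4 / κ) ^ s * (N 0 : ℝ) ^ (s * σ))
    (by rw [hroot]; exact q₀.le_succ) (by rw [hroot, hN₀]) hm hN hstep fun k => ?_
  have hNk : (0 : ℝ) < N k := by exact_mod_cast hN k
  have hNk' : (0 : ℝ) < N (k + 1) := by exact_mod_cast hN (k + 1)
  have hbase : 2 / (m k * (1 / (2 * (N (k + 1) : ℝ) ^ 2))) ≤ 4 / κ * (N k : ℝ) ^ σ := by
    calc 2 / (m k * (1 / (2 * (N (k + 1) : ℝ) ^ 2)))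
        ≤ 2 / (κ * (N k : ℝ) ^ (-σ) * (N (k + 1) : ℝ) ^ 2 * (1 / (2 * (N (k + 1) : ℝ) ^ 2))) := by
          gcongr
          exact hmany k
      _ = 4 / κ * (N k : ℝ) ^ σ := by
          rw [Real.rpow_neg hNk.le]
          field_simp
          norm_num
  calc _ ≤ (4 / κ * (N k : ℝ) ^ σ) ^ s := by gcongr
    _ = (4 / κ) ^ s * (N k : ℝ) ^ (s * σ) := by
      rw [Real.mul_rpow (by positivity) (by positivity), ← Real.rpow_mul hNk.le, mul_comm σ]
    _ ≤ _ := by rw [mul_assoc]; gcongr; exact hscale k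

end Cells

/-! ### Volume of neighbourhoods of rationals -/

section Volume

open MeasureTheory
open scoped ENNReal Topology

variable {a b h : ℝ}

theorem mapsTo_floor_Icc {F : Set ℝ} {δ : ℝ} (hδ : 0 < δ) (hF : F ⊆ Icc a b) :
    MapsTo (fun x => ⌊(x - a) / δ⌋) F (Finset.Icc 0 ⌊(b - a) / δ⌋) := by
  intro x hx
  obtain ⟨hax, hxb⟩ := hF hx
  rw [Finset.mem_coe, Finset.mem_Icc]
  exact ⟨Int.floor_nonneg.2 (div_nonneg (sub_nonneg.2 hax) hδ.le), Int.floor_mono (by gcongr)⟩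

theorem injOn_floor_of_pairwise_le_abs_sub {F : Set ℝ} {δ : ℝ} (hδ : 0 < δ) (a : ℝ)
    (hsep : F.Pairwise fun x y => δ ≤ |x - y|) : InjOn (fun x => ⌊(x - a) / δ⌋) F := by
  intro x hx y hy hxy
  by_contra hne
  have hlt := Int.abs_sub_lt_one_of_floor_eq_floor hxy
  rw [← sub_div, sub_sub_sub_cancel_right, abs_div, abs_of_pos hδ, div_lt_one hδ] at hlt
  exact absurd (hsep hx hy hne) hlt.not_ge

theorem finite_of_pairwise_le_abs_sub {F : Set ℝ} {δ : ℝ} (hδ : 0 < δ) (hF : F ⊆ Icc a b)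
    (hsep : F.Pairwise fun x y => δ ≤ |x - y|) : F.Finite :=
  Set.Finite.of_injOn (mapsTo_floor_Icc hδ hF) (injOn_floor_of_pairwise_le_abs_sub hδ a hsep)
    (Finset.finite_toSet _)

theorem ncard_le_of_pairwise_le_abs_sub {F : Set ℝ} {δ : ℝ} (hδ : 0 < δ) (hab : a ≤ b)
    (hF : F ⊆ Icc a b) (hsep : F.Pairwise fun x y => δ ≤ |x - y|) :
    F.ncard ≤ 1 + (b - a) / δ := by
  have hcard := Set.ncard_le_ncard_of_injOn _ (mapsTo_floor_Icc hδ hF)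
    (injOn_floor_of_pairwise_le_abs_sub hδ a hsep) (Finset.finite_toSet _)
  rw [Set.ncard_coe_finset, Int.card_Icc, sub_zero] at hcard
  have hfloor : 0 ≤ ⌊(b - a) / δ⌋ := Int.floor_nonneg.2 (div_nonneg (sub_nonneg.2 hab) hδ.le)
  have hcard' : (F.ncard : ℤ) ≤ ⌊(b - a) / δ⌋ + 1 := by lia
  calc (F.ncard : ℝ) ≤ ⌊(b - a) / δ⌋ + 1 := by exact_mod_cast hcard'
    _ ≤ 1 + (b - a) / δ := by linarith [Int.floor_le ((b - a) / δ)]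

theorem volume_biUnion_closedBall_le {F : Set ℝ} (hF : F.Finite) (h : ℝ) :
    volume (⋃ z ∈ F, Metric.closedBall z h) ≤ F.ncard * ENNReal.ofReal (2 * h) := by
  lift F to Finset ℝ using hF
  refine (measure_biUnion_finset_le F _).trans_eq ?_
  simp [Real.volume_closedBall]

theorem volume_setOf_exists_abs_sub_le_of_pairwise {S : Set ℝ} {δ : ℝ} (hδ : 0 < δ) (hab : a ≤ b)
    (hh : 0 ≤ h) (hsep : S.Pairwise fun x y => δ ≤ |x - y|) :
    volume {y ∈ Icc a b | ∃ z ∈ S, |y - z| ≤ h} ≤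
      ENNReal.ofReal ((1 + (b - a + 2 * h) / δ) * (2 * h)) := by
  have hsep' := hsep.mono (inter_subset_left (t := Icc (a - h) (b + h)))
  have hfin := finite_of_pairwise_le_abs_sub hδ inter_subset_right hsep'
  have hcard := ncard_le_of_pairwise_le_abs_sub hδ (by linarith) inter_subset_right hsep'
  have hsub : {y ∈ Icc a b | ∃ z ∈ S, |y - z| ≤ h} ⊆
      ⋃ z ∈ S ∩ Icc (a - h) (b + h), Metric.closedBall z h := by
    rintro y ⟨⟨hay, hyb⟩, z, hz, hyz⟩
    have := abs_le.1 hyz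
    exact mem_iUnion₂.2 ⟨z, ⟨hz, by constructor <;> linarith⟩, hyz⟩
  calc _ ≤ ((S ∩ Icc (a - h) (b + h)).ncard : ℝ≥0∞) * ENNReal.ofReal (2 * h) :=
        (measure_mono hsub).trans (volume_biUnion_closedBall_le hfin h)
    _ = ENNReal.ofReal ((S ∩ Icc (a - h) (b + h)).ncard * (2 * h)) := by
        rw [ENNReal.ofReal_mul (Nat.cast_nonneg _), ENNReal.ofReal_natCast]
    _ ≤ _ := by
        gcongr
        exact hcard.trans_eq (by ring)

theorem pairwise_ratCast_den_le {D : ℝ} :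
    ((↑) '' {ρ : ℚ | ρ.den ≤ D} : Set ℝ).Pairwise fun x y => 1 / D ^ 2 ≤ |x - y| := by
  rintro _ ⟨ρ, hρ, rfl⟩ _ ⟨ρ', hρ', rfl⟩ hne
  exact one_div_sq_le_abs_sub hρ hρ' fun h => hne (by rw [h])

theorem pairwise_range_intCast_div {k : ℕ} (hk : 0 < k) :
    (range fun r : ℤ => (r : ℝ) / k).Pairwise fun x y => 1 / (k : ℝ) ≤ |x - y| := by
  rintro _ ⟨r, rfl⟩ _ ⟨r', rfl⟩ hne
  have hrr' : r - r' ≠ 0 := sub_ne_zero.2 fun h => hne (by simp only [h])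
  rw [← sub_div, abs_div, Nat.abs_cast]
  gcongr
  exact_mod_cast Int.one_le_abs hrr'

/-- The points of `[a, b]` within `2 * x ^ (-τ)` of a rational of denominator at most `2 * x`. They
include all those that are `2 * s ^ (-τ)`-close to a fraction of denominator `s ∈ [x, 2 * x]`. -/
def dyadicBlock (τ a b x : ℝ) : Set ℝ :=
  {y ∈ Icc a b | ∃ z ∈ ((↑) '' {ρ : ℚ | ρ.den ≤ 2 * x} : Set ℝ), |y - z| ≤ 2 * x ^ (-τ)}

theorem volume_dyadicBlock_le {τ x : ℝ} (hx : 0 < x) (hab : 2 * x ^ (-τ) ≤ b - a) :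
    volume (dyadicBlock τ a b x) ≤
      ENNReal.ofReal (4 * x ^ (-τ) + 48 * (b - a) * x ^ (2 - τ)) := by
  have hxτ : 0 ≤ x ^ (-τ) := by positivity
  refine (volume_setOf_exists_abs_sub_le_of_pairwise (by positivity) (by linarith) (by positivity)
    pairwise_ratCast_den_le).trans (ENNReal.ofReal_le_ofReal ?_)
  calc (1 + (b - a + 2 * (2 * x ^ (-τ))) / (1 / (2 * x) ^ 2)) * (2 * (2 * x ^ (-τ)))
      ≤ (1 + 3 * (b - a) / (1 / (2 * x) ^ 2)) * (2 * (2 * x ^ (-τ))) := by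
        gcongr
        linarith
    _ = 4 * x ^ (-τ) + 48 * (b - a) * (x ^ 2 * x ^ (-τ)) := by
        field_simp
        ring
    _ = _ := by
        rw [sub_eq_add_neg 2 τ, Real.rpow_add hx, Real.rpow_two]

theorem volume_dyadicBlock_mul_two_pow_le {τ T : ℝ} (hτ : 0 ≤ τ) (hT : 0 < T)
    (hab : 2 * T ^ (-τ) ≤ b - a) (i : ℕ) :
    volume (dyadicBlock τ a b (T * 2 ^ i)) ≤
      ENNReal.ofReal ((4 * T ^ (-τ) + 48 * (b - a) * T ^ (2 - τ)) * (2 ^ (2 - τ)) ^ i) := by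
  have : 0 ≤ b - a := le_trans (by positivity) hab
  have hi : (1 : ℝ) ≤ 2 ^ i := one_le_pow₀ one_le_two
  have hle : (T * 2 ^ i) ^ (-τ) ≤ T ^ (-τ) :=
    Real.rpow_le_rpow_of_nonpos hT (le_mul_of_one_le_right hT.le hi) (by linarith)
  have hpow : ((2 : ℝ) ^ i) ^ (2 - τ) = (2 ^ (2 - τ)) ^ i :=
    (Real.rpow_pow_comm two_pos.le _ _).symm
  have hpow' : ((2 : ℝ) ^ i) ^ (-τ) ≤ (2 ^ (2 - τ)) ^ i :=
    hpow ▸ Real.rpow_le_rpow_of_exponent_le hi (by linarith)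
  refine (volume_dyadicBlock_le (by positivity) (by linarith)).trans (ENNReal.ofReal_le_ofReal ?_)
  rw [Real.mul_rpow hT.le (by positivity), Real.mul_rpow hT.le (by positivity), hpow]
  calc _ ≤ 4 * (T ^ (-τ) * (2 ^ (2 - τ)) ^ i) +
        48 * (b - a) * (T ^ (2 - τ) * (2 ^ (2 - τ)) ^ i) := by gcongr
    _ = _ := by ring

theorem setOf_exists_abs_sub_div_le_rpow_subset_iUnion_dyadicBlock {τ T : ℝ} (hτ : 0 ≤ τ)
    (hT : 0 < T) :
    {y ∈ Icc a b | ∃ s : ℕ, T ≤ s ∧ ∃ r : ℤ, |y - r / s| ≤ 2 * (s : ℝ) ^ (-τ)} ⊆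
      ⋃ i : ℕ, dyadicBlock τ a b (T * 2 ^ i) := by
  rintro y ⟨hy, s, hTs, r, hr⟩
  obtain ⟨i, hi, hi'⟩ := exists_nat_pow_near ((one_le_div hT).2 hTs) one_lt_two
  rw [le_div_iff₀' hT] at hi
  rw [div_lt_iff₀' hT, pow_succ', mul_left_comm] at hi'
  have hs : 0 < s := by exact_mod_cast hT.trans_le hTs
  obtain ⟨ρ, hρ, hden⟩ := exists_rat_cast_eq_div r hs
  refine mem_iUnion.2 ⟨i, hy, ρ, ⟨ρ, ?_, rfl⟩, ?_⟩
  · exact le_trans (by exact_mod_cast hden) hi'.le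
  · rw [hρ]
    refine hr.trans ?_
    gcongr 2 * ?_
    exact Real.rpow_le_rpow_of_nonpos (by positivity) hi (by linarith)

theorem volume_setOf_exists_abs_sub_div_le_rpow {τ T : ℝ} (hτ : 2 < τ) (hT : 0 < T)
    (hab : 2 * T ^ (-τ) ≤ b - a) :
    volume {y ∈ Icc a b | ∃ s : ℕ, T ≤ s ∧ ∃ r : ℤ, |y - r / s| ≤ 2 * (s : ℝ) ^ (-τ)} ≤
      ENNReal.ofReal ((4 * T ^ (-τ) + 48 * (b - a) * T ^ (2 - τ)) / (1 - 2 ^ (2 - τ))) := by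
  have : 0 ≤ b - a := le_trans (by positivity) hab
  have hgeom := (hasSum_geometric_of_lt_one (by positivity)
    (Real.rpow_lt_one_of_one_lt_of_neg one_lt_two (by linarith : 2 - τ < 0))).mul_left
      (4 * T ^ (-τ) + 48 * (b - a) * T ^ (2 - τ))
  calc _ ≤ ∑' i : ℕ, volume (dyadicBlock τ a b (T * 2 ^ i)) :=
        (measure_mono (setOf_exists_abs_sub_div_le_rpow_subset_iUnion_dyadicBlock
          (by linarith) hT)).trans (measure_iUnion_le _)
    _ ≤ _ := ENNReal.tsum_le_tsum (volume_dyadicBlock_mul_two_pow_le (by linarith) hT hab)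
    _ = _ := by
      rw [← ENNReal.ofReal_tsum_of_nonneg (fun i => by positivity) hgeom.summable, hgeom.tsum_eq,
        div_eq_mul_inv]

/-- The rationals `ρ` of denominator in `[c * N, N]` provided for some point of `A` by Dirichlet's
theorem at level `N`. -/
def dirichletApprox (c : ℝ) (N : ℕ) (A : Set ℝ) : Set ℚ :=
  {ρ | c * N ≤ ρ.den ∧ ρ.den ≤ N ∧ ∃ x ∈ A, |x - ρ| ≤ 1 / (ρ.den * N)}

theorem finite_dirichletApprox {c : ℝ} {N : ℕ} {A : Set ℝ} (hA : A ⊆ Icc a b) :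
    (dirichletApprox c N A).Finite := by
  have hmaps : (↑) '' dirichletApprox c N A ⊆
      ((↑) '' {ρ : ℚ | ρ.den ≤ (N : ℝ)} : Set ℝ) ∩ Icc (a - 1) (b + 1) := by
    rintro _ ⟨ρ, ⟨-, hden, x, hx, hxρ⟩, rfl⟩
    have hN : 0 < N := ρ.den_pos.trans_le hden
    have hle : 1 / ((ρ.den : ℝ) * N) ≤ 1 := by
      rw [div_le_one₀ (by have := ρ.den_pos; positivity)]
      exact_mod_cast Nat.mul_pos ρ.den_pos hN
    have := abs_le.1 (hxρ.trans hle)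
    obtain ⟨hax, hxb⟩ := hA hx
    exact ⟨⟨ρ, by exact_mod_cast hden, rfl⟩, by constructor <;> linarith⟩
  refine Set.Finite.of_finite_image (f := ((↑) : ℚ → ℝ)) ?_ Rat.cast_injective.injOn
  rcases N.eq_zero_or_pos with rfl | hN
  · exact finite_empty.subset fun z ⟨ρ, hρ, _⟩ => ρ.den_pos.not_ge hρ.2.1
  · exact (finite_of_pairwise_le_abs_sub (by positivity) inter_subset_right
      (pairwise_ratCast_den_le.mono inter_subset_left)).subset hmaps

theorem volume_setOf_exists_abs_sub_div_le_one_div {k : ℕ} {N : ℝ} (hk : 0 < k) (hN : 1 ≤ N)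
    (hab : a ≤ b) :
    volume {y ∈ Icc a b | ∃ r : ℤ, |y - r / k| ≤ 1 / (k * N)} ≤
      ENNReal.ofReal (6 / N * (k : ℝ)⁻¹ + 2 * (b - a) / N) := by
  have := volume_setOf_exists_abs_sub_le_of_pairwise (h := 1 / (k * N)) (by positivity) hab
    (by positivity) (pairwise_range_intCast_div hk)
  simp only [exists_range_iff] at this
  refine this.trans (ENNReal.ofReal_le_ofReal ?_)
  have hN' : 1 / N ≤ 1 := by rw [div_le_one₀] <;> linarith
  calc _ = 2 / N * (k : ℝ)⁻¹ + 2 * (b - a) / N + 4 / N * (k : ℝ)⁻¹ * (1 / N) := by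
        field_simp
        ring
    _ ≤ 2 / N * (k : ℝ)⁻¹ + 2 * (b - a) / N + 4 / N * (k : ℝ)⁻¹ * 1 := by gcongr
    _ = _ := by ring

theorem volume_setOf_exists_den_lt_le {c : ℝ} {N : ℕ} (hc₀ : 0 ≤ c) (hc : c ≤ 1) (hN : 0 < N)
    (hab : a ≤ b) :
    volume {y ∈ Icc a b | ∃ k : ℕ, 0 < k ∧ k < c * N ∧ ∃ r : ℤ, |y - r / k| ≤ 1 / (k * N)} ≤
      ENNReal.ofReal (6 * (1 + Real.log N) / N + 2 * c * (b - a)) := by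
  have hN₁ : (1 : ℝ) ≤ N := by exact_mod_cast hN
  have hcN : 0 ≤ c * N := by positivity
  set M : ℕ := ⌊c * N⌋₊
  have hMN : M ≤ N := Nat.floor_le_of_le (mul_le_of_le_one_left N.cast_nonneg hc)
  have hsub : {y ∈ Icc a b | ∃ k : ℕ, 0 < k ∧ k < c * N ∧ ∃ r : ℤ, |y - r / k| ≤ 1 / (k * N)} ⊆
      ⋃ k ∈ Finset.Icc 1 M, {y ∈ Icc a b | ∃ r : ℤ, |y - r / k| ≤ 1 / (k * N)} := by
    rintro y ⟨hy, k, hk, hkN, r, hr⟩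
    exact mem_iUnion₂.2 ⟨k, Finset.mem_Icc.2 ⟨hk, Nat.le_floor hkN.le⟩, hy, r, hr⟩
  have hharm : ∑ k ∈ Finset.Icc 1 M, (k : ℝ)⁻¹ ≤ 1 + Real.log N := by
    calc _ ≤ ∑ k ∈ Finset.Icc 1 N, (k : ℝ)⁻¹ :=
          Finset.sum_le_sum_of_subset_of_nonneg (Finset.Icc_subset_Icc_right hMN)
            fun _ _ _ => by positivity
      _ = (harmonic N : ℝ) := by simp [harmonic_eq_sum_Icc]
      _ ≤ _ := harmonic_le_one_add_log N
  calc _ ≤ ∑ k ∈ Finset.Icc 1 M, ENNReal.ofReal (6 / N * (k : ℝ)⁻¹ + 2 * (b - a) / N) := by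
        refine (measure_mono hsub).trans <| (measure_biUnion_finset_le _ _).trans <|
          Finset.sum_le_sum fun k hk => ?_
        exact volume_setOf_exists_abs_sub_div_le_one_div (Finset.mem_Icc.1 hk).1 hN₁ hab
    _ = ENNReal.ofReal
          (6 / N * ∑ k ∈ Finset.Icc 1 M, (k : ℝ)⁻¹ + M * (2 * (b - a) / N)) := by
        have := sub_nonneg.2 hab
        rw [← ENNReal.ofReal_sum_of_nonneg fun k _ => by positivity, Finset.sum_add_distrib,
          Finset.mul_sum, Finset.sum_const, Nat.card_Icc, Nat.add_sub_cancel, nsmul_eq_mul]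
    _ ≤ ENNReal.ofReal (6 / N * (1 + Real.log N) + c * N * (2 * (b - a) / N)) := by
        have := sub_nonneg.2 hab
        gcongr
        exact Nat.floor_le hcN
    _ = _ := by
        congr 1
        field_simp

theorem volume_le_of_dirichletApprox {c : ℝ} {N : ℕ} {A : Set ℝ} (hc₀ : 0 < c) (hc : c ≤ 1)
    (hN : 0 < N) (hab : a ≤ b) (hA : A ⊆ Icc a b) :
    volume A ≤ ENNReal.ofReal (6 * (1 + Real.log N) / N + 2 * c * (b - a)) +
      (dirichletApprox c N A).ncard * ENNReal.ofReal (2 * (1 / (c * N ^ 2))) := by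
  have hsub : A ⊆
      {y ∈ Icc a b | ∃ k : ℕ, 0 < k ∧ k < c * N ∧ ∃ r : ℤ, |y - r / k| ≤ 1 / (k * N)} ∪
      ⋃ z ∈ ((↑) '' dirichletApprox c N A : Set ℝ), Metric.closedBall z (1 / (c * N ^ 2)) := by
    intro x hx
    obtain ⟨ρ, hρ, hden⟩ := Real.exists_rat_abs_sub_le_and_den_le x hN
    have hρ' : |x - ρ| ≤ 1 / (ρ.den * N) := by
      refine hρ.trans ?_
      rw [mul_comm]
      have := ρ.den_pos
      gcongr
      linarith
    rcases lt_or_ge (ρ.den : ℝ) (c * N) with hlt | hge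
    · exact .inl ⟨hA hx, ρ.den, ρ.den_pos, hlt, ρ.num, by rwa [← Rat.cast_def]⟩
    · refine .inr (mem_iUnion₂.2 ⟨ρ, mem_image_of_mem _ ⟨hge, hden, x, hx, hρ'⟩, hρ'.trans ?_⟩)
      rw [sq, ← mul_assoc]
      gcongr
  refine (measure_mono hsub).trans <| (measure_union_le _ _).trans ?_
  gcongr
  · exact volume_setOf_exists_den_lt_le hc₀.le hc hN hab
  · have hfin := finite_dirichletApprox (c := c) (N := N) hA
    exact (volume_biUnion_closedBall_le (hfin.image _) _).trans
      (by gcongr; exact ncard_image_le hfin)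

theorem eventually_le_ncard_dirichletApprox {ℓ : ℝ} (hℓ : 0 < ℓ) :
    ∀ᶠ N : ℕ in atTop, ∀ a : ℝ, ∀ A ⊆ Icc a (a + ℓ), ENNReal.ofReal (ℓ / 2) ≤ volume A →
      ℓ * (N : ℝ) ^ 2 / 128 ≤ (dirichletApprox (1 / 8) N A).ncard := by
  have hlog : Tendsto (fun x : ℝ => 6 * (1 + Real.log x) / x) atTop (𝓝 0) := by
    have h₁ := (tendsto_inv_atTop_zero (𝕜 := ℝ)).const_mul 6
    have h₂ := (Real.isLittleO_log_id_atTop.tendsto_div_nhds_zero).const_mul 6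
    refine ((h₁.add h₂).congr fun x => ?_).trans (by simp)
    simp only [id]
    ring
  filter_upwards [eventually_gt_atTop 0,
    (hlog.comp tendsto_natCast_atTop_atTop).eventually_le_const (by positivity : 0 < ℓ / 8)]
    with N hN hNlog a A hA hvol
  have hle := hvol.trans
    (volume_le_of_dirichletApprox (c := 1 / 8) (by norm_num) (by norm_num) hN (by linarith) hA)
  simp only [Function.comp_apply] at hNlog
  rw [add_sub_cancel_left, ← ENNReal.ofReal_natCast, ← ENNReal.ofReal_mul (Nat.cast_nonneg _),
    ← ENNReal.ofReal_add (by have := Real.log_natCast_nonneg N; positivity) (by positivity),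
    ENNReal.ofReal_le_ofReal_iff (by have := Real.log_natCast_nonneg N; positivity)] at hle
  have hN₀ : (0 : ℝ) < N ^ 2 := by positivity
  have : ℓ / 8 ≤ (dirichletApprox (1 / 8) N A).ncard * (16 / N ^ 2) := by
    calc _ ≤ (dirichletApprox (1 / 8) N A).ncard * (2 * (1 / (1 / 8 * (N : ℝ) ^ 2))) := by linarith
      _ = _ := by ring
  rw [← mul_div_assoc, le_div_iff₀ hN₀] at this
  linarith

end Volume

/-! ### Successors for power functions -/

section Power

open MeasureTheory

/-- The points that some fraction of denominator `s > q` approximates within `2 * s ^ (-τ)`. -/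
def badSet (τ : ℝ) (q : ℕ) : Set ℝ :=
  {y | ∃ s : ℕ, q < s ∧ ∃ r : ℤ, |y - r / s| < 2 * (s : ℝ) ^ (-τ)}

/-- The points of the middle half of the cell of `ρ` outside `badSet τ₁ ρ.den`. Dirichlet's theorem
is applied to these in order to produce successors of `ρ`. -/
def goodCore (τ₁ τ₂ : ℝ) (ρ : ℚ) : Set ℝ :=
  {x | Icc (x - (ρ.den : ℝ) ^ (-(τ₁ + τ₂)) / 4) (x + (ρ.den : ℝ) ^ (-(τ₁ + τ₂)) / 4) ⊆
    cell (· ^ (-τ₁)) (· ^ (-τ₂)) ρ} \ badSet τ₁ ρ.den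

variable {τ τ₁ τ₂ : ℝ}

theorem two_mul_rpow_neg_le_one_div {q s : ℝ} (hτ : 2 ≤ τ) (hq : 0 < q) (hqs : q ≤ s)
    (hq₄ : 4 ≤ q ^ (τ - 2)) : 2 * s ^ (-τ) ≤ 1 / (2 * (q * s)) := by
  have hs : 0 < s := hq.trans_le hqs
  have hs₄ : 4 ≤ s ^ (τ - 2) := hq₄.trans (Real.rpow_le_rpow hq.le hqs (by linarith))
  rw [le_div_iff₀ (by positivity)]
  calc 2 * s ^ (-τ) * (2 * (q * s)) = s ^ (-τ) * (4 * (q * s)) := by ring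
    _ ≤ s ^ (-τ) * (s ^ (τ - 2) * (s * s)) := by gcongr
    _ = 1 := by
      rw [← sq, ← Real.rpow_two, ← Real.rpow_add hs, sub_add_cancel, ← Real.rpow_add hs,
        neg_add_cancel, Real.rpow_zero]

theorem rpow_neg_le_one_div {q s : ℝ} (hq : 0 < q) (hs : 0 < s) (hsT : s ≤ q ^ (τ - 1) / 2) :
    q ^ (-τ) ≤ 1 / (2 * (q * s)) := by
  rw [le_div_iff₀ (by positivity)]
  calc q ^ (-τ) * (2 * (q * s)) ≤ q ^ (-τ) * (2 * (q * (q ^ (τ - 1) / 2))) := by gcongr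
    _ = q ^ (-τ) * (q ^ (τ - 1) * q) := by ring
    _ = 1 := by
      rw [← Real.rpow_add_one hq.ne', sub_add_cancel, ← Real.rpow_add hq, neg_add_cancel,
        Real.rpow_zero]

theorem rpow_neg_le_div_four {q s : ℝ} (hτ : 2 ≤ τ) (hq : 0 < q) (hqs : 2 * q ≤ s) :
    s ^ (-τ) ≤ q ^ (-τ) / 4 := by
  calc s ^ (-τ) ≤ (2 * q) ^ (-τ) := Real.rpow_le_rpow_of_nonpos (by positivity) hqs (by linarith)
    _ = 2 ^ (-τ) * q ^ (-τ) := Real.mul_rpow two_pos.le hq.le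
    _ ≤ 2 ^ (-2 : ℝ) * q ^ (-τ) := by
      gcongr
      exact one_le_two
    _ = q ^ (-τ) / 4 := by
      rw [Real.rpow_neg two_pos.le]
      norm_num
      ring

theorem two_mul_rpow_le_abs_sub_div (hτ : 2 ≤ τ) {ρ : ℚ} (hρ : 4 ≤ (ρ.den : ℝ) ^ (τ - 2)) {y : ℝ}
    (hy : (ρ.den : ℝ) ^ (-τ) / 2 ≤ |y - ρ|) (hy' : |y - ρ| ≤ (ρ.den : ℝ) ^ (-τ)) {s : ℕ}
    (hs : ρ.den < s) (hsT : (s : ℝ) ≤ (ρ.den : ℝ) ^ (τ - 1) / 2) (r : ℤ) :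
    2 * (s : ℝ) ^ (-τ) ≤ |y - r / s| := by
  have hq : (0 : ℝ) < ρ.den := by exact_mod_cast ρ.den_pos
  have hqs : (ρ.den : ℝ) < s := by exact_mod_cast hs
  by_cases hr : (r : ℝ) / s = ρ
  · obtain ⟨k, hk⟩ := den_dvd_of_div_eq hr
    have hk₂ : 2 ≤ k := by
      by_contra! hlt
      exact hs.not_ge (hk.trans_le (mul_le_of_le_one_right' (by lia)))
    have h2q : 2 * ρ.den ≤ s := by
      rw [hk, mul_comm]
      gcongr
    rw [hr]
    linarith [rpow_neg_le_div_four hτ hq (by exact_mod_cast h2q : 2 * (ρ.den : ℝ) ≤ s)]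
  · have hsep := one_div_den_mul_le_abs_sub_div (ρ.den_pos.trans hs) hr
    have htri := abs_sub_le (ρ : ℝ) y (r / s)
    rw [abs_sub_comm (ρ : ℝ) y] at htri
    have hhalves : 1 / ((ρ.den : ℝ) * s) =
        1 / (2 * ((ρ.den : ℝ) * s)) + 1 / (2 * ((ρ.den : ℝ) * s)) := by
      field_simp
      norm_num
    linarith [two_mul_rpow_neg_le_one_div hτ hq hqs.le hρ,
      rpow_neg_le_one_div hq (hq.trans hqs) hsT]

/-- The hypothesis says that `T ^ (-τ₁)`, the length of the longest interval removed by a fraction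
of denominator at least `T = q ^ (τ₁ - 1) / 2`, is negligible against the length
`q ^ (-(τ₁ + τ₂))` of a cell. -/
theorem eventually_rpow_half_rpow_le (hτ₁ : 2 < τ₁) (hτ₂ : τ₂ < τ₁ * (τ₁ - 2)) {η : ℝ}
    (hη : 0 < η) :
    ∀ᶠ q : ℝ in atTop, (q ^ (τ₁ - 1) / 2) ^ (-τ₁) ≤ η * q ^ (-(τ₁ + τ₂)) ∧
      (q ^ (τ₁ - 1) / 2) ^ (2 - τ₁) ≤ η := by
  have hrpow {q : ℝ} (hq : 0 < q) (c : ℝ) :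
      (q ^ (τ₁ - 1) / 2) ^ c = 2 ^ (-c) * q ^ ((τ₁ - 1) * c) := by
    rw [Real.div_rpow (by positivity) two_pos.le, ← Real.rpow_mul hq.le, Real.rpow_neg two_pos.le]
    ring
  filter_upwards [eventually_gt_atTop 0,
    eventually_mul_rpow_le_rpow (2 ^ τ₁ / η) (by nlinarith : (τ₁ - 1) * -τ₁ < -(τ₁ + τ₂)),
    eventually_mul_rpow_le_rpow (2 ^ (τ₁ - 2) / η) (by nlinarith : (τ₁ - 1) * (2 - τ₁) < 0)]
    with q hq hq₁ hq₂
  rw [div_mul_eq_mul_div, div_le_iff₀' hη] at hq₁ hq₂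
  rw [hrpow hq, hrpow hq, neg_neg, neg_sub]
  exact ⟨hq₁, by simpa using hq₂⟩

theorem abs_sub_mem_Icc_of_mem_cell {ρ : ℚ} {y : ℝ} (hω : (ρ.den : ℝ) ^ (-τ₂) ≤ 1 / 2)
    (hy : y ∈ cell (· ^ (-τ₁)) (· ^ (-τ₂)) ρ) :
    |y - ρ| ∈ Icc ((ρ.den : ℝ) ^ (-τ₁) / 2) ((ρ.den : ℝ) ^ (-τ₁)) := by
  have hle : (ρ : ℝ) + (1 - (ρ.den : ℝ) ^ (-τ₂)) * (ρ.den : ℝ) ^ (-τ₁) ≤ y := hy.1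
  have hle' : y ≤ ρ + (ρ.den : ℝ) ^ (-τ₁) := hy.2
  have hΨ : 0 ≤ (ρ.den : ℝ) ^ (-τ₁) := by positivity
  have hhalf : (ρ.den : ℝ) ^ (-τ₁) / 2 ≤ y - ρ := by nlinarith
  rw [abs_of_nonneg (by linarith)]
  exact ⟨hhalf, by linarith⟩

theorem cell_rpow (τ₁ τ₂ : ℝ) (ρ : ℚ) :
    cell (· ^ (-τ₁)) (· ^ (-τ₂)) ρ =
      Icc ((ρ : ℝ) + (1 - (ρ.den : ℝ) ^ (-τ₂)) * (ρ.den : ℝ) ^ (-τ₁))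
        (ρ + (1 - (ρ.den : ℝ) ^ (-τ₂)) * (ρ.den : ℝ) ^ (-τ₁) +
          (ρ.den : ℝ) ^ (-(τ₁ + τ₂))) := by
  have := ρ.den_pos
  rw [cell, neg_add, Real.rpow_add (by positivity)]
  congr 1
  ring

theorem eventually_volume_cell_inter_badSet_le (hτ₁ : 2 < τ₁) (hτ₂pos : 0 < τ₂)
    (hτ₂ : τ₂ < τ₁ * (τ₁ - 2)) :
    ∀ᶠ q : ℕ in atTop, ∀ ρ : ℚ, ρ.den = q →
      volume (cell (· ^ (-τ₁)) (· ^ (-τ₂)) ρ ∩ badSet τ₁ q) ≤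
        ENNReal.ofReal ((q : ℝ) ^ (-(τ₁ + τ₂)) / 8) := by
  set θ : ℝ := 2 ^ (2 - τ₁)
  have hθ : 0 < 1 - θ :=
    sub_pos.2 (Real.rpow_lt_one_of_one_lt_of_neg one_lt_two (by linarith))
  have hθ₁ : 0 < θ := by positivity
  filter_upwards [eventually_gt_atTop 0,
    tendsto_natCast_atTop_atTop.eventually (eventually_mul_rpow_le_rpow 2 (neg_lt_zero.2 hτ₂pos)),
    tendsto_natCast_atTop_atTop.eventually (eventually_mul_rpow_le_rpow 4 (sub_pos.2 hτ₁)),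
    tendsto_natCast_atTop_atTop.eventually
      (eventually_rpow_half_rpow_le hτ₁ hτ₂ (by positivity : 0 < (1 - θ) / 416))]
    with q hq hω hq₄ ⟨hT₁, hT₂⟩ ρ hρ
  subst hρ
  rw [Real.rpow_zero] at hω hq₄
  set ℓ : ℝ := (ρ.den : ℝ) ^ (-(τ₁ + τ₂))
  set T : ℝ := (ρ.den : ℝ) ^ (τ₁ - 1) / 2
  have hℓ : 0 < ℓ := by positivity
  set a : ℝ := ρ + (1 - (ρ.den : ℝ) ^ (-τ₂)) * (ρ.den : ℝ) ^ (-τ₁)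
  refine le_trans (measure_mono ?_) <| (volume_setOf_exists_abs_sub_div_le_rpow
    (a := a) (b := a + ℓ) (T := T) hτ₁ (by positivity) ?_).trans (ENNReal.ofReal_le_ofReal ?_)
  · rintro y ⟨hy, s, hs, r, hr⟩
    refine ⟨cell_rpow τ₁ τ₂ ρ ▸ hy, s, le_of_not_ge fun hsT => ?_, r, hr.le⟩
    obtain ⟨hy₁, hy₂⟩ := abs_sub_mem_Icc_of_mem_cell (by linarith) hy
    exact hr.not_ge
      (two_mul_rpow_le_abs_sub_div hτ₁.le (by linarith) hy₁ hy₂ hs hsT r)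
  · rw [add_sub_cancel_left]
    nlinarith
  · rw [add_sub_cancel_left, div_le_iff₀ hθ]
    calc 4 * T ^ (-τ₁) + 48 * ℓ * T ^ (2 - τ₁)
        ≤ 4 * ((1 - θ) / 416 * ℓ) + 48 * ℓ * ((1 - θ) / 416) := by gcongr
      _ = ℓ / 8 * (1 - θ) := by ring

/-- For `s` large compared with a power of `ρ'.den` the fractions `r / s` are kept away by `ρ'`
itself, and for smaller `s` by the point `x`. -/
theorem rpow_le_abs_sub_div (hτ : 2 < τ) {ρ' : ℚ} {x y : ℝ}
    (hsmall : 2 / (ρ'.den : ℝ) ^ 2 ≤ (2 * (ρ'.den : ℝ)) ^ (-τ / (τ - 1)))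
    (hxy : |x - y| ≤ 2 / (ρ'.den : ℝ) ^ 2) (hy : |y - ρ'| ≤ (ρ'.den : ℝ) ^ (-τ)) {s : ℕ}
    (hs : 0 < s) (hsd : s ≤ ρ'.den) {r : ℤ} (hr : (r : ℝ) / s ≠ ρ')
    (hx : 2 * (s : ℝ) ^ (-τ) ≤ |x - r / s|) :
    (s : ℝ) ^ (-τ) ≤ |y - r / s| := by
  have hs₀ : (0 : ℝ) < s := by exact_mod_cast hs
  have := ρ'.den_pos
  rcases le_total (2 * (ρ'.den : ℝ)) ((s : ℝ) ^ (τ - 1)) with hlarge | hle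
  · have hsep := one_div_den_mul_le_abs_sub_div hs hr
    have htwo : 2 * (s : ℝ) ^ (-τ) ≤ 1 / ((ρ'.den : ℝ) * s) := by
      rw [le_div_iff₀ (by positivity)]
      calc 2 * (s : ℝ) ^ (-τ) * (ρ'.den * s) = (s : ℝ) ^ (-τ) * (2 * ρ'.den * s) := by ring
        _ ≤ (s : ℝ) ^ (-τ) * ((s : ℝ) ^ (τ - 1) * s) := by gcongr
        _ = 1 := by
          rw [← Real.rpow_add_one hs₀.ne', sub_add_cancel, ← Real.rpow_add hs₀, neg_add_cancel,
            Real.rpow_zero]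
    have hmono : (ρ'.den : ℝ) ^ (-τ) ≤ (s : ℝ) ^ (-τ) :=
      Real.rpow_le_rpow_of_nonpos hs₀ (by exact_mod_cast hsd) (by linarith)
    have htri := abs_sub_le (ρ' : ℝ) y (r / s)
    rw [abs_sub_comm (ρ' : ℝ) y] at htri
    linarith
  · have hpow : (2 * (ρ'.den : ℝ)) ^ (-τ / (τ - 1)) ≤ (s : ℝ) ^ (-τ) := by
      calc _ ≤ ((s : ℝ) ^ (τ - 1)) ^ (-τ / (τ - 1)) :=
            Real.rpow_le_rpow_of_nonpos (by positivity) hle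
              (div_nonpos_of_nonpos_of_nonneg (by linarith) (by linarith))
        _ = (s : ℝ) ^ (-τ) := by
            rw [← Real.rpow_mul hs₀.le, mul_div_cancel₀ _ (by linarith)]
    linarith [abs_sub_le x y (r / s)]

theorem isSuccessor_of_notMem_badSet (hτ₁ : 2 < τ₁) (hτ₂ : 0 ≤ τ₂) {ρ ρ' : ℚ} {x : ℝ}
    (hden : ρ.den < ρ'.den)
    (hsmall : 2 / (ρ'.den : ℝ) ^ 2 ≤ (2 * (ρ'.den : ℝ)) ^ (-τ₁ / (τ₁ - 1)))
    (hxρ' : |x - ρ'| ≤ 1 / (ρ'.den : ℝ) ^ 2) (hbad : x ∉ badSet τ₁ ρ.den)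
    (hx : Icc (x - 2 / (ρ'.den : ℝ) ^ 2) (x + 2 / (ρ'.den : ℝ) ^ 2) ⊆
      cell (· ^ (-τ₁)) (· ^ (-τ₂)) ρ) :
    IsSuccessor (· ^ (-τ₁)) (· ^ (-τ₂)) ρ ρ' := by
  have hd : (1 : ℝ) ≤ ρ'.den := by exact_mod_cast ρ'.den_pos
  have hy {y : ℝ} (hyc : y ∈ cell (· ^ (-τ₁)) (· ^ (-τ₂)) ρ') :
      |y - ρ'| ≤ (ρ'.den : ℝ) ^ (-τ₁) :=
    abs_sub_le_of_mem_cell (fun q => by positivity) (natCast_rpow_neg_le_one hτ₂) hyc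
  have hxy {y : ℝ} (hyc : y ∈ cell (· ^ (-τ₁)) (· ^ (-τ₂)) ρ') :
      |x - y| ≤ 2 / (ρ'.den : ℝ) ^ 2 := by
    have hΨ : (ρ'.den : ℝ) ^ (-τ₁) ≤ 1 / (ρ'.den : ℝ) ^ 2 := by
      rw [one_div, ← Real.rpow_two, ← Real.rpow_neg (by positivity)]
      exact Real.rpow_le_rpow_of_exponent_le hd (by linarith)
    have htri := abs_sub_le x ρ' y
    rw [abs_sub_comm (ρ' : ℝ) y] at htri
    calc _ ≤ 1 / (ρ'.den : ℝ) ^ 2 + 1 / (ρ'.den : ℝ) ^ 2 := by linarith [hy hyc]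
      _ = _ := by ring
  refine ⟨hden, fun y hyc => hx ?_, fun y hyc s hs hsd r => ?_⟩
  · have := abs_le.1 (hxy hyc)
    constructor <;> linarith
  · by_cases hr : (r : ℝ) / s = ρ'
    · obtain rfl := hsd.antisymm (Nat.le_of_dvd (by lia) (den_dvd_of_div_eq hr))
      rw [hr]
      exact (le_sub_iff_add_le'.2 hyc.1).trans (le_abs_self _)
    · refine le_trans (mul_le_of_le_one_left (by positivity) (sub_le_self _ (by positivity))) ?_
      exact rpow_le_abs_sub_div hτ₁ hsmall (hxy hyc) (hy hyc) (by lia) hsd hr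
        (not_lt.1 fun hlt => hbad ⟨s, hs, r, hlt⟩)

theorem eventually_two_div_sq_le (hτ : 2 < τ) {ε : ℝ} (hε : 0 < ε) :
    ∀ᶠ d : ℕ in atTop, 2 / (d : ℝ) ^ 2 ≤ (2 * (d : ℝ)) ^ (-τ / (τ - 1)) ∧
      2 / (d : ℝ) ^ 2 ≤ ε ∧ (d : ℝ) ^ (-τ) ≤ 1 / (128 * (d : ℝ) ^ 2) := by
  have hexp : (-2 : ℝ) < -τ / (τ - 1) := by
    rw [lt_div_iff₀ (by linarith)]
    linarith
  set e : ℝ := -τ / (τ - 1)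
  have hsq (d : ℕ) : (d : ℝ) ^ (-2 : ℝ) = 1 / (d : ℝ) ^ 2 := by
    rw [Real.rpow_neg d.cast_nonneg, Real.rpow_two, one_div]
  filter_upwards [
    tendsto_natCast_atTop_atTop.eventually (eventually_mul_rpow_le_rpow (2 / 2 ^ e) hexp),
    tendsto_natCast_atTop_atTop.eventually
      (eventually_mul_rpow_le_rpow (2 / ε) (by norm_num : (-2 : ℝ) < 0)),
    tendsto_natCast_atTop_atTop.eventually
      (eventually_mul_rpow_le_rpow 128 (neg_lt_neg hτ))] with d hd₁ hd₂ hd₃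
  rw [hsq] at hd₁ hd₂ hd₃
  rw [div_mul_eq_mul_div, mul_one_div, div_le_iff₀' (by positivity)] at hd₁ hd₂
  rw [Real.mul_rpow two_pos.le d.cast_nonneg]
  refine ⟨hd₁, by simpa using hd₂, ?_⟩
  rwa [mul_comm, ← div_div, le_div_iff₀' (by norm_num)]

theorem exists_goodCore_eq_Icc_sdiff_badSet (τ₁ τ₂ : ℝ) (ρ : ℚ) :
    ∃ a : ℝ, Icc a (a + (ρ.den : ℝ) ^ (-(τ₁ + τ₂)) / 2) ⊆ cell (· ^ (-τ₁)) (· ^ (-τ₂)) ρ ∧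
      goodCore τ₁ τ₂ ρ =
        Icc a (a + (ρ.den : ℝ) ^ (-(τ₁ + τ₂)) / 2) \ badSet τ₁ ρ.den := by
  set ℓ : ℝ := (ρ.den : ℝ) ^ (-(τ₁ + τ₂))
  have hℓ : 0 ≤ ℓ := by positivity
  set a : ℝ := ρ + (1 - (ρ.den : ℝ) ^ (-τ₂)) * (ρ.den : ℝ) ^ (-τ₁)
  rw [goodCore, cell_rpow]
  refine ⟨a + ℓ / 4, Icc_subset_Icc (by linarith) (by linarith), ?_⟩
  congr 1
  ext x
  rw [mem_ofPred_eq, Icc_subset_Icc_iff (by linarith), mem_Icc]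
  constructor <;> rintro ⟨h, h'⟩ <;> constructor <;> linarith

theorem le_volume_goodCore {ρ : ℚ}
    (hbad : volume (cell (· ^ (-τ₁)) (· ^ (-τ₂)) ρ ∩ badSet τ₁ ρ.den) ≤
      ENNReal.ofReal ((ρ.den : ℝ) ^ (-(τ₁ + τ₂)) / 8)) :
    ENNReal.ofReal ((ρ.den : ℝ) ^ (-(τ₁ + τ₂)) / 4) ≤ volume (goodCore τ₁ τ₂ ρ) := by
  obtain ⟨a, hcell, hcore⟩ := exists_goodCore_eq_Icc_sdiff_badSet τ₁ τ₂ ρ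
  set ℓ : ℝ := (ρ.den : ℝ) ^ (-(τ₁ + τ₂))
  have hℓ : 0 ≤ ℓ := by positivity
  calc ENNReal.ofReal (ℓ / 4) ≤ ENNReal.ofReal (ℓ / 2) - ENNReal.ofReal (ℓ / 8) := by
        rw [← ENNReal.ofReal_sub _ (by positivity)]
        exact ENNReal.ofReal_le_ofReal (by linarith)
    _ ≤ volume (Icc a (a + ℓ / 2)) - volume (Icc a (a + ℓ / 2) ∩ badSet τ₁ ρ.den) := by
        rw [Real.volume_Icc, add_sub_cancel_left]
        exact tsub_le_tsub_left ((measure_mono (inter_subset_inter_left _ hcell)).trans hbad) _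
    _ ≤ volume (goodCore τ₁ τ₂ ρ) := by
        rw [hcore, ← sdiff_inter_self_eq_sdiff, inter_comm]
        exact le_measure_sdiff

theorem isSuccessor_of_mem_dirichletApprox (hτ₁ : 2 < τ₁) (hτ₂ : 0 ≤ τ₂) {c : ℝ} {N : ℕ}
    {ρ ρ' : ℚ} (hρ' : ρ' ∈ dirichletApprox c N (goodCore τ₁ τ₂ ρ)) (hden : ρ.den < ρ'.den)
    (hsmall : 2 / (ρ'.den : ℝ) ^ 2 ≤ (2 * (ρ'.den : ℝ)) ^ (-τ₁ / (τ₁ - 1)))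
    (hcell : 2 / (ρ'.den : ℝ) ^ 2 ≤ (ρ.den : ℝ) ^ (-(τ₁ + τ₂)) / 4) :
    IsSuccessor (· ^ (-τ₁)) (· ^ (-τ₂)) ρ ρ' := by
  obtain ⟨-, hdN, x, ⟨hx, hxbad⟩, hxρ'⟩ := hρ'
  refine isSuccessor_of_notMem_badSet hτ₁ hτ₂ hden hsmall (hxρ'.trans ?_) hxbad
    ((Icc_subset_Icc (by linarith) (by linarith)).trans hx)
  have := ρ'.den_pos
  rw [sq]
  gcongr

theorem eventually_exists_finset_isSuccessor (hτ₁ : 2 < τ₁) (hτ₂pos : 0 < τ₂)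
    (hτ₂ : τ₂ < τ₁ * (τ₁ - 2)) :
    ∀ᶠ q : ℕ in atTop, ∀ᶠ N : ℕ in atTop, ∀ ρ : ℚ, ρ.den = q →
      ∃ F : Finset ℚ, 1 / 256 * (q : ℝ) ^ (-(τ₁ + τ₂)) * (N : ℝ) ^ 2 ≤ F.card ∧ ∀ ρ' ∈ F,
        IsSuccessor (· ^ (-τ₁)) (· ^ (-τ₂)) ρ ρ' ∧ ρ'.den ≤ N ∧
          (ρ'.den : ℝ) ^ (-τ₁) ≤ 1 / (2 * N ^ 2) := by
  filter_upwards [eventually_volume_cell_inter_badSet_le hτ₁ hτ₂pos hτ₂, eventually_gt_atTop 0]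
    with q hbad hq
  have hℓ : 0 < (q : ℝ) ^ (-(τ₁ + τ₂)) / 2 := by positivity
  obtain ⟨D, hD⟩ := eventually_atTop.1 <| (eventually_gt_atTop q).and <|
    eventually_two_div_sq_le hτ₁ (by positivity : 0 < (q : ℝ) ^ (-(τ₁ + τ₂)) / 4)
  filter_upwards [eventually_ge_atTop (8 * D), eventually_gt_atTop 0,
    eventually_le_ncard_dirichletApprox hℓ] with N hDN hN hcount ρ hρ
  subst hρ
  obtain ⟨a, -, hcore⟩ := exists_goodCore_eq_Icc_sdiff_badSet τ₁ τ₂ ρ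
  have hsub : goodCore τ₁ τ₂ ρ ⊆ Icc a (a + (ρ.den : ℝ) ^ (-(τ₁ + τ₂)) / 2) :=
    hcore.trans_subset sdiff_subset
  have hfin := finite_dirichletApprox (c := 1 / 8) (N := N) hsub
  refine ⟨hfin.toFinset, ?_, fun ρ' hρ' => ?_⟩
  · rw [← Set.ncard_eq_toFinset_card _ hfin]
    have hvol := le_volume_goodCore (hbad ρ rfl)
    refine le_trans (le_of_eq ?_) (hcount a _ hsub ((ENNReal.ofReal_le_ofReal ?_).trans hvol))
    · ring
    · linarith
  · rw [hfin.mem_toFinset] at hρ'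
    have hNd : (N : ℝ) ≤ 8 * ρ'.den := by linarith [hρ'.1]
    have hDd : D ≤ ρ'.den := by
      have : 8 * (D : ℝ) ≤ N := by exact_mod_cast hDN
      exact_mod_cast (by linarith : (D : ℝ) ≤ ρ'.den)
    obtain ⟨hlt, hsmall, hcell, hshort⟩ := hD _ hDd
    refine ⟨isSuccessor_of_mem_dirichletApprox hτ₁ hτ₂pos.le hρ' hlt hsmall hcell, hρ'.2.1,
      hshort.trans (one_div_le_one_div_of_le (by positivity) ?_)⟩
    calc 2 * (N : ℝ) ^ 2 ≤ 2 * (8 * ρ'.den) ^ 2 := by gcongr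
      _ = 128 * (ρ'.den : ℝ) ^ 2 := by ring

theorem exists_eventually_hasSuccessors (hτ₁ : 2 < τ₁) (hτ₂pos : 0 < τ₂)
    (hτ₂ : τ₂ < τ₁ * (τ₁ - 2)) :
    ∃ q₀ : ℕ, ∀ n : ℕ, ∀ᶠ N : ℕ in atTop, HasSuccessors (· ^ (-τ₁)) (· ^ (-τ₂)) q₀ n N
      ⌈1 / 256 * (n : ℝ) ^ (-(τ₁ + τ₂)) * (N : ℝ) ^ 2⌉₊ := by
  obtain ⟨q₀, hq₀⟩ := eventually_atTop.1 (eventually_exists_finset_isSuccessor hτ₁ hτ₂pos hτ₂)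
  refine ⟨q₀, fun n => ?_⟩
  have hall := (Finset.eventually_all (Finset.Icc q₀ n)).2 fun q hq => hq₀ q (Finset.mem_Icc.1 hq).1
  filter_upwards [hall] with N hN ρ hρ hρn
  obtain ⟨F, hF, hsucc⟩ := hN ρ.den (Finset.mem_Icc.2 ⟨hρ, hρn⟩) ρ rfl
  have hcard : ⌈1 / 256 * (n : ℝ) ^ (-(τ₁ + τ₂)) * (N : ℝ) ^ 2⌉₊ ≤ F.card := by
    refine Nat.ceil_le.2 (le_trans ?_ hF)
    gcongr 1 / 256 * ?_ * _
    have := ρ.den_pos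
    exact Real.rpow_le_rpow_of_nonpos (by positivity) (by exact_mod_cast hρn) (by linarith)
  obtain ⟨c, hc, hcF⟩ := exists_strictMonoOn_Iio_forall_mem hcard
  exact ⟨c, hc, fun i hi => hsucc _ (hcF i hi)⟩

theorem le_dimH_ESet_rpow (hτ₁ : 2 < τ₁) (hτ₂pos : 0 < τ₂) (hτ₂ : τ₂ < τ₁ * (τ₁ - 2)) :
    ENNReal.ofReal (2 / (τ₁ + τ₂)) ≤ dimH (ESet (· ^ (-τ₁)) (· ^ (-τ₂))) := by
  obtain ⟨q₀, hsucc⟩ := exists_eventually_hasSuccessors hτ₁ hτ₂pos hτ₂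
  have hσ : 0 < τ₁ + τ₂ := by linarith
  refine ENNReal.le_of_forall_nnreal_lt fun s hs => ?_
  rcases eq_zero_or_pos s with rfl | hs₀
  · simp
  have hsσ : s * (τ₁ + τ₂) < 2 := by
    rw [← ENNReal.ofReal_coe_nnreal, ENNReal.ofReal_lt_ofReal_iff (by positivity)] at hs
    exact (lt_div_iff₀ hσ).1 hs
  rw [← ENNReal.ofReal_coe_nnreal]
  exact le_dimH_ESet_of_eventually_hasSuccessors (fun q => by positivity) (fun q => by positivity)
    (natCast_rpow_neg_le_one hτ₂pos.le) (by norm_num) hσ.le hs₀ (by nlinarith) hsσ hsucc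

end Power

/-- **Theorem.** For `τ₁ > 2`, `Ψ(q) = q^(−τ₁)` and `ω(q) = q^(−τ₂)` with
`0 < τ₂ < τ₁(τ₁ − 2)`, one has `dim_H(E(Ψ,ω)) = 2/(τ₁ + τ₂)`. -/
theorem dimH_ESet_rpow (τ₁ τ₂ : ℝ) (hτ₁ : 2 < τ₁) (hτ₂pos : 0 < τ₂)
    (hτ₂ : τ₂ < τ₁ * (τ₁ - 2)) :
    dimH (ESet (fun q : ℝ => q ^ (-τ₁)) (fun q : ℝ => q ^ (-τ₂))) =
      ENNReal.ofReal (2 / (τ₁ + τ₂)) :=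
  le_antisymm (dimH_ESet_rpow_le (by linarith) (by linarith)) (le_dimH_ESet_rpow hτ₁ hτ₂pos hτ₂)
end

section
/- Let τ₁ be a natural number with τ₁ ≥ 3 and let Ψ : (0,∞) → (0,∞) be given by Ψ(q) = q^{−τ₁}. If ω : (0,∞) → (0,∞) is given by ω(q) = q^{−τ₂} for some τ₂ with 0 < τ₂ < τ₁(τ₁ − 1), then dim_H(E(Ψ,ω)) = 2/(τ₁ + τ₂). -/
/-!
Write `n = τ₁` and `t = τ₂`.

**Upper bound.** A point of `E(Ψ, ω)` lies, for infinitely many `q`, in one of the annuli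
`(1 - q ^ (-t)) * q ^ (-n) ≤ |x - p / q| ≤ q ^ (-n)`, each of which consists of two intervals of
length `q ^ (-n - t)`. In a bounded region there are `O(q)` of them for each `q`, so these natural
covers have `d`-weight bounded by a tail of `∑ q ^ (1 - d * (n + t))`, which vanishes in the limit
for `d > 2 / (n + t)`.

**Lower bound.** The set contains the intersections of nested sequences of nodes, the node of a
rational `f` of denominator `q` being the inner half of the annulus to the right of `f`. Given a
node, of length `ℓ = q ^ (-n - t) / 2`, and a large scale `N`, its children are nodes of rationals
`g` with denominator between `N / 256` and `N`, and one has to know that no rational of intermediate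
denominator comes too close to their points.

* Denominators below `max (q ^ (n - 1)) (q ^ t) / 2` cause no harm: rationals repel the centre `f`
  and also the corner `f + q ^ (-n)`, which is a rational of denominator exactly `q ^ n` because `n`
  is an integer; the corner itself is harmless because `t < n * (n - 1)`.
* Larger denominators are avoided on all but one eighth of the node, except those beyond about
  `N ^ (1 / (n - 1))`, which are repelled by `g`.
* For most points of the node, Dirichlet's theorem provides a rational with denominator of order
  `N`. Hence there are at least `ℓ * N ^ 2 / 2000` children.

Instead of constructing a measure on the resulting Cantor set, suppose that the set has zero
`s`-dimensional Hausdorff measure for some `s < 2 / (n + t)` and fix a cover by balls with tiny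
total weight `∑ r i ^ s`. Balls large compared with `N ^ (-2)` can be avoided by the choice of
children, and small balls meet at most one child each. By the pigeonhole principle some child is met
only by balls of small total weight relative to its size, since `N ^ 2 * N ^ (-s * (n + t))` tends
to infinity. Iterating yields a point of the set that no ball covers, a contradiction.
-/

open Filter Set

open MeasureTheory
open scoped ENNReal NNReal Topology

/-! ### Points close to rationals of bounded denominator -/

theorem one_div_den_mul_den_le_abs_sub_s11 {f g : ℚ} (h : f ≠ g) :
    1 / ((f.den : ℝ) * g.den) ≤ |(f : ℝ) - g| := by
  have hf : (0 : ℝ) < f.den := by exact_mod_cast f.den_pos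
  have hg : (0 : ℝ) < g.den := by exact_mod_cast g.den_pos
  have hsub : (f : ℝ) - g = ((f.num * g.den - g.num * f.den : ℤ) : ℝ) / (f.den * g.den) := by
    rw [Rat.cast_def f, Rat.cast_def g]
    push_cast
    field_simp
  have hnum : f.num * g.den - g.num * f.den ≠ 0 := fun h0 ↦ h <| by
    rw [h0, Int.cast_zero, zero_div, sub_eq_zero] at hsub
    exact_mod_cast hsub
  rw [hsub, abs_div, abs_of_pos (mul_pos hf hg)]
  gcongr
  exact_mod_cast Int.one_le_abs hnum

theorem finite_and_ncard_le_of_separated {ι : Type*} {S : Set ι} {f : ι → ℝ} {a b δ : ℝ}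
    (hab : a ≤ b) (hδ : 0 < δ) (hf : ∀ i ∈ S, f i ∈ Icc a b)
    (hsep : S.Pairwise fun i j ↦ δ ≤ |f i - f j|) :
    S.Finite ∧ (S.ncard : ℝ) ≤ (b - a) / δ + 1 := by
  have hmaps : ∀ i ∈ S, ⌊(f i - a) / δ⌋₊ ∈
      (Finset.range (⌊(b - a) / δ⌋₊ + 1) : Set ℕ) := fun i hi ↦ by
    rw [Finset.coe_range, mem_Iio, Nat.lt_succ_iff]
    have := (hf i hi).2
    gcongr
  have hinj : InjOn (fun i ↦ ⌊(f i - a) / δ⌋₊) S := fun i hi j hj hij ↦ by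
    by_contra hne
    have hclose : |(f i - a) / δ - (f j - a) / δ| < 1 :=
      Int.abs_sub_lt_one_of_floor_eq_floor <| by
        rw [← Int.natCast_floor_eq_floor (div_nonneg (sub_nonneg.2 (hf i hi).1) hδ.le),
          ← Int.natCast_floor_eq_floor (div_nonneg (sub_nonneg.2 (hf j hj).1) hδ.le)]
        exact congrArg _ hij
    rw [← sub_div, sub_sub_sub_cancel_right, abs_div, abs_of_pos hδ, div_lt_one hδ] at hclose
    exact hclose.not_ge (hsep hi hj hne)
  refine ⟨Set.Finite.of_injOn hmaps hinj (Finset.finite_toSet _), ?_⟩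
  have hcard := Set.ncard_le_ncard_of_injOn _ hmaps hinj (Finset.finite_toSet _)
  rw [Set.ncard_coe_finset, Finset.card_range] at hcard
  calc (S.ncard : ℝ) ≤ ⌊(b - a) / δ⌋₊ + 1 := by exact_mod_cast hcard
    _ ≤ (b - a) / δ + 1 := by
        gcongr
        exact Nat.floor_le (div_nonneg (sub_nonneg.2 hab) hδ.le)

theorem finite_and_ncard_rat_le {a b Q : ℝ} (hab : a ≤ b) (hQ : 0 < Q) :
    {f : ℚ | (f : ℝ) ∈ Icc a b ∧ (f.den : ℝ) ≤ Q}.Finite ∧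
      ({f : ℚ | (f : ℝ) ∈ Icc a b ∧ (f.den : ℝ) ≤ Q}.ncard : ℝ) ≤ (b - a) * Q ^ 2 + 1 := by
  have h := finite_and_ncard_le_of_separated (S := {f : ℚ | (f : ℝ) ∈ Icc a b ∧ (f.den : ℝ) ≤ Q})
    (f := fun f : ℚ ↦ (f : ℝ)) (δ := 1 / Q ^ 2) hab (by positivity) (fun f hf ↦ hf.1)
    fun f hf g hg hfg ↦ by
      have : (0 : ℝ) < f.den := by exact_mod_cast f.den_pos
      have : (0 : ℝ) < g.den := by exact_mod_cast g.den_pos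
      refine le_trans ?_ (one_div_den_mul_den_le_abs_sub_s11 hfg)
      rw [sq]
      gcongr
      exacts [hf.2, hg.2]
  rwa [div_div_eq_mul_div, div_one] at h

/-- The points within `ρ q` of a rational whose reduced denominator `q` lies in `S`. -/
def nearRat (S : Set ℝ) (ρ : ℝ → ℝ) : Set ℝ :=
  {x | ∃ f : ℚ, (f.den : ℝ) ∈ S ∧ |x - f| ≤ ρ f.den}

theorem volume_nearRat_Iic_le {a b Q ρ : ℝ} (hab : a ≤ b) (hQ : 0 < Q) (hρ : 0 ≤ ρ) :
    volume (Icc a b ∩ nearRat (Iic Q) fun _ ↦ ρ) ≤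
      ENNReal.ofReal ((Q ^ 2 * (b - a + 2 * ρ) + 1) * (2 * ρ)) := by
  obtain ⟨hfin, hcard⟩ := finite_and_ncard_rat_le (a := a - ρ) (b := b + ρ) (by linarith) hQ
  have hcover : Icc a b ∩ nearRat (Iic Q) (fun _ ↦ ρ) ⊆
      ⋃ f ∈ hfin.toFinset, Metric.closedBall (f : ℝ) ρ := by
    rintro x ⟨⟨hax, hxb⟩, f, hfQ, hxf⟩
    have := abs_le.1 hxf
    simp only [mem_iUnion, Set.Finite.mem_toFinset]
    exact ⟨f, ⟨⟨by linarith, by linarith⟩, hfQ⟩, by rwa [Metric.mem_closedBall, Real.dist_eq]⟩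
  refine (measure_mono hcover).trans ((measure_biUnion_finset_le _ _).trans ?_)
  rw [Set.ncard_eq_toFinset_card _ hfin] at hcard
  simp only [Real.volume_closedBall, Finset.sum_const, nsmul_eq_mul]
  rw [← ENNReal.ofReal_natCast, ← ENNReal.ofReal_mul (by positivity)]
  gcongr
  linarith

theorem nearRat_Ico_subset_biUnion_dyadic {D : ℝ} (hD : 0 < D) {ρ : ℝ → ℝ}
    (hρ : AntitoneOn ρ (Ici D)) (K : ℕ) :
    nearRat (Ico D (2 ^ K * D)) ρ ⊆
      ⋃ j ∈ Finset.range K, nearRat (Iic (2 * (2 ^ j * D))) fun _ ↦ ρ (2 ^ j * D) := by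
  rintro x ⟨f, ⟨hDf, hfK⟩, hxf⟩
  obtain ⟨j, hj, hj'⟩ := exists_nat_pow_near ((one_le_div hD).2 hDf) (one_lt_two (α := ℝ))
  rw [le_div_iff₀ hD] at hj
  rw [div_lt_iff₀ hD, pow_succ'] at hj'
  have hDj : D ≤ 2 ^ j * D := le_mul_of_one_le_left hD.le (one_le_pow₀ one_le_two)
  have hjK : j < K := (pow_lt_pow_iff_right₀ (one_lt_two (α := ℝ))).1 <|
    lt_of_mul_lt_mul_right (hj.trans_lt hfK) hD.le
  simp only [mem_iUnion, Finset.mem_range]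
  exact ⟨j, hjK, f, by rw [mem_Iic]; linarith, hxf.trans (hρ hDj hDf hj)⟩

theorem volume_nearRat_Ico_le {a b D : ℝ} (hab : a ≤ b) (hD : 0 < D) {ρ : ℝ → ℝ}
    (hρ : AntitoneOn ρ (Ici D)) (hρ0 : ∀ u ∈ Ici D, 0 ≤ ρ u) (K : ℕ) :
    volume (Icc a b ∩ nearRat (Ico D (2 ^ K * D)) ρ) ≤ ENNReal.ofReal (∑ j ∈ Finset.range K,
      ((2 * (2 ^ j * D)) ^ 2 * (b - a + 2 * ρ (2 ^ j * D)) + 1) * (2 * ρ (2 ^ j * D))) := by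
  have hρj (j : ℕ) : 0 ≤ ρ (2 ^ j * D) :=
    hρ0 _ (le_mul_of_one_le_left hD.le (one_le_pow₀ one_le_two))
  have := sub_nonneg.2 hab
  rw [ENNReal.ofReal_sum_of_nonneg fun j _ ↦ by have := hρj j; positivity]
  refine (measure_mono (inter_subset_inter_right _
    (nearRat_Ico_subset_biUnion_dyadic hD hρ K))).trans ?_
  simp only [inter_iUnion]
  exact (measure_biUnion_finset_le _ _).trans
    (Finset.sum_le_sum fun j _ ↦ volume_nearRat_Iic_le hab (by positivity) (hρj j))

theorem sum_one_half_pow_mul_le {c : ℝ} (hc : 0 ≤ c) (K : ℕ) :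
    ∑ j ∈ Finset.range K, c * (1 / 2 : ℝ) ^ j ≤ 2 * c := by
  rw [← Finset.mul_sum, mul_comm 2]
  gcongr
  exact sum_geometric_two_le K

theorem sq_mul_inv_pow_le {n : ℕ} (hn : 3 ≤ n) {v : ℝ} (hv : 1 ≤ v) :
    v ^ 2 * (v ^ n)⁻¹ ≤ v⁻¹ := by
  calc v ^ 2 * (v ^ n)⁻¹ ≤ v ^ 2 * (v ^ 3)⁻¹ := by gcongr
    _ = v⁻¹ := by field_simp

theorem volume_nearRat_inv_pow_le {n : ℕ} (hn : 3 ≤ n) {a b D : ℝ} (hab : a ≤ b) (hD : 1000 ≤ D)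
    (hDn : 1000 ≤ (b - a) * D ^ n) (K : ℕ) :
    volume (Icc a b ∩ nearRat (Ico D (2 ^ K * D)) fun d ↦ 2 * (d ^ n)⁻¹) ≤
      ENNReal.ofReal ((b - a) / 8) := by
  have hD0 : 0 < D := by linarith
  set ℓ := b - a
  have : 0 ≤ ℓ := sub_nonneg.2 hab
  refine (volume_nearRat_Ico_le hab hD0 (fun x hx y _ hxy ↦ ?_) (fun u hu ↦ ?_) K).trans
    (ENNReal.ofReal_le_ofReal ?_)
  · have : 0 < x := hD0.trans_le hx
    gcongr
  · have : 0 < u := hD0.trans_le hu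
    positivity
  refine (Finset.sum_le_sum (g := fun j ↦ ℓ / 16 * (1 / 2) ^ j) fun j _ ↦ ?_).trans
    ((sum_one_half_pow_mul_le (by positivity) K).trans_eq (by ring))
  have hu : (1 : ℝ) ≤ 2 ^ j := one_le_pow₀ one_le_two
  rw [one_div, inv_pow]
  set u : ℝ := 2 ^ j
  set v := u * D
  have hDv : D ≤ v := le_mul_of_one_le_left hD0.le hu
  set ρ := (v ^ n)⁻¹
  have hsq : v ^ 2 * ρ ≤ u⁻¹ / 1000 := calc
    v ^ 2 * ρ ≤ v⁻¹ := sq_mul_inv_pow_le hn (by linarith)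
    _ ≤ (u * 1000)⁻¹ := by gcongr; exact mul_le_mul_of_nonneg_left hD (by positivity)
    _ = u⁻¹ / 1000 := by rw [mul_inv, div_eq_mul_inv]
  have hρℓ : ρ ≤ u⁻¹ * (ℓ / 1000) := calc
    (v ^ n)⁻¹ ≤ (u * D ^ n)⁻¹ := by
      rw [mul_pow]
      gcongr
      exact le_self_pow₀ hu (by lia)
    _ = u⁻¹ * (D ^ n)⁻¹ := mul_inv _ _
    _ ≤ u⁻¹ * (ℓ / 1000) := by
      gcongr
      rw [inv_eq_one_div, div_le_div_iff₀ (by positivity) (by norm_num)]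
      linarith
  calc ((2 * v) ^ 2 * (ℓ + 2 * (2 * ρ)) + 1) * (2 * (2 * ρ))
      = 16 * (v ^ 2 * ρ) * (ℓ + 4 * ρ) + 4 * ρ := by ring
    _ ≤ 16 * (u⁻¹ / 1000) * (ℓ + 4 * (1 * (ℓ / 1000))) + 4 * (u⁻¹ * (ℓ / 1000)) := by
        gcongr
        exact hρℓ.trans (by gcongr; exact inv_le_one_of_one_le₀ hu)
    _ ≤ ℓ / 16 * u⁻¹ := by
        have : 0 ≤ ℓ * u⁻¹ := by positivity
        linarith

theorem volume_nearRat_dirichlet_le {a b N : ℝ} (hab : a ≤ b) {K : ℕ} (hN : 256 * 2 ^ K ≤ N)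
    (hNℓ : 1000 ≤ (b - a) * N) :
    volume (Icc a b ∩ nearRat (Ico 1 (2 ^ K)) fun d ↦ 1 / (d * N)) ≤
      ENNReal.ofReal ((b - a) / 8) := by
  have hN0 : 0 < N := lt_of_lt_of_le (by positivity) hN
  rw [← mul_one (2 ^ K)]
  refine (volume_nearRat_Ico_le hab one_pos (fun x hx y _ hxy ↦ ?_) (fun u hu ↦ ?_) K).trans
    (ENNReal.ofReal_le_ofReal ?_)
  · have : 0 < x := one_pos.trans_le hx
    gcongr
  · have : 0 < u := one_pos.trans_le hu
    positivity
  set ℓ := b - a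
  have hblock (j : ℕ) : ((2 * (2 ^ j * 1)) ^ 2 * (ℓ + 2 * (1 / (2 ^ j * 1 * N))) + 1) *
      (2 * (1 / (2 ^ j * 1 * N))) ≤ 16 * ℓ / N * 2 ^ j + 2 / N * (1 / 2) ^ j := by
    have hu : (1 : ℝ) ≤ 2 ^ j := one_le_pow₀ one_le_two
    rw [one_div, one_div, inv_pow, mul_one]
    set u : ℝ := 2 ^ j
    have hρ : 2 * (u * N)⁻¹ ≤ ℓ := by
      rw [← div_eq_mul_inv, div_le_iff₀ (by positivity)]
      nlinarith
    calc ((2 * u) ^ 2 * (ℓ + 2 * (u * N)⁻¹) + 1) * (2 * (u * N)⁻¹)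
        ≤ ((2 * u) ^ 2 * (ℓ + ℓ) + 1) * (2 * (u * N)⁻¹) := by gcongr
      _ = 16 * ℓ / N * u + 2 / N * u⁻¹ := by field_simp; ring
  have hgrow : ∑ j ∈ Finset.range K, 16 * ℓ / N * (2 : ℝ) ^ j ≤ ℓ / 16 := calc
    _ = 16 * ℓ / N * (2 ^ K - 1) := by
      rw [← Finset.mul_sum, geom_sum_eq (by norm_num)]
      norm_num
    _ ≤ 16 * ℓ / N * (N / 256) := by
      gcongr
      linarith
    _ = ℓ / 16 := by field_simp; ring
  have hdecay : 2 * (2 / N) ≤ ℓ / 16 := by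
    rw [mul_div_assoc', div_le_iff₀ hN0]
    linarith
  refine (Finset.sum_le_sum fun j _ ↦ hblock j).trans ?_
  rw [Finset.sum_add_distrib]
  linarith [sum_one_half_pow_mul_le (c := 2 / N) (by positivity) K]

/-! ### Repulsion of rationals -/

theorem one_div_le_abs_sub_of_abs_sub_le {f g : ℚ} (hfg : f ≠ g) {y : ℝ}
    (hy : |y - f| ≤ 1 / (2 * (f.den * g.den))) : 1 / (2 * (f.den * g.den)) ≤ |y - g| := by
  have hsep := one_div_den_mul_den_le_abs_sub_s11 hfg
  have htri := abs_sub_le (f : ℝ) y g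
  rw [abs_sub_comm (f : ℝ) y] at htri
  rw [← div_div, div_right_comm] at hy ⊢
  linarith

theorem inv_pow_le_one_div_two_mul {n : ℕ} (hn : n ≠ 0) {d q : ℝ} (hd : 0 < d) (hq : 0 < q)
    (h : 2 * q ≤ d ^ (n - 1)) : (d ^ n)⁻¹ ≤ 1 / (2 * (d * q)) := by
  rw [← one_div]
  gcongr
  calc 2 * (d * q) = 2 * q * d := by ring
    _ ≤ d ^ (n - 1) * d := by gcongr
    _ = d ^ n := pow_sub_one_mul hn d

theorem inv_pow_le_abs_sub_of_abs_sub_le {n : ℕ} (hn : n ≠ 0) {f g : ℚ} (hfg : f ≠ g)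
    (hf : 2 * (g.den : ℝ) ≤ (f.den : ℝ) ^ (n - 1)) (hg : 2 * (f.den : ℝ) ≤ (g.den : ℝ) ^ (n - 1))
    {y : ℝ} (hy : |y - f| ≤ ((f.den : ℝ) ^ n)⁻¹) : ((g.den : ℝ) ^ n)⁻¹ ≤ |y - g| := by
  have hf0 : (0 : ℝ) < f.den := by exact_mod_cast f.den_pos
  have hg0 : (0 : ℝ) < g.den := by exact_mod_cast g.den_pos
  refine le_trans ?_ (one_div_le_abs_sub_of_abs_sub_le hfg
    (hy.trans (inv_pow_le_one_div_two_mul hn hf0 hg0 hf)))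
  rw [mul_comm (f.den : ℝ)]
  exact inv_pow_le_one_div_two_mul hn hg0 hf0 hg

theorem two_mul_le_pow_sub_one {n : ℕ} (hn : 3 ≤ n) {d q : ℝ} (hd : 0 ≤ d) (hdq : d ≤ q)
    (hq : 2 ≤ q) : 2 * d ≤ q ^ (n - 1) := calc
  2 * d ≤ q * q := by gcongr
  _ = q ^ 2 := (sq q).symm
  _ ≤ q ^ (n - 1) := pow_le_pow_right₀ (by linarith) (by lia)

theorem two_mul_pow_le_pow_sub_one {n : ℕ} (hn : 3 ≤ n) {d q : ℝ} (hq1 : 1 ≤ q)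
    (hq : 2 ^ n ≤ q) (hd : q ^ (n - 1) ≤ 2 * d) : 2 * q ^ n ≤ d ^ (n - 1) := by
  obtain ⟨k, rfl⟩ := Nat.exists_eq_add_of_le' hn
  refine le_of_mul_le_mul_left ?_ (by positivity : (0 : ℝ) < 2 ^ (k + 2))
  calc 2 ^ (k + 2) * (2 * q ^ (k + 3)) = 2 ^ (k + 3) * q ^ (k + 3) := by ring
    _ ≤ q * q ^ (k + 3) := by gcongr
    _ = q ^ (k + 4) := by ring
    _ ≤ q ^ ((k + 2) * (k + 2)) := pow_le_pow_right₀ hq1 (by nlinarith)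
    _ = (q ^ (k + 2)) ^ (k + 2) := pow_mul _ _ _
    _ ≤ (2 * d) ^ (k + 2) := by gcongr; exact hd
    _ = 2 ^ (k + 2) * d ^ (k + 2) := mul_pow _ _ _

theorem den_add_one_div_den_pow {n : ℕ} (hn : 2 ≤ n) (f : ℚ) :
    (f + 1 / (f.den : ℚ) ^ n).den = f.den ^ n := by
  obtain ⟨k, rfl⟩ := Nat.exists_eq_add_of_le' hn
  have : (f.den : ℚ) ≠ 0 := by exact_mod_cast f.den_ne_zero
  have hsum : f + 1 / (f.den : ℚ) ^ (k + 2) =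
      ((f.num * (f.den : ℤ) ^ (k + 1) + 1 : ℤ) : ℚ) / (((f.den : ℤ) ^ (k + 2) : ℤ) : ℚ) := by
    push_cast
    rw [← Rat.mul_den_eq_num f]
    field_simp
    ring
  have hcop : IsCoprime (f.num * (f.den : ℤ) ^ (k + 1) + 1) ((f.den : ℤ) ^ (k + 2)) :=
    IsCoprime.pow_right ⟨1, -(f.num * (f.den : ℤ) ^ k), by ring⟩
  have h := Rat.den_div_eq_of_coprime (pow_pos (by exact_mod_cast f.den_pos) (k + 2))
    (Int.isCoprime_iff_nat_coprime.1 hcop)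
  rw [← hsum] at h
  exact_mod_cast h

/-! ### Nodes -/

/-- Half the width `q ^ (-n) * q ^ (-t)` of each of the two components of the annulus
`(1 - q ^ (-t)) * q ^ (-n) ≤ |x - f| ≤ q ^ (-n)` around a rational `f` of denominator `q`. -/
noncomputable def nodeLen (n : ℕ) (t : ℝ) (q : ℕ) : ℝ := ((q : ℝ) ^ n)⁻¹ * (q : ℝ) ^ (-t) / 2

/-- The node of `f`: the inner half of the right-hand component of the annulus around `f`. Leaving
out the outer half keeps the node away from the corner `f + q ^ (-n)`, which is itself a rational,
of denominator `q ^ n`. -/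
noncomputable def node (n : ℕ) (t : ℝ) (f : ℚ) : Set ℝ :=
  Icc ((f : ℝ) + ((f.den : ℝ) ^ n)⁻¹ - 2 * nodeLen n t f.den)
    ((f : ℝ) + ((f.den : ℝ) ^ n)⁻¹ - nodeLen n t f.den)

/-- The denominator up to which rationals are repelled from a node of denominator `q`, by its centre
(below `q ^ (n - 1) / 2`) or by its corner (below `q ^ t / 2`). -/
noncomputable def repelBound (n : ℕ) (t : ℝ) (q : ℕ) : ℝ :=
  max ((q : ℝ) ^ (n - 1)) ((q : ℝ) ^ t) / 2

/-- The inequalities, valid for all large denominators `q`, under which the node of a rational of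
denominator `q` can be subdivided. The field `corner` says that the ball of radius `(q ^ n) ^ (-n)`
around the corner of the node does not meet the node; this is what `t < n * (n - 1)` is for. -/
structure LargeDen (n : ℕ) (t : ℝ) (q : ℕ) : Prop where
  two_pow : 2 ^ n ≤ q
  half : (q : ℝ) ^ (-t) ≤ 1 / 2
  corner : (((q : ℝ) ^ n) ^ n)⁻¹ ≤ nodeLen n t q
  le_repelBound : 1000 ≤ repelBound n t q
  le_nodeLen_mul_repelBound_pow : 1000 ≤ nodeLen n t q * repelBound n t q ^ n

section Node

variable {n : ℕ} {t : ℝ}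

theorem nodeLen_pos {q : ℕ} (hq : 0 < q) : 0 < nodeLen n t q := by
  have : (0 : ℝ) < q := by exact_mod_cast hq
  unfold nodeLen
  positivity

theorem two_mul_nodeLen (q : ℕ) : 2 * nodeLen n t q = ((q : ℝ) ^ n)⁻¹ * (q : ℝ) ^ (-t) :=
  mul_div_cancel₀ _ two_ne_zero

theorem two_mul_nodeLen_le (ht : 0 ≤ t) {q : ℕ} (hq : 0 < q) :
    2 * nodeLen n t q ≤ ((q : ℝ) ^ n)⁻¹ := by
  have hq1 : (1 : ℝ) ≤ q := by exact_mod_cast hq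
  rw [two_mul_nodeLen]
  exact mul_le_of_le_one_right (by positivity)
    (Real.rpow_le_one_of_one_le_of_nonpos hq1 (neg_nonpos.2 ht))

theorem nodeLen_anti (ht : 0 ≤ t) {q q' : ℕ} (hq : 0 < q) (hqq' : q ≤ q') :
    nodeLen n t q' ≤ nodeLen n t q := by
  have : (0 : ℝ) < q := by exact_mod_cast hq
  have hcast : (q : ℝ) ≤ q' := by exact_mod_cast hqq'
  unfold nodeLen
  gcongr ?_ * ?_ / 2
  · gcongr
  · exact Real.rpow_le_rpow_of_nonpos this hcast (neg_nonpos.2 ht)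

theorem abs_sub_le_of_mem_node (ht : 0 ≤ t) {f : ℚ} {y : ℝ} (hy : y ∈ node n t f) :
    |y - f| ≤ ((f.den : ℝ) ^ n)⁻¹ := by
  have hle := two_mul_nodeLen_le (n := n) ht f.den_pos
  have hpos := nodeLen_pos (n := n) (t := t) f.den_pos
  rw [abs_le]
  constructor <;> linarith [hy.1, hy.2]

theorem le_abs_sub_of_mem_node {f : ℚ} {y : ℝ} (hy : y ∈ node n t f) :
    (1 - (f.den : ℝ) ^ (-t)) * ((f.den : ℝ) ^ n)⁻¹ ≤ |y - f| :=
  le_trans (by linarith [hy.1, two_mul_nodeLen (n := n) (t := t) f.den]) (le_abs_self _)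

theorem LargeDen.two_le (hn : 3 ≤ n) {q : ℕ} (hq : LargeDen n t q) : 2 ≤ q :=
  (Nat.le_self_pow (by lia) 2).trans hq.two_pow

theorem LargeDen.inv_pow_le_abs_sub_of_repelled_by_corner (hn : 3 ≤ n) {f g : ℚ}
    (hf : LargeDen n t f.den) (hlow : (f.den : ℝ) ^ (n - 1) ≤ 2 * g.den)
    (hup : 2 * (g.den : ℝ) ≤ (f.den : ℝ) ^ t) {y : ℝ} (hy : y ∈ node n t f) :
    ((g.den : ℝ) ^ n)⁻¹ ≤ |y - g| := by
  have hlen := nodeLen_pos (n := n) (t := t) f.den_pos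
  have hf0 : (0 : ℝ) < f.den := by exact_mod_cast f.den_pos
  have hg0 : (0 : ℝ) < g.den := by exact_mod_cast g.den_pos
  set c : ℚ := f + 1 / (f.den : ℚ) ^ n with hc
  have hc_den : (c.den : ℝ) = (f.den : ℝ) ^ n := by
    rw [hc, den_add_one_div_den_pow (by lia), Nat.cast_pow]
  have hyc : y - c ∈ Icc (-(2 * nodeLen n t f.den)) (-nodeLen n t f.den) := by
    rw [hc, Rat.cast_add, Rat.cast_div, Rat.cast_one, Rat.cast_pow, Rat.cast_natCast, one_div]
    constructor <;> linarith [hy.1, hy.2]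
  obtain rfl | hcg := eq_or_ne c g
  · rw [hc_den]
    exact hf.corner.trans ((le_neg_of_le_neg hyc.2).trans (neg_le_abs _))
  have hclose : |y - c| ≤ 1 / (2 * (c.den * g.den)) := calc
    |y - c| ≤ 2 * nodeLen n t f.den := abs_le.2 ⟨hyc.1, by linarith [hyc.2]⟩
    _ = 1 / ((f.den : ℝ) ^ n * (f.den : ℝ) ^ t) := by
      rw [two_mul_nodeLen, Real.rpow_neg hf0.le, ← mul_inv, one_div]
    _ ≤ 1 / ((f.den : ℝ) ^ n * (2 * g.den)) := by gcongr
    _ = 1 / (2 * (c.den * g.den)) := by rw [hc_den]; ring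
  refine le_trans ?_ (one_div_le_abs_sub_of_abs_sub_le hcg hclose)
  rw [hc_den, mul_comm (_ ^ n)]
  exact inv_pow_le_one_div_two_mul (by lia) hg0 (by positivity) <|
    two_mul_pow_le_pow_sub_one hn (by exact_mod_cast f.den_pos) (by exact_mod_cast hf.two_pow) hlow

theorem LargeDen.inv_pow_le_abs_sub (hn : 3 ≤ n) (ht : 0 ≤ t) {f g : ℚ}
    (hf : LargeDen n t f.den) (hfg : f ≠ g) (hle : f.den ≤ g.den)
    (hup : (g.den : ℝ) ≤ repelBound n t f.den) {y : ℝ} (hy : y ∈ node n t f) :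
    ((g.den : ℝ) ^ n)⁻¹ ≤ |y - g| := by
  rw [repelBound, le_div_iff₀ two_pos, mul_comm, le_max_iff] at hup
  by_cases hc : 2 * (g.den : ℝ) ≤ (f.den : ℝ) ^ (n - 1)
  · have hf2 := hf.two_le hn
    exact inv_pow_le_abs_sub_of_abs_sub_le (by lia) hfg hc
      (two_mul_le_pow_sub_one hn (by positivity) (by exact_mod_cast hle)
        (by exact_mod_cast hf2.trans hle)) (abs_sub_le_of_mem_node ht hy)
  · exact hf.inv_pow_le_abs_sub_of_repelled_by_corner hn (not_le.1 hc).le (hup.resolve_left hc) hy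

/-- The relation between successive rationals of a nested sequence of nodes. The field `inv_pow_le`
protects the points of the node of `g` from the rationals of denominator between those of `f` and
`g`. -/
structure IsChild (n : ℕ) (t : ℝ) (f g : ℚ) : Prop where
  den_lt : f.den < g.den
  subset : node n t g ⊆ node n t f
  inv_pow_le : ∀ h ≠ f, f.den ≤ h.den → h.den < g.den → ∀ y ∈ node n t g,
    ((h.den : ℝ) ^ n)⁻¹ ≤ |y - h|

theorem abs_sub_le_of_mem_node_of_le_den (hn : 3 ≤ n) (ht : 0 ≤ t) {N : ℝ} (hN : 2 ^ 27 ≤ N)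
    {g : ℚ} (hg : N / 256 ≤ g.den) {y : ℝ} (hy : y ∈ node n t g) :
    |y - g| ≤ 1 / (8 * N ^ 2) := by
  have : 0 < N := lt_of_lt_of_le (by positivity) hN
  refine (abs_sub_le_of_mem_node ht hy).trans ?_
  rw [← one_div]
  gcongr
  calc 8 * N ^ 2 ≤ N ^ 2 * (N / 2 ^ 24) := by
        rw [mul_comm]
        gcongr
        rw [le_div_iff₀ (by norm_num)]
        exact le_trans (by norm_num) hN
    _ = (N / 256) ^ 3 := by ring
    _ ≤ (g.den : ℝ) ^ 3 := by gcongr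
    _ ≤ (g.den : ℝ) ^ n := pow_le_pow_right₀ (by exact_mod_cast g.den_pos) hn

theorem abs_sub_le_of_mem_node_of_near (hn : 3 ≤ n) (ht : 0 ≤ t) {N : ℝ} (hN : 2 ^ 27 ≤ N)
    {g : ℚ} (hg : N / 256 ≤ g.den) {x : ℝ} (hxg : |x - g| ≤ 256 / N ^ 2) {y : ℝ}
    (hy : y ∈ node n t g) : |y - x| ≤ 257 / N ^ 2 := by
  have : 0 < N := lt_of_lt_of_le (by positivity) hN
  rw [abs_sub_comm] at hxg
  calc |y - x| ≤ |y - g| + |g - x| := abs_sub_le _ _ _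
    _ ≤ 1 / (8 * N ^ 2) + 256 / N ^ 2 :=
      add_le_add (abs_sub_le_of_mem_node_of_le_den hn ht hN hg hy) hxg
    _ ≤ 1 / N ^ 2 + 256 / N ^ 2 := by gcongr; linarith [sq_nonneg N]
    _ = 257 / N ^ 2 := by ring

theorem div_sq_le_inv_pow (hn : 3 ≤ n) {N : ℝ} (hN : 2 ^ 27 ≤ N) {d : ℝ} (hd : 1 ≤ d)
    (hdN : d ^ (n - 1) ≤ 2 * N) : 257 / N ^ 2 ≤ (d ^ n)⁻¹ := by
  have : 0 < N := lt_of_lt_of_le (by positivity) hN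
  rw [le_inv_comm₀ (by positivity) (by positivity), inv_div]
  refine (sq_le_sq₀ (by positivity) (by positivity)).1 ?_
  calc (d ^ n) ^ 2 = (d ^ (n - 1)) ^ 2 * d ^ 2 := by rw [← mul_pow, pow_sub_one_mul (by lia)]
    _ ≤ (d ^ (n - 1)) ^ 2 * d ^ (n - 1) := by gcongr; lia
    _ ≤ (2 * N) ^ 2 * (2 * N) := by gcongr
    _ = N ^ 3 * 8 := by ring
    _ ≤ N ^ 3 * (N / 257 ^ 2) := by
        gcongr
        rw [le_div_iff₀ (by norm_num)]
        exact le_trans (by norm_num) hN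
    _ = (N ^ 2 / 257) ^ 2 := by ring

theorem inv_pow_le_abs_sub_of_notMem_nearRat (hn : 3 ≤ n) (ht : 0 ≤ t) {N D : ℝ}
    (hN : 2 ^ 27 ≤ N) {g : ℚ} (hg : N / 256 ≤ g.den) (hg' : g.den ≤ N) {x : ℝ}
    (hxg : |x - g| ≤ 256 / N ^ 2) (hx : x ∉ nearRat (Ico D N) fun d ↦ 2 * (d ^ n)⁻¹) {h : ℚ}
    (hD : D ≤ h.den) (hhg : h.den < g.den) {y : ℝ} (hy : y ∈ node n t g) :
    ((h.den : ℝ) ^ n)⁻¹ ≤ |y - h| := by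
  have hhg' : (h.den : ℝ) < g.den := by exact_mod_cast hhg
  have hh : (1 : ℝ) ≤ h.den := by exact_mod_cast h.den_pos
  by_cases hc : 2 * (g.den : ℝ) ≤ (h.den : ℝ) ^ (n - 1)
  · have hg2 : 2 ≤ g.den := by have := h.den_pos; lia
    exact inv_pow_le_abs_sub_of_abs_sub_le (by lia) (by rintro rfl; exact hhg.false)
      (two_mul_le_pow_sub_one hn (by positivity) hhg'.le (by exact_mod_cast hg2)) hc
      (abs_sub_le_of_mem_node ht hy)
  · have hyx := abs_sub_le_of_mem_node_of_near hn ht hN hg hxg hy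
    have hpow : 257 / N ^ 2 ≤ ((h.den : ℝ) ^ n)⁻¹ :=
      div_sq_le_inv_pow hn hN hh ((not_le.1 hc).le.trans (by gcongr))
    have hxh : 2 * ((h.den : ℝ) ^ n)⁻¹ < |x - h| :=
      not_le.1 fun hle ↦ hx ⟨h, ⟨hD, hhg'.trans_le hg'⟩, hle⟩
    have htri := abs_sub_le x y h
    rw [abs_sub_comm x y] at htri
    linarith

theorem LargeDen.isChild (hn : 3 ≤ n) (ht : 0 ≤ t) {f g : ℚ} (hf : LargeDen n t f.den)
    (hfg : f.den < g.den) {N : ℝ} (hN : 2 ^ 27 ≤ N) (hℓ : 1000 ≤ nodeLen n t f.den * N)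
    (hg : N / 256 ≤ g.den) (hg' : g.den ≤ N) {x : ℝ}
    (hxf : Metric.closedBall x (nodeLen n t f.den / 8) ⊆ node n t f) (hxg : |x - g| ≤ 256 / N ^ 2)
    (hx : x ∉ nearRat (Ico (repelBound n t f.den) N) fun d ↦ 2 * (d ^ n)⁻¹) :
    IsChild n t f g := by
  have : 0 < N := lt_of_lt_of_le (by positivity) hN
  have hsub : node n t g ⊆ node n t f := fun y hy ↦ hxf <| by
    rw [Metric.mem_closedBall, Real.dist_eq]
    refine (abs_sub_le_of_mem_node_of_near hn ht hN hg hxg hy).trans ?_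
    rw [div_le_iff₀ (by positivity)]
    nlinarith
  refine ⟨hfg, hsub, fun h hhf hfh hhg y hy ↦ ?_⟩
  obtain hD | hD := le_total (h.den : ℝ) (repelBound n t f.den)
  · exact hf.inv_pow_le_abs_sub hn ht hhf.symm hfh hD (hsub hy)
  · exact inv_pow_le_abs_sub_of_notMem_nearRat hn ht hN hg hg' hxg hx hD hhg hy

end Node

/-! ### Large denominators -/

section Asymptotics

variable {n : ℕ} {t : ℝ}

theorem eventually_const_mul_rpow_le {a b : ℝ} (hab : a < b) (C : ℝ) :
    ∀ᶠ q : ℕ in atTop, C * (q : ℝ) ^ a ≤ (q : ℝ) ^ b := by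
  have htendsto : Tendsto (fun q : ℕ ↦ (q : ℝ) ^ (b - a)) atTop atTop :=
    (tendsto_rpow_atTop (sub_pos.2 hab)).comp tendsto_natCast_atTop_atTop
  filter_upwards [htendsto.eventually_ge_atTop C, eventually_gt_atTop 0] with q hC hq
  have : (0 : ℝ) < q := by exact_mod_cast hq
  calc C * (q : ℝ) ^ a ≤ (q : ℝ) ^ (b - a) * (q : ℝ) ^ a := by gcongr
    _ = (q : ℝ) ^ b := by rw [← Real.rpow_add this, sub_add_cancel]

theorem nodeLen_eq_rpow {q : ℕ} (hq : 0 < q) :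
    nodeLen n t q = (q : ℝ) ^ (-((n : ℝ) + t)) / 2 := by
  have : (0 : ℝ) < q := by exact_mod_cast hq
  rw [nodeLen, neg_add, Real.rpow_add this, Real.rpow_neg this.le (n : ℝ), Real.rpow_natCast]

theorem eventually_rpow_neg_le_half (ht : 0 < t) : ∀ᶠ q : ℕ in atTop, (q : ℝ) ^ (-t) ≤ 1 / 2 := by
  filter_upwards [eventually_const_mul_rpow_le (neg_neg_of_pos ht) 2] with q hq
  rw [Real.rpow_zero] at hq
  linarith

theorem eventually_corner_le (ht : t < (n : ℝ) * (n - 1)) :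
    ∀ᶠ q : ℕ in atTop, (((q : ℝ) ^ n) ^ n)⁻¹ ≤ nodeLen n t q := by
  filter_upwards [eventually_gt_atTop 0,
    eventually_const_mul_rpow_le (show -((n : ℝ) * n) < -(n + t) by linarith) 2] with q hq0 hq
  rw [Real.rpow_neg q.cast_nonneg, Real.rpow_mul q.cast_nonneg, Real.rpow_natCast,
    Real.rpow_natCast] at hq
  rw [nodeLen_eq_rpow hq0]
  linarith

theorem eventually_le_repelBound (ht : 0 < t) (C : ℝ) :
    ∀ᶠ q : ℕ in atTop, C ≤ repelBound n t q := by
  filter_upwards [eventually_const_mul_rpow_le ht (2 * C)] with q hq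
  rw [Real.rpow_zero] at hq
  rw [repelBound]
  linarith [le_max_right ((q : ℝ) ^ (n - 1)) ((q : ℝ) ^ t)]

theorem eventually_le_nodeLen_mul_pow {e : ℝ} {B : ℕ → ℝ} (he : n + t < e * n)
    (hB : ∀ q : ℕ, (q : ℝ) ^ e / 2 ≤ B q) (C : ℝ) :
    ∀ᶠ q : ℕ in atTop, C ≤ nodeLen n t q * B q ^ n := by
  filter_upwards [eventually_gt_atTop 0,
    eventually_const_mul_rpow_le he (C * (2 * 2 ^ n))] with q hq0 hq
  have hq0' : (0 : ℝ) < q := by exact_mod_cast hq0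
  calc C ≤ (q : ℝ) ^ (-((n : ℝ) + t)) * (q : ℝ) ^ (e * n) / (2 * 2 ^ n) := by
        rwa [le_div_iff₀ (by positivity), Real.rpow_neg hq0'.le, ← div_eq_inv_mul,
          le_div_iff₀ (by positivity)]
    _ = nodeLen n t q * ((q : ℝ) ^ e / 2) ^ n := by
        rw [nodeLen_eq_rpow hq0, Real.rpow_mul hq0'.le, Real.rpow_natCast, div_pow]
        ring
    _ ≤ nodeLen n t q * B q ^ n := by
        have := nodeLen_pos (n := n) (t := t) hq0
        gcongr
        exact hB q

theorem eventually_le_nodeLen_mul_repelBound_pow (hn : 3 ≤ n) (ht : 0 < t) (C : ℝ) :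
    ∀ᶠ q : ℕ in atTop, C ≤ nodeLen n t q * repelBound n t q ^ n := by
  have hn' : (3 : ℝ) ≤ n := by exact_mod_cast hn
  obtain htn | htn := lt_or_ge t ((n : ℝ) * (n - 2))
  · refine eventually_le_nodeLen_mul_pow (e := (n - 1 : ℕ)) ?_ (fun q ↦ ?_) C
    · push_cast [Nat.cast_sub (show 1 ≤ n by lia)]
      linarith
    · rw [Real.rpow_natCast, repelBound]
      gcongr
      exact le_max_left _ _
  · refine eventually_le_nodeLen_mul_pow (e := t) (by nlinarith) (fun q ↦ ?_) C
    rw [repelBound]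
    gcongr
    exact le_max_right _ _

theorem eventually_largeDen (hn : 3 ≤ n) (ht : 0 < t) (htn : t < (n : ℝ) * (n - 1)) :
    ∀ᶠ q : ℕ in atTop, LargeDen n t q := by
  filter_upwards [eventually_ge_atTop (2 ^ n), eventually_rpow_neg_le_half ht,
    eventually_corner_le htn, eventually_le_repelBound ht 1000,
    eventually_le_nodeLen_mul_repelBound_pow hn ht 1000] with q h₁ h₂ h₃ h₄ h₅
  exact ⟨h₁, h₂, h₃, h₄, h₅⟩

theorem eventually_le_sq_mul_nodeLen_rpow {s : ℝ} (hs : s * (n + t) < 2) (C : ℝ) :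
    ∀ᶠ q : ℕ in atTop, C ≤ (q : ℝ) ^ 2 * nodeLen n t q ^ s := by
  filter_upwards [eventually_gt_atTop 0, eventually_const_mul_rpow_le hs (C * 2 ^ s)] with q hq0 hq
  have hq0' : (0 : ℝ) < q := by exact_mod_cast hq0
  rw [Real.rpow_two] at hq
  rw [nodeLen_eq_rpow hq0, Real.div_rpow (by positivity) two_pos.le, ← Real.rpow_mul hq0'.le,
    neg_mul, Real.rpow_neg hq0'.le, mul_comm ((n : ℝ) + t), inv_eq_one_div, div_div,
    mul_one_div, mul_comm (_ ^ (_ * _)), le_div_iff₀ (by positivity), ← mul_assoc]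
  exact hq

theorem exists_scale {s : ℝ} (hs : s * (n + t) < 2) {ℓ : ℝ} (hℓ : 0 < ℓ) (q : ℕ) :
    ∃ k : ℕ, (2 : ℝ) ^ 27 ≤ 256 * 2 ^ k ∧ 256 * (q : ℝ) < 256 * 2 ^ k ∧
      1000 ≤ ℓ * (256 * 2 ^ k) ∧
      2000 * ℓ ^ s ≤ ℓ * (256 * 2 ^ k) ^ 2 * nodeLen n t (256 * 2 ^ k) ^ s := by
  have hscale : Tendsto (fun k : ℕ ↦ 256 * 2 ^ k) atTop (atTop : Filter ℕ) :=
    (tendsto_pow_atTop_atTop_of_one_lt one_lt_two).const_mul_atTop' (by norm_num)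
  have hlarge := (tendsto_natCast_atTop_atTop (R := ℝ)).eventually
    ((eventually_ge_atTop ((2 : ℝ) ^ 27)).and ((eventually_gt_atTop (256 * (q : ℝ))).and
      (eventually_ge_atTop (1000 / ℓ))))
  obtain ⟨k, ⟨hk27, hkq, hkℓ⟩, hks⟩ := (hscale.eventually
    (hlarge.and (eventually_le_sq_mul_nodeLen_rpow hs (2000 * ℓ ^ s / ℓ)))).exists
  rw [div_le_iff₀ hℓ] at hkℓ hks
  push_cast at hk27 hkq hkℓ hks
  exact ⟨k, hk27, hkq, by linarith, by linarith⟩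

end Asymptotics

/-! ### Weights of families of balls -/

section Hits

variable {ι X : Type*} [PseudoMetricSpace X] {c : ι → X} {r : ι → ℝ} {s : ℝ} {J J' : Set X}

/-- The indices of those of the balls with centres `c i` and radii `r i` that meet `J`. -/
def hits (c : ι → X) (r : ι → ℝ) (J : Set X) : Set ι :=
  {i | (Metric.closedBall (c i) (r i) ∩ J).Nonempty}

/-- The `s`-weight `∑ r i ^ s` of the balls meeting `J`. -/
noncomputable def hitSum (c : ι → X) (r : ι → ℝ) (s : ℝ) (J : Set X) : ℝ≥0∞ :=
  ∑' i : hits c r J, ENNReal.ofReal (r i ^ s)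

theorem hits_mono (h : J ⊆ J') : hits c r J ⊆ hits c r J' :=
  fun _ ↦ Set.Nonempty.mono (inter_subset_inter_right _ h)

theorem radius_le_of_hitSum_le (hr : ∀ i, 0 ≤ r i) (hs : 0 < s) {ℓ : ℝ} (hℓ : 0 ≤ ℓ)
    (hJ : hitSum c r s J ≤ ENNReal.ofReal (ℓ ^ s)) {i : ι} (hi : i ∈ hits c r J) : r i ≤ ℓ := by
  have hterm : ENNReal.ofReal (r i ^ s) ≤ hitSum c r s J :=
    ENNReal.le_tsum (f := fun j : hits c r J ↦ ENNReal.ofReal (r j ^ s)) ⟨i, hi⟩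
  exact (Real.rpow_le_rpow_iff (hr i) hℓ hs).1
    ((ENNReal.ofReal_le_ofReal_iff (by positivity)).1 (hterm.trans hJ))

theorem radius_lt_of_notMem_closedBall {A δ η : ℝ} {x z : X} (hJ : J ⊆ J')
    (hJz : J ⊆ Metric.closedBall z η) (hxz : dist x z ≤ δ)
    (hx : x ∉ ⋃ i ∈ hits c r J', Metric.closedBall (c i) (A * r i)) {i : ι}
    (hi : i ∈ hits c r J) : (A - 1) * r i < δ + η := by
  obtain ⟨y, hyc, hyJ⟩ := hi
  have hxc : A * r i < dist x (c i) := not_le.1 fun hle ↦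
    hx (mem_biUnion (hits_mono hJ ⟨y, hyc, hyJ⟩) hle)
  have hyz : dist y z ≤ η := hJz hyJ
  rw [Metric.mem_closedBall] at hyc
  linarith [dist_triangle4_right x (c i) z y, dist_triangle x z (c i),
    dist_triangle_left z (c i) y]

theorem disjoint_hits {η ρ : ℝ} {z z' : X} (hJ : J ⊆ Metric.closedBall z η)
    (hJ' : J' ⊆ Metric.closedBall z' η) (hr : ∀ i ∈ hits c r J, r i < ρ)
    (hsep : 2 * (η + ρ) ≤ dist z z') : Disjoint (hits c r J) (hits c r J') := by
  refine Set.disjoint_left.2 fun i hi ⟨y', hyc', hyJ'⟩ ↦ ?_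
  have hri := hr i hi
  obtain ⟨y, hyc, hyJ⟩ := hi
  have hyz : dist y z ≤ η := hJ hyJ
  have hyz' : dist y' z' ≤ η := hJ' hyJ'
  rw [Metric.mem_closedBall] at hyc hyc'
  linarith [dist_triangle4 z y y' z', dist_comm z y, dist_triangle_right y y' (c i)]

theorem sum_hitSum_le {α : Type*} (T : Finset α) {J : α → Set X} {J₀ : Set X}
    (hJ : ∀ a ∈ T, J a ⊆ J₀)
    (hdisj : (T : Set α).Pairwise fun a b ↦ Disjoint (hits c r (J a)) (hits c r (J b))) :
    ∑ a ∈ T, hitSum c r s (J a) ≤ hitSum c r s J₀ := by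
  simp only [hitSum]
  rw [← Summable.tsum_finset_bUnion_disjoint (f := fun i ↦ ENNReal.ofReal (r i ^ s)) hdisj
    fun _ _ ↦ ENNReal.summable]
  exact ENNReal.tsum_mono_subtype (fun i ↦ ENNReal.ofReal (r i ^ s))
    (iUnion₂_subset fun a ha ↦ hits_mono (hJ a ha))

theorem exists_hitSum_le {α : Type*} {T : Finset α} (hT : T.Nonempty) {J : α → Set X}
    {J₀ : Set X} (hJ : ∀ a ∈ T, J a ⊆ J₀)
    (hdisj : (T : Set α).Pairwise fun a b ↦ Disjoint (hits c r (J a)) (hits c r (J b)))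
    {w : ℝ≥0∞} (hw : hitSum c r s J₀ ≤ T.card * w) : ∃ a ∈ T, hitSum c r s (J a) ≤ w := by
  by_contra! hheavy
  have hlt := ENNReal.sum_lt_sum_of_nonempty hT hheavy
  rw [Finset.sum_const, nsmul_eq_mul] at hlt
  exact (hlt.trans_le (sum_hitSum_le T hJ hdisj)).not_ge hw

end Hits

theorem volume_biUnion_hits_le {ι : Type*} [Countable ι] {c r : ι → ℝ} (hr : ∀ i, 0 < r i)
    {s : ℝ} (hs0 : 0 < s) (hs1 : s ≤ 1) {J : Set ℝ} {κ : ℝ} (hκ : κ ≤ 1) {ℓ : ℝ} (hℓ : 0 < ℓ)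
    (hJ : hitSum c r s J ≤ ENNReal.ofReal (κ * ℓ ^ s)) {A : ℝ} (hA : 0 ≤ A) :
    volume (⋃ i ∈ hits c r J, Metric.closedBall (c i) (A * r i)) ≤
      ENNReal.ofReal (2 * A * κ * ℓ) := by
  have hball (i : hits c r J) : volume (Metric.closedBall (c i) (A * r i)) ≤
      ENNReal.ofReal (2 * A * ℓ ^ (1 - s)) * ENNReal.ofReal (r i ^ s) := by
    have hri := hr i
    have hrℓ : r i ≤ ℓ := radius_le_of_hitSum_le (fun i ↦ (hr i).le) hs0 hℓ.le
      (hJ.trans (by gcongr; exact mul_le_of_le_one_left (by positivity) hκ)) i.2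
    rw [Real.volume_closedBall, ← ENNReal.ofReal_mul (by positivity)]
    refine ENNReal.ofReal_le_ofReal ?_
    calc 2 * (A * r i) = 2 * A * (r i ^ (1 - s) * r i ^ s) := by
          rw [← Real.rpow_add hri, sub_add_cancel, Real.rpow_one, mul_assoc]
      _ ≤ 2 * A * (ℓ ^ (1 - s) * r i ^ s) := by gcongr
      _ = 2 * A * ℓ ^ (1 - s) * r i ^ s := by ring
  calc volume (⋃ i ∈ hits c r J, Metric.closedBall (c i) (A * r i))
      ≤ ∑' i : hits c r J, ENNReal.ofReal (2 * A * ℓ ^ (1 - s)) * ENNReal.ofReal (r i ^ s) :=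
        (measure_biUnion_le _ (to_countable _) _).trans (ENNReal.tsum_le_tsum hball)
    _ ≤ ENNReal.ofReal (2 * A * ℓ ^ (1 - s)) * ENNReal.ofReal (κ * ℓ ^ s) := by
        rw [ENNReal.tsum_mul_left]
        gcongr
        exact hJ
    _ = ENNReal.ofReal (2 * A * κ * (ℓ ^ (1 - s) * ℓ ^ s)) := by
        rw [← ENNReal.ofReal_mul (by positivity)]
        ring_nf
    _ = ENNReal.ofReal (2 * A * κ * ℓ) := by
        rw [← Real.rpow_add hℓ, sub_add_cancel, Real.rpow_one]

/-! ### Children of a node -/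

theorem sub_le_card_mul_of_Icc_subset {ι : Type*} {a b δ m : ℝ} (hδ : 0 ≤ δ) (hm : 0 ≤ m)
    {S : Finset ι} {c : ι → ℝ} {B : Set ℝ} (hB : volume B ≤ ENNReal.ofReal m)
    (hcover : Icc a b ⊆ (⋃ i ∈ S, Metric.closedBall (c i) δ) ∪ B) :
    b - a ≤ S.card * (2 * δ) + m := by
  have h : volume (Icc a b) ≤ S.card * ENNReal.ofReal (2 * δ) + ENNReal.ofReal m := calc
    volume (Icc a b) ≤ ∑ i ∈ S, volume (Metric.closedBall (c i) δ) + ENNReal.ofReal m :=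
      (measure_mono hcover).trans ((measure_union_le _ _).trans
        (add_le_add (measure_biUnion_finset_le _ _) hB))
    _ = S.card * ENNReal.ofReal (2 * δ) + ENNReal.ofReal m := by
      simp only [Real.volume_closedBall, Finset.sum_const, nsmul_eq_mul]
  rwa [Real.volume_Icc, ← ENNReal.ofReal_natCast, ← ENNReal.ofReal_mul (by positivity),
    ← ENNReal.ofReal_add (by positivity) hm, ENNReal.ofReal_le_ofReal_iff (by positivity)] at h

theorem exists_rat_den_ge_of_notMem_nearRat {k : ℕ} {N : ℝ} (hN : N = 256 * 2 ^ k) {x : ℝ}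
    (hx : x ∉ nearRat (Ico 1 (2 ^ k)) fun d ↦ 1 / (d * N)) :
    ∃ g : ℚ, N / 256 ≤ g.den ∧ g.den ≤ N ∧ |x - g| ≤ 256 / N ^ 2 := by
  have hN0 : 0 < N := by rw [hN]; positivity
  obtain ⟨g, hxg, hgN⟩ := Real.exists_rat_abs_sub_le_and_den_le x (n := 256 * 2 ^ k) (by positivity)
  have hg1 : (1 : ℝ) ≤ g.den := by exact_mod_cast g.den_pos
  have hxg' : |x - g| ≤ 1 / (g.den * N) := by
    refine hxg.trans (one_div_le_one_div_of_le (by positivity) ?_)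
    push_cast
    rw [hN]
    linarith
  have hg : N / 256 ≤ g.den := by
    refine not_lt.1 fun hlt ↦ hx ⟨g, ⟨hg1, ?_⟩, hxg'⟩
    rwa [hN, mul_div_cancel_left₀ _ (by norm_num)] at hlt
  refine ⟨g, hg, by rw [hN]; exact_mod_cast hgN, hxg'.trans ?_⟩
  calc 1 / (g.den * N) ≤ 1 / (N / 256 * N) := by gcongr
    _ = 256 / N ^ 2 := by field_simp

-- Three eighths of the length remain after removing `B`, the points with a small Dirichlet
-- denominator, and a margin of `ℓ / 8` at either end.
theorem exists_finset_rat_near {a b N : ℝ} {k : ℕ} (hab : a ≤ b) (hN : N = 256 * 2 ^ k)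
    (hℓ : 1000 ≤ (b - a) * N) {B : Set ℝ}
    (hB : volume (Icc a b ∩ B) ≤ ENNReal.ofReal ((b - a) / 4)) :
    ∃ S : Finset ℚ, (b - a) * N ^ 2 ≤ 2000 * S.card ∧ ∀ g ∈ S, N / 256 ≤ g.den ∧ g.den ≤ N ∧
      ∃ x, Metric.closedBall x ((b - a) / 8) ⊆ Icc a b ∧ x ∉ B ∧ |x - g| ≤ 256 / N ^ 2 := by
  have hN0 : 0 < N := by rw [hN]; positivity
  set ℓ := b - a
  have : 0 ≤ ℓ := sub_nonneg.2 hab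
  have hδ : 0 ≤ 256 / N ^ 2 := by positivity
  set S : Set ℚ := {g | N / 256 ≤ g.den ∧ g.den ≤ N ∧
    ∃ x, Metric.closedBall x (ℓ / 8) ⊆ Icc a b ∧ x ∉ B ∧ |x - g| ≤ 256 / N ^ 2}
  have hS : S.Finite := by
    refine (finite_and_ncard_rat_le (a := a - 256 / N ^ 2) (b := b + 256 / N ^ 2)
      (by linarith) hN0).1.subset ?_
    rintro g ⟨_, hgN, x, hx, _, hxg⟩
    have hx := hx (Metric.mem_closedBall_self (by positivity))
    have := abs_le.1 hxg
    exact ⟨⟨by linarith [hx.1], by linarith [hx.2]⟩, hgN⟩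
  refine ⟨hS.toFinset, ?_, fun g hg ↦ hS.mem_toFinset.1 hg⟩
  have hcover : Icc (a + ℓ / 8) (b - ℓ / 8) ⊆
      (⋃ g ∈ hS.toFinset, Metric.closedBall (g : ℝ) (256 / N ^ 2)) ∪
        (Icc a b ∩ B ∪ Icc a b ∩ nearRat (Ico 1 (2 ^ k)) fun d ↦ 1 / (d * N)) := by
    intro x hx
    have hball : Metric.closedBall x (ℓ / 8) ⊆ Icc a b := by
      rw [Real.closedBall_eq_Icc]
      exact Icc_subset_Icc (by linarith [hx.1]) (by linarith [hx.2])
    have hxab := hball (Metric.mem_closedBall_self (by positivity))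
    by_contra! hout
    simp only [mem_union, mem_inter_iff, hxab, true_and, not_or] at hout
    obtain ⟨hxS, hxB, hxD⟩ := hout
    obtain ⟨g, hg, hgN, hxg⟩ := exists_rat_den_ge_of_notMem_nearRat hN hxD
    exact hxS (mem_biUnion (hS.mem_toFinset.2 ⟨hg, hgN, x, hball, hxB, hxg⟩) hxg)
  have hbad := (measure_union_le _ _).trans
    (add_le_add hB (volume_nearRat_dirichlet_le hab hN.ge hℓ))
  rw [← ENNReal.ofReal_add (by positivity) (by positivity)] at hbad
  have hcard := sub_le_card_mul_of_Icc_subset hδ (by positivity) hbad hcover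
  have hcard' : 3 / 8 * ℓ ≤ hS.toFinset.card * 512 / N ^ 2 := by
    rw [mul_div_assoc, show 512 / N ^ 2 = 2 * (256 / N ^ 2) by ring]
    linarith
  rw [le_div_iff₀ (by positivity)] at hcard'
  nlinarith

/-- The balls meeting the node of `f` have small `s`-weight, compared with the weight
`nodeLen n t f.den ^ s` of the node itself. The constant is such that these balls, enlarged by the
factor `1026`, cover at most one eighth of the node. -/
def IsLight {ι : Type*} (n : ℕ) (t : ℝ) (c r : ι → ℝ) (s : ℝ) (f : ℚ) : Prop :=
  hitSum c r s (node n t f) ≤ ENNReal.ofReal (1 / 20000 * nodeLen n t f.den ^ s)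

section Child

variable {ι : Type*} {n : ℕ} {t s : ℝ} {c r : ι → ℝ}

theorem LargeDen.volume_node_inter_nearRat_union_le [Countable ι] (hn : 3 ≤ n) (hs0 : 0 < s)
    (hs1 : s ≤ 1) (hr : ∀ i, 0 < r i) {f : ℚ} (hf : LargeDen n t f.den)
    (hlight : IsLight n t c r s f) (K : ℕ) :
    volume (node n t f ∩ ((nearRat (Ico (repelBound n t f.den) (2 ^ K * repelBound n t f.den))
      fun d ↦ 2 * (d ^ n)⁻¹) ∪ ⋃ i ∈ hits c r (node n t f), Metric.closedBall (c i) (1026 * r i))) ≤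
      ENNReal.ofReal (nodeLen n t f.den / 4) := by
  have hpos : 0 < nodeLen n t f.den := nodeLen_pos f.den_pos
  have hP := volume_nearRat_inv_pow_le hn
    (a := f + ((f.den : ℝ) ^ n)⁻¹ - 2 * nodeLen n t f.den)
    (b := f + ((f.den : ℝ) ^ n)⁻¹ - nodeLen n t f.den) (by linarith) hf.le_repelBound
    (by linarith [hf.le_nodeLen_mul_repelBound_pow]) K
  have hH := volume_biUnion_hits_le hr hs0 hs1 (by norm_num) hpos hlight
    (show (0 : ℝ) ≤ 1026 by norm_num)
  rw [inter_union_distrib_left]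
  refine (measure_union_le _ _).trans
    ((add_le_add hP ((measure_mono inter_subset_right).trans hH)).trans ?_)
  rw [← ENNReal.ofReal_add (by linarith) (by linarith)]
  exact ENNReal.ofReal_le_ofReal (by linarith)

-- A ball meeting a node that is close to a point outside all the balls of radii `1026 * r i` has
-- radius less than `1 / (4 * N ^ 2)`, because the distances involved add up to at most
-- `257 / N ^ 2`.
theorem LargeDen.exists_finset_isChild [Countable ι] (hn : 3 ≤ n) (ht : 0 ≤ t) (hs0 : 0 < s)
    (hs1 : s ≤ 1) (hr : ∀ i, 0 < r i) {f : ℚ} (hf : LargeDen n t f.den)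
    (hlight : IsLight n t c r s f) {N : ℝ} {k : ℕ} (hNk : N = 256 * 2 ^ k) (hN : 2 ^ 27 ≤ N)
    (hfN : 256 * f.den < N) (hℓ : 1000 ≤ nodeLen n t f.den * N) :
    ∃ S : Finset ℚ, nodeLen n t f.den * N ^ 2 ≤ 2000 * S.card ∧ ∀ g ∈ S,
      N / 256 ≤ g.den ∧ g.den ≤ N ∧ IsChild n t f g ∧
        ∀ i ∈ hits c r (node n t g), r i < 1 / (4 * N ^ 2) := by
  have hN0 : 0 < N := lt_of_lt_of_le (by positivity) hN
  set a := (f : ℝ) + ((f.den : ℝ) ^ n)⁻¹ - 2 * nodeLen n t f.den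
  set b := (f : ℝ) + ((f.den : ℝ) ^ n)⁻¹ - nodeLen n t f.den
  have hlen : b - a = nodeLen n t f.den := by ring
  have hpos : 0 < nodeLen n t f.den := nodeLen_pos f.den_pos
  have hB := hf.volume_node_inter_nearRat_union_le hn hs0 hs1 hr hlight (k + 8)
  obtain ⟨S, hcard, hS⟩ := exists_finset_rat_near (a := a) (b := b) (by linarith) hNk
    (by rwa [hlen]) (hB.trans_eq (by rw [hlen]))
  rw [hlen] at hcard hS
  refine ⟨S, hcard, fun g hg ↦ ?_⟩
  obtain ⟨hgN, hgN', x, hxf, hxB, hxg⟩ := hS g hg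
  have hfg : f.den < g.den := by
    have : (f.den : ℝ) < g.den := by linarith
    exact_mod_cast this
  have hND : N ≤ 2 ^ (k + 8) * repelBound n t f.den := calc
    N = 2 ^ (k + 8) * 1 := by rw [hNk]; ring
    _ ≤ 2 ^ (k + 8) * repelBound n t f.den := by gcongr; linarith [hf.le_repelBound]
  have hchild := hf.isChild hn ht hfg hN hℓ hgN hgN' hxf hxg fun ⟨h, ⟨hDh, hhN⟩, hxh⟩ ↦
    hxB (Or.inl ⟨h, ⟨hDh, hhN.trans_le hND⟩, hxh⟩)
  refine ⟨hgN, hgN', hchild, fun i hi ↦ ?_⟩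
  have hri := radius_lt_of_notMem_closedBall hchild.subset
    (fun y hy ↦ abs_sub_le_of_mem_node_of_le_den hn ht hN hgN hy) hxg (fun hx ↦ hxB (Or.inr hx)) hi
  field_simp at hri ⊢
  linarith

theorem disjoint_hits_node (hn : 3 ≤ n) (ht : 0 ≤ t) {N : ℝ} (hN : 2 ^ 27 ≤ N) {g g' : ℚ}
    (hgg' : g ≠ g') (hg : N / 256 ≤ g.den) (hgN : g.den ≤ N) (hg' : N / 256 ≤ g'.den)
    (hgN' : g'.den ≤ N) (hr : ∀ i ∈ hits c r (node n t g), r i < 1 / (4 * N ^ 2)) :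
    Disjoint (hits c r (node n t g)) (hits c r (node n t g')) := by
  have hN0 : 0 < N := lt_of_lt_of_le (by positivity) hN
  have : (0 : ℝ) < g.den := by exact_mod_cast g.den_pos
  have : (0 : ℝ) < g'.den := by exact_mod_cast g'.den_pos
  refine disjoint_hits (fun y hy ↦ abs_sub_le_of_mem_node_of_le_den hn ht hN hg hy)
    (fun y hy ↦ abs_sub_le_of_mem_node_of_le_den hn ht hN hg' hy) hr ?_
  calc 2 * (1 / (8 * N ^ 2) + 1 / (4 * N ^ 2)) ≤ 1 / N ^ 2 := by
        field_simp
        norm_num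
    _ ≤ 1 / ((g.den : ℝ) * g'.den) := by
        rw [sq]
        gcongr
    _ ≤ dist (g : ℝ) g' := one_div_den_mul_den_le_abs_sub_s11 hgg'

theorem LargeDen.exists_isChild_isLight [Countable ι] (hn : 3 ≤ n) (ht : 0 ≤ t) (hs0 : 0 < s)
    (hs1 : s ≤ 1) (hs : s * (n + t) < 2) (hr : ∀ i, 0 < r i) {f : ℚ} (hf : LargeDen n t f.den)
    (hlight : IsLight n t c r s f) : ∃ g, IsChild n t f g ∧ IsLight n t c r s g := by
  have hpos : 0 < nodeLen n t f.den := nodeLen_pos f.den_pos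
  obtain ⟨k, hN, hfN, hℓ, hscale⟩ := exists_scale hs hpos f.den
  obtain ⟨S, hcard, hS⟩ := hf.exists_finset_isChild hn ht hs0 hs1 hr hlight rfl hN hfN hℓ
  have hSne : S.Nonempty := by
    rw [← Finset.card_pos]
    have : 0 < (2000 : ℝ) * S.card := lt_of_lt_of_le (by positivity) hcard
    exact_mod_cast pos_of_mul_pos_right this (by norm_num)
  have hw0 : 0 < nodeLen n t (256 * 2 ^ k) := nodeLen_pos (by positivity)
  have hweight : hitSum c r s (node n t f) ≤
      S.card * ENNReal.ofReal (1 / 20000 * nodeLen n t (256 * 2 ^ k) ^ s) := by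
    refine hlight.trans ?_
    rw [← ENNReal.ofReal_natCast, ← ENNReal.ofReal_mul (by positivity)]
    refine ENNReal.ofReal_le_ofReal ?_
    have := mul_le_mul_of_nonneg_right hcard
      (by positivity : 0 ≤ nodeLen n t (256 * 2 ^ k) ^ s)
    linarith
  obtain ⟨g, hgS, hg⟩ := exists_hitSum_le hSne (fun g hg ↦ (hS g hg).2.2.1.subset)
    (fun g hg g' hg' hgg' ↦ disjoint_hits_node hn ht hN hgg' (hS g hg).1 (hS g hg).2.1
      (hS g' hg').1 (hS g' hg').2.1 (hS g hg).2.2.2) hweight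
  have hgN : g.den ≤ 256 * 2 ^ k := by exact_mod_cast (hS g hgS).2.1
  refine ⟨g, (hS g hgS).2.2.1, hg.trans (ENNReal.ofReal_le_ofReal ?_)⟩
  have := nodeLen_anti (n := n) ht g.den_pos hgN
  gcongr

end Child

/-! ### Lower bound for the dimension -/

theorem exists_closedBall_superset {X : Type*} [PseudoMetricSpace X] [Nonempty X] {s : ℝ}
    (hs : 0 < s) {u : Set X} (hu : Metric.ediam u ≠ ∞) {δ : ℝ≥0} (hδ : 0 < δ) :
    ∃ z : X, ∃ r : ℝ, 0 < r ∧ u ⊆ Metric.closedBall z r ∧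
      ENNReal.ofReal (r ^ s) ≤ Metric.ediam u ^ s + δ := by
  set D := (Metric.ediam u).toNNReal
  have hD : (D : ℝ≥0∞) = Metric.ediam u := ENNReal.coe_toNNReal hu
  obtain ⟨z, hz⟩ : ∃ z, ∀ y ∈ u, edist y z ≤ D := by
    rcases u.eq_empty_or_nonempty with rfl | ⟨z, hzu⟩
    · exact ⟨Classical.arbitrary X, fun y hy ↦ hy.elim⟩
    · exact ⟨z, fun y hy ↦ hD ▸ Metric.edist_le_ediam_of_mem hy hzu⟩
  set r : ℝ≥0 := (D ^ s + δ) ^ s⁻¹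
  have hDr : D ≤ r := (NNReal.le_rpow_inv_iff hs).2 le_self_add
  have hrs : r ^ s = D ^ s + δ := NNReal.rpow_inv_rpow hs.ne' _
  refine ⟨z, r, NNReal.rpow_pos (by positivity), fun y hy ↦ ?_, le_of_eq ?_⟩
  · rw [← Metric.closedEBall_coe, Metric.mem_closedEBall]
    exact (hz y hy).trans (by exact_mod_cast hDr)
  · rw [← hD, ← NNReal.coe_rpow, ENNReal.ofReal_coe_nnreal, hrs, ENNReal.coe_add,
      ENNReal.coe_rpow_of_nonneg _ hs.le]

theorem exists_closedBall_cover {X : Type*} [MetricSpace X] [Nonempty X] [MeasurableSpace X]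
    [BorelSpace X] {E : Set X} {s : ℝ} (hs : 0 < s) (hE : μH[s] E = 0) {ε : ℝ≥0∞} (hε : ε ≠ 0) :
    ∃ (c : ℕ → X) (r : ℕ → ℝ), (∀ i, 0 < r i) ∧ E ⊆ ⋃ i, Metric.closedBall (c i) (r i) ∧
      ∑' i, ENNReal.ofReal (r i ^ s) ≤ ε := by
  have hε2 : 0 < ε / 2 := ENNReal.half_pos hε
  rw [Measure.hausdorffMeasure_apply] at hE
  have hcover := iSup_eq_bot.1 (iSup_eq_bot.1 hE 1) one_pos
  rw [← bot_eq_zero, ← hcover] at hε2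
  simp only [iInf_lt_iff] at hε2
  obtain ⟨u, hEu, hdiam, hsum⟩ := hε2
  obtain ⟨δ, hδ, hδsum⟩ := ENNReal.exists_pos_sum_of_countable (ENNReal.half_pos hε).ne' ℕ
  choose c r hr hur hrs using fun i ↦ exists_closedBall_superset hs
    (ne_top_of_le_ne_top ENNReal.one_ne_top (hdiam i)) (hδ i)
  refine ⟨c, r, hr, hEu.trans (iUnion_mono hur), ?_⟩
  have hterm (i : ℕ) : Metric.ediam (u i) ^ s ≤ ⨆ _ : (u i).Nonempty, Metric.ediam (u i) ^ s := by
    rcases (u i).eq_empty_or_nonempty with hui | hui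
    · simp [hui, hs]
    · exact le_iSup (fun _ : (u i).Nonempty ↦ Metric.ediam (u i) ^ s) hui
  calc ∑' i, ENNReal.ofReal (r i ^ s)
      ≤ ∑' i, ((⨆ _ : (u i).Nonempty, Metric.ediam (u i) ^ s) + δ i) :=
        ENNReal.tsum_le_tsum fun i ↦ (hrs i).trans (by gcongr; exact hterm i)
    _ ≤ ε / 2 + ε / 2 := by
        rw [ENNReal.tsum_add]
        gcongr
    _ = ε := ENNReal.add_halves ε

theorem mem_WSet_of_injective {Ψ : ℝ → ℝ} {x : ℝ} {F : ℕ → ℚ} (hF : Function.Injective F)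
    (h : ∀ k, |x - F k| ≤ Ψ (F k).den) : x ∈ WSet Ψ := by
  refine Set.infinite_of_injective_forall_mem (f := fun k ↦ ((F k).num, (F k).den)) ?_
    fun k ↦ ⟨(F k).den_pos, ?_⟩
  · intro i j hij
    exact hF (Rat.ext (Prod.mk.inj hij).1 (Prod.mk.inj hij).2)
  · simpa only [Rat.cast_def (F k)] using h k

theorem inv_pow_le_half_mul_inv_pow {n : ℕ} (hn : n ≠ 0) {d q : ℝ} (hd : 0 < d)
    (hdq : 2 * d ≤ q) : (q ^ n)⁻¹ ≤ 1 / 2 * (d ^ n)⁻¹ := calc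
  (q ^ n)⁻¹ ≤ (2 * d ^ n)⁻¹ := by
    gcongr
    calc 2 * d ^ n ≤ 2 ^ n * d ^ n := by
          gcongr
          exact le_self_pow₀ one_le_two hn
      _ ≤ q ^ n := by
          rw [← mul_pow]
          gcongr
  _ = 1 / 2 * (d ^ n)⁻¹ := by rw [mul_inv, one_div]

-- If `p / q` is not in lowest terms, or its reduced denominator is below `q₀`, then `q` is at least
-- twice the maximum in `hhalf`, which gains the factor `2`.
theorem le_abs_sub_div_of_forall_rat {n : ℕ} (hn : n ≠ 0) {t : ℝ} {x : ℝ} {q₀ : ℕ}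
    (hlow : ∀ g : ℚ, q₀ ≤ g.den → (1 - (g.den : ℝ) ^ (-t)) * ((g.den : ℝ) ^ n)⁻¹ ≤ |x - g|)
    (hhalf : ∀ g : ℚ, 1 / 2 * ((max g.den q₀ : ℝ) ^ n)⁻¹ ≤ |x - g|) {q : ℕ} (hq0 : 0 < q)
    (hq : 2 * q₀ ≤ q) (p : ℤ) :
    (1 - (q : ℝ) ^ (-t)) * ((q : ℝ) ^ n)⁻¹ ≤ |x - p / q| := by
  obtain ⟨g, hg⟩ : ∃ g : ℚ, g = p / q := ⟨_, rfl⟩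
  have hden : g.den ∣ q := by
    have h := Rat.den_dvd p q
    rw [Rat.divInt_eq_div, Int.cast_natCast, ← hg] at h
    exact_mod_cast h
  have hgx : (p : ℝ) / q = g := by rw [hg]; push_cast; rfl
  rw [hgx]
  obtain ⟨e, he⟩ := hden
  by_cases he1 : e = 1
  · rw [he1, mul_one] at he
    rw [he]
    exact hlow g (by lia)
  · have h2 : 2 * max g.den q₀ ≤ q := by
      have he2 : 2 ≤ e := by
        have : e ≠ 0 := by rintro rfl; lia
        lia
      rw [mul_max_of_nonneg _ _ zero_le_two, max_le_iff]
      exact ⟨by nlinarith, hq⟩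
    have h2' : 2 * (max g.den q₀ : ℝ) ≤ q := by exact_mod_cast h2
    have hmax : 0 < (max g.den q₀ : ℝ) := lt_max_of_lt_left (by exact_mod_cast g.den_pos)
    refine le_trans ?_ (hhalf g)
    calc (1 - (q : ℝ) ^ (-t)) * ((q : ℝ) ^ n)⁻¹ ≤ 1 * ((q : ℝ) ^ n)⁻¹ := by
          gcongr
          exact sub_le_self 1 (by positivity)
      _ ≤ 1 / 2 * ((max g.den q₀ : ℝ) ^ n)⁻¹ := by
          rw [one_mul]
          exact inv_pow_le_half_mul_inv_pow hn hmax h2'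

/-- The set `E(Ψ, ω)` for the power functions `Ψ(q) = q ^ (-τ)` and `ω(q) = q ^ (-t)`. -/
abbrev PowESet (τ t : ℝ) : Set ℝ :=
  ESet (fun q : ℝ ↦ q ^ (-τ)) fun q : ℝ ↦ q ^ (-t)

section Chain

variable {n : ℕ} {t s : ℝ}

theorem inv_pow_le_abs_sub_of_den_lt (hn : 3 ≤ n) (ht : 0 ≤ t) {f g : ℚ} (hf : 2 ≤ f.den)
    (hgf : g.den < f.den) {x : ℝ} (hx : x ∈ node n t f) : ((f.den : ℝ) ^ n)⁻¹ ≤ |x - g| := by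
  have hle : ((f.den : ℝ) ^ n)⁻¹ ≤ 1 / (2 * (f.den * g.den)) :=
    inv_pow_le_one_div_two_mul (by lia) (by exact_mod_cast f.den_pos) (by exact_mod_cast g.den_pos)
      (two_mul_le_pow_sub_one hn (by positivity) (by exact_mod_cast hgf.le) (by exact_mod_cast hf))
  exact hle.trans (one_div_le_abs_sub_of_abs_sub_le (fun h ↦ hgf.ne (by rw [h]))
    ((abs_sub_le_of_mem_node ht hx).trans hle))

variable {F : ℕ → ℚ} (hF : ∀ k, IsChild n t (F k) (F (k + 1)))

include hF

theorem strictMono_den : StrictMono fun k ↦ (F k).den :=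
  strictMono_nat_of_lt_succ fun k ↦ (hF k).den_lt

theorem exists_forall_mem_node : ∃ x, ∀ k, x ∈ node n t (F k) := by
  simp only [← mem_iInter]
  refine IsCompact.nonempty_iInter_of_sequence_nonempty_isCompact_isClosed _
    (fun k ↦ (hF k).subset) (fun k ↦ nonempty_Icc.2 ?_) isCompact_Icc fun k ↦ isClosed_Icc
  linarith [nodeLen_pos (n := n) (t := t) (F k).den_pos]

variable {x : ℝ} (hx : ∀ k, x ∈ node n t (F k))

include hx

theorem le_abs_sub_of_forall_mem_node {g : ℚ} (hg : (F 0).den ≤ g.den) :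
    (1 - (g.den : ℝ) ^ (-t)) * ((g.den : ℝ) ^ n)⁻¹ ≤ |x - g| := by
  obtain ⟨k, hk, hk'⟩ : ∃ k, ¬ g.den < (F k).den ∧ g.den < (F (k + 1)).den :=
    Nat.exists_not_and_succ_of_not_zero_of_exists hg.not_gt
      ⟨g.den + 1, (strictMono_den hF).le_apply⟩
  by_cases hgk : g = F k
  · rw [hgk]
    exact le_abs_sub_of_mem_node (hx k)
  · refine le_trans ?_ ((hF k).inv_pow_le g hgk (not_lt.1 hk) hk' x (hx (k + 1)))
    exact mul_le_of_le_one_left (by positivity) (sub_le_self 1 (by positivity))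

theorem mem_powESet_of_forall_mem_node (hn : 3 ≤ n) (ht : 0 ≤ t) (h0 : LargeDen n t (F 0).den) :
    x ∈ PowESet n t := by
  have hΨ (q : ℕ) : (q : ℝ) ^ (-(n : ℝ)) = ((q : ℝ) ^ n)⁻¹ := by
    rw [Real.rpow_neg q.cast_nonneg, Real.rpow_natCast]
  have hlow (g : ℚ) := le_abs_sub_of_forall_mem_node hF hx (g := g)
  have hhalf (g : ℚ) : 1 / 2 * ((max g.den (F 0).den : ℝ) ^ n)⁻¹ ≤ |x - g| := by
    rcases lt_or_ge g.den (F 0).den with hg | hg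
    · rw [max_eq_right (by exact_mod_cast hg.le)]
      refine le_trans ?_ (inv_pow_le_abs_sub_of_den_lt hn ht (h0.two_le hn) hg (hx 0))
      exact mul_le_of_le_one_left (by positivity) (by norm_num)
    · rw [max_eq_left (by exact_mod_cast hg)]
      refine le_trans ?_ (hlow g hg)
      have h0pos : (0 : ℝ) < (F 0).den := by exact_mod_cast (F 0).den_pos
      have hgt : (g.den : ℝ) ^ (-t) ≤ 1 / 2 := (Real.rpow_le_rpow_of_nonpos h0pos
        (by exact_mod_cast hg) (neg_nonpos.2 ht)).trans h0.half
      gcongr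
      linarith
  refine ⟨mem_WSet_of_injective (F := F) (strictMono_den hF).injective.of_comp fun k ↦ ?_,
    2 * (F 0).den, fun q hq p ↦ ?_⟩
  · rw [hΨ]
    exact abs_sub_le_of_mem_node ht (hx k)
  · have := (F 0).den_pos
    beta_reduce
    rw [hΨ]
    exact le_abs_sub_div_of_forall_rat (by lia) hlow hhalf (by lia) hq p

end Chain

section Dimension

variable {n : ℕ} {t s : ℝ}

theorem exists_seq_isChild {P : ℚ → Prop} (hP : ∀ f, P f → ∃ g, IsChild n t f g ∧ P g) {f₀ : ℚ}
    (h₀ : P f₀) : ∃ F : ℕ → ℚ, F 0 = f₀ ∧ ∀ k, P (F k) ∧ IsChild n t (F k) (F (k + 1)) := by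
  choose! child hchild hPchild using hP
  have hiter (k : ℕ) : P (child^[k] f₀) := Function.Iterate.rec P h₀ hPchild k
  refine ⟨fun k ↦ child^[k] f₀, rfl, fun k ↦ ⟨hiter k, ?_⟩⟩
  beta_reduce
  rw [Function.iterate_succ_apply']
  exact hchild _ (hiter k)

theorem tendsto_nodeLen (hnt : 0 < n + t) : Tendsto (nodeLen n t) atTop (𝓝 0) := by
  have h := ((tendsto_rpow_neg_atTop hnt).comp tendsto_natCast_atTop_atTop).div_const 2
  rw [zero_div] at h
  refine h.congr' ?_
  filter_upwards [eventually_gt_atTop 0] with q hq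
  exact (nodeLen_eq_rpow hq).symm

-- A ball containing the limit of a sequence of light nodes meets all of them, so its radius is at
-- most the length of each of them.
theorem exists_mem_powESet_notMem_closedBall {ι : Type*} [Countable ι] {c r : ι → ℝ} (hn : 3 ≤ n)
    (ht : 0 ≤ t) (hs0 : 0 < s) (hs1 : s ≤ 1) (hs : s * (n + t) < 2) (hr : ∀ i, 0 < r i) {Q : ℕ}
    (hQ : ∀ q ≥ Q, LargeDen n t q) {f : ℚ} (hf : Q ≤ f.den) (hlight : IsLight n t c r s f) :
    ∃ x ∈ PowESet n t, ∀ i, x ∉ Metric.closedBall (c i) (r i) := by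
  have hstep (f : ℚ) (hf : Q ≤ f.den ∧ IsLight n t c r s f) :
      ∃ g, IsChild n t f g ∧ Q ≤ g.den ∧ IsLight n t c r s g := by
    obtain ⟨g, hg, hg'⟩ :=
      (hQ _ hf.1).exists_isChild_isLight hn ht hs0 hs1 hs hr hf.2
    exact ⟨g, hg, hf.1.trans hg.den_lt.le, hg'⟩
  obtain ⟨F, rfl, hF⟩ := exists_seq_isChild hstep ⟨hf, hlight⟩
  have hchild (k : ℕ) := (hF k).2
  obtain ⟨x, hx⟩ := exists_forall_mem_node hchild
  refine ⟨x, mem_powESet_of_forall_mem_node hchild hx hn ht (hQ _ hf), fun i hxi ↦ ?_⟩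
  have hle (k : ℕ) : r i ≤ nodeLen n t (F k).den := by
    have hpos := nodeLen_pos (n := n) (t := t) (F k).den_pos
    refine radius_le_of_hitSum_le (fun i ↦ (hr i).le) hs0 hpos.le
      ((hF k).1.2.trans (ENNReal.ofReal_le_ofReal ?_)) ⟨x, hxi, hx k⟩
    exact mul_le_of_le_one_left (by positivity) (by norm_num)
  exact (hr i).not_ge <| ge_of_tendsto'
    ((tendsto_nodeLen (by positivity)).comp (strictMono_den hchild).tendsto_atTop) hle

theorem hausdorffMeasure_powESet_ne_zero (hn : 3 ≤ n) (ht : 0 < t) (htn : t < (n : ℝ) * (n - 1))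
    (hs0 : 0 < s) (hs : s * (n + t) < 2) : μH[s] (PowESet n t) ≠ 0 := by
  intro hzero
  have hs1 : s ≤ 1 := by
    have : (3 : ℝ) ≤ n := by exact_mod_cast hn
    nlinarith
  obtain ⟨Q, hQ, hQ0⟩ := ((eventually_forall_ge_atTop.2 (eventually_largeDen hn ht htn)).and
    (eventually_gt_atTop 0)).exists
  have hden : ((Q : ℚ)⁻¹).den = Q := Rat.inv_natCast_den_of_pos hQ0
  have hlen := nodeLen_pos (n := n) (t := t) (Q : ℚ)⁻¹.den_pos
  obtain ⟨c, r, hr, hcover, hsum⟩ := exists_closedBall_cover hs0 hzero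
    (ε := ENNReal.ofReal (1 / 20000 * nodeLen n t (Q : ℚ)⁻¹.den ^ s))
    (ENNReal.ofReal_pos.2 (by positivity)).ne'
  have hlight : IsLight n t c r s (Q : ℚ)⁻¹ :=
    (ENNReal.tsum_comp_le_tsum_of_injective Subtype.val_injective _).trans hsum
  obtain ⟨x, hx, hxball⟩ := exists_mem_powESet_notMem_closedBall hn ht.le hs0 hs1 hs hr hQ
    hden.ge hlight
  obtain ⟨i, hi⟩ := mem_iUnion.1 (hcover hx)
  exact hxball i hi

theorem le_dimH_powESet (hn : 3 ≤ n) (ht : 0 < t) (htn : t < (n : ℝ) * (n - 1)) :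
    ENNReal.ofReal (2 / (n + t)) ≤ dimH (PowESet n t) := by
  refine ENNReal.le_of_forall_nnreal_lt fun s hs ↦ ?_
  rcases eq_zero_or_pos s with rfl | hs0
  · exact zero_le
  · rw [ENNReal.lt_ofReal_iff_toReal_lt ENNReal.coe_ne_top, ENNReal.coe_toReal,
      lt_div_iff₀ (by positivity)] at hs
    exact le_dimH_of_hausdorffMeasure_ne_zero
      (hausdorffMeasure_powESet_ne_zero hn ht htn (by exact_mod_cast hs0) hs)

end Dimension

/-! ### Upper bound for the dimension -/

theorem hausdorffMeasure_limsup_cofinite_eq_zero {X ι : Type*} [EMetricSpace X]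
    [MeasurableSpace X] [BorelSpace X] [Countable ι] {d : ℝ} (hd : 0 < d) {U : ι → Set X}
    (hU : ∑' i, Metric.ediam (U i) ^ d ≠ ∞) : μH[d] (limsup U cofinite) = 0 := by
  set tail : Finset ι → ℝ≥0∞ := fun F ↦ ∑' i : {i // i ∉ F}, Metric.ediam (U i) ^ d
  have htail : Tendsto tail atTop (𝓝 0) := ENNReal.tendsto_tsum_compl_atTop_zero hU
  have hradius : Tendsto (fun F ↦ tail F ^ d⁻¹) atTop (𝓝 0) := by
    simpa only [ENNReal.zero_rpow_of_pos (inv_pos.2 hd)] using htail.ennrpow_const d⁻¹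
  have hdiam (F : Finset ι) (i : {i // i ∉ F}) : Metric.ediam (U i) ≤ tail F ^ d⁻¹ :=
    (ENNReal.le_rpow_inv_iff hd).2
      (ENNReal.le_tsum (f := fun j : {j // j ∉ F} ↦ Metric.ediam (U j) ^ d) i)
  have hcover (F : Finset ι) : limsup U cofinite ⊆ ⋃ i : {i // i ∉ F}, U i := fun x hx ↦ by
    rw [cofinite.limsup_set_eq] at hx
    obtain ⟨i, hxi, hiF⟩ := hx.exists_notMem_finset F
    exact mem_iUnion.2 ⟨⟨i, hiF⟩, hxi⟩
  have hle := Measure.hausdorffMeasure_le_liminf_tsum d _ _ hradius (fun F (i : {i // i ∉ F}) ↦ U i)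
    (Eventually.of_forall hdiam) (Eventually.of_forall hcover)
  rw [htail.liminf_eq] at hle
  exact nonpos_iff_eq_zero.1 hle

/-- The two components of the annulus `a ≤ |x - z| ≤ b`: the right-hand one for `true` and the
left-hand one for `false`. -/
def annulusHalf (z a b : ℝ) : Bool → Set ℝ
  | true => Icc (z + a) (z + b)
  | false => Icc (z - b) (z - a)

theorem ediam_annulusHalf (z a b : ℝ) (σ : Bool) :
    Metric.ediam (annulusHalf z a b σ) = ENNReal.ofReal (b - a) := by
  cases σ
  · rw [annulusHalf, Real.ediam_Icc, sub_sub_sub_cancel_left]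
  · rw [annulusHalf, Real.ediam_Icc, add_sub_add_left_eq_sub]

theorem exists_mem_annulusHalf {z a b x : ℝ} (ha : a ≤ |x - z|) (hb : |x - z| ≤ b) :
    ∃ σ, x ∈ annulusHalf z a b σ := by
  rcases le_abs'.1 ha with h | h
  · exact ⟨false, by linarith [(abs_le.1 hb).1], by linarith⟩
  · exact ⟨true, by linarith, by linarith [(abs_le.1 hb).2]⟩

/-- The indices of the half-annuli that cover the part of an exact approximation set in `[-k, k]`:
a denominator `q`, a numerator `p` with `|p| ≤ (k + 1) * q`, and a side. -/
abbrev AnnulusIndex (k : ℕ) : Type :=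
  Σ q : ℕ+, Finset.Icc (-((k + 1) * q) : ℤ) ((k + 1) * q) × Bool

/-- The halves of the annuli `(1 - ω q) * Ψ q ≤ |x - p / q| ≤ Ψ q`. -/
def annulusFamily (Ψ ω : ℝ → ℝ) (k : ℕ) (i : AnnulusIndex k) : Set ℝ :=
  annulusHalf ((i.2.1 : ℤ) / (i.1 : ℕ)) ((1 - ω (i.1 : ℕ)) * Ψ (i.1 : ℕ)) (Ψ (i.1 : ℕ)) i.2.2

theorem abs_num_le_of_abs_sub_le_one {x : ℝ} {k : ℕ} (hx : |x| ≤ k) {p : ℤ} {q : ℕ} (hq : 0 < q)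
    (h : |x - p / q| ≤ 1) : |p| ≤ (k + 1) * q := by
  have hq0 : (0 : ℝ) < q := by exact_mod_cast hq
  have hpq : |(p : ℝ) / q| ≤ k + 1 := by
    have := abs_sub_abs_le_abs_sub ((p : ℝ) / q) x
    rw [abs_sub_comm] at this
    linarith
  rw [abs_div, Nat.abs_cast, div_le_iff₀ hq0] at hpq
  exact_mod_cast hpq

theorem finite_setOf_abs_num_le (k Q : ℕ) :
    {pq : ℤ × ℕ | |pq.1| ≤ (k + 1) * pq.2 ∧ pq.2 < Q}.Finite := by
  refine ((finite_Icc (-((k + 1) * Q) : ℤ) ((k + 1) * Q)).prod (finite_Iio Q)).subset ?_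
  rintro ⟨p, q⟩ ⟨hp, hq⟩
  refine ⟨abs_le.1 (hp.trans ?_), hq⟩
  gcongr

section ESetUpper

variable {Ψ ω : ℝ → ℝ} {k : ℕ}

theorem ESet_inter_subset_limsup_annulusFamily (hΨ : ∀ q : ℕ, 0 < q → Ψ q ≤ 1) :
    ESet Ψ ω ∩ {x | |x| ≤ k} ⊆ limsup (annulusFamily Ψ ω k) cofinite := by
  rintro x ⟨⟨hW, Q, hQ⟩, hxk⟩
  rw [cofinite.limsup_set_eq]
  intro hfin
  refine hW (((hfin.image fun i ↦ ((i.2.1 : ℤ), (i.1 : ℕ))).union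
    (finite_setOf_abs_num_le k Q)).subset ?_)
  rintro ⟨p, q⟩ ⟨hq, hpq⟩
  have hp : |p| ≤ (k + 1) * q := abs_num_le_of_abs_sub_le_one hxk hq (hpq.trans (hΨ q hq))
  rcases lt_or_ge q Q with hqQ | hqQ
  · exact Or.inr ⟨hp, hqQ⟩
  · obtain ⟨σ, hσ⟩ := exists_mem_annulusHalf (hQ q hqQ p) hpq
    exact Or.inl ⟨⟨⟨q, hq⟩, ⟨p, Finset.mem_Icc.2 (abs_le.1 hp)⟩, σ⟩, hσ, rfl⟩

theorem tsum_ediam_annulusFamily_le (d : ℝ) :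
    ∑' i, Metric.ediam (annulusFamily Ψ ω k i) ^ d ≤
      6 * (k + 1) * ∑' q : ℕ, q * ENNReal.ofReal (ω q * Ψ q) ^ d := by
  have hcard (q : ℕ+) : (Fintype.card (Finset.Icc (-((k + 1) * q) : ℤ) ((k + 1) * q) × Bool) :
      ℝ≥0∞) ≤ 6 * (k + 1) * (q : ℕ) := by
    rw [Fintype.card_prod, Fintype.card_coe, Int.card_Icc, Fintype.card_bool]
    have hq := q.pos
    have h : ((k + 1) * q + 1 - -((k + 1) * q) : ℤ).toNat * 2 ≤ 6 * (k + 1) * (q : ℕ) := by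
      zify
      have : (1 : ℤ) ≤ (k + 1) * (q : ℕ) := one_le_mul_of_one_le_of_one_le (by lia) (by lia)
      rw [Int.toNat_of_nonneg (by linarith)]
      linarith
    exact_mod_cast h
  calc ∑' i, Metric.ediam (annulusFamily Ψ ω k i) ^ d
      ≤ ∑' q : ℕ+, 6 * (k + 1) * ((q : ℕ) * ENNReal.ofReal (ω (q : ℕ) * Ψ (q : ℕ)) ^ d) := by
        rw [ENNReal.tsum_sigma']
        refine ENNReal.tsum_le_tsum fun q ↦ ?_
        simp only [annulusFamily, ediam_annulusHalf]
        rw [tsum_fintype, Finset.sum_const, Finset.card_univ, nsmul_eq_mul, ← mul_assoc,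
          sub_mul, one_mul, sub_sub_cancel]
        gcongr
        exact hcard q
    _ ≤ 6 * (k + 1) * ∑' q : ℕ, q * ENNReal.ofReal (ω q * Ψ q) ^ d := by
        rw [ENNReal.tsum_mul_left]
        gcongr
        exact ENNReal.tsum_comp_le_tsum_of_injective PNat.coe_injective
          fun q : ℕ ↦ q * ENNReal.ofReal (ω q * Ψ q) ^ d

theorem hausdorffMeasure_ESet_eq_zero (hΨ : ∀ q : ℕ, 0 < q → Ψ q ≤ 1) {d : ℝ} (hd : 0 < d)
    (hsum : ∑' q : ℕ, q * ENNReal.ofReal (ω q * Ψ q) ^ d ≠ ∞) : μH[d] (ESet Ψ ω) = 0 := by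
  have hcover : ESet Ψ ω ⊆ ⋃ k : ℕ, ESet Ψ ω ∩ {x | |x| ≤ k} := fun x hx ↦ by
    obtain ⟨k, hk⟩ := exists_nat_ge |x|
    exact mem_iUnion.2 ⟨k, hx, hk⟩
  refine measure_mono_null hcover (measure_iUnion_null fun k ↦ ?_)
  refine measure_mono_null (ESet_inter_subset_limsup_annulusFamily hΨ)
    (hausdorffMeasure_limsup_cofinite_eq_zero hd ?_)
  exact ne_top_of_le_ne_top (ENNReal.mul_ne_top (by finiteness) hsum)
    (tsum_ediam_annulusFamily_le d)

end ESetUpper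

theorem hausdorffMeasure_powESet_eq_zero {τ t : ℝ} (hτ : 0 ≤ τ) {d : ℝ} (hd0 : 0 < d)
    (hd : 2 < d * (τ + t)) : μH[d] (PowESet τ t) = 0 := by
  have hΨ (q : ℕ) (hq : 0 < q) : (q : ℝ) ^ (-τ) ≤ 1 :=
    Real.rpow_le_one_of_one_le_of_nonpos (by exact_mod_cast hq) (neg_nonpos.2 hτ)
  refine hausdorffMeasure_ESet_eq_zero hΨ hd0 ?_
  have hsummable : Summable fun q : ℕ ↦ (q : ℝ) ^ (1 - d * (τ + t)) :=
    Real.summable_nat_rpow.2 (by linarith)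
  refine ne_top_of_le_ne_top hsummable.tsum_ofReal_ne_top (ENNReal.tsum_le_tsum fun q ↦ ?_)
  rcases q.eq_zero_or_pos with rfl | hq
  · simp
  have hq0 : (0 : ℝ) < q := by exact_mod_cast hq
  rw [ENNReal.ofReal_rpow_of_nonneg (by positivity) hd0.le, ← ENNReal.ofReal_natCast,
    ← ENNReal.ofReal_mul hq0.le, ← Real.rpow_add hq0, ← Real.rpow_mul hq0.le,
    ← Real.rpow_one_add' hq0.le (by linarith)]
  exact ENNReal.ofReal_le_ofReal (le_of_eq (by ring_nf))

theorem dimH_powESet_le {τ t : ℝ} (hτ : 0 ≤ τ) (hτt : 0 < τ + t) :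
    dimH (PowESet τ t) ≤ ENNReal.ofReal (2 / (τ + t)) := by
  refine dimH_le fun d hd ↦ not_lt.1 fun hlt ↦ ?_
  rw [ENNReal.ofReal_lt_coe_iff (by positivity)] at hlt
  have hd0 : (0 : ℝ) < d := lt_trans (by positivity) hlt
  rw [div_lt_iff₀ hτt] at hlt
  rw [hausdorffMeasure_powESet_eq_zero hτ hd0 hlt] at hd
  exact ENNReal.zero_ne_top hd

/-- **Theorem.** For a natural number `τ₁ ≥ 3`, `Ψ(q) = q^(−τ₁)` and `ω(q) = q^(−τ₂)` with
`0 < τ₂ < τ₁(τ₁ − 1)`, one has `dim_H(E(Ψ,ω)) = 2/(τ₁ + τ₂)`. -/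
theorem dimH_ESet_rpow_nat (τ₁ : ℕ) (hτ₁ : 3 ≤ τ₁) (τ₂ : ℝ) (hτ₂pos : 0 < τ₂)
    (hτ₂ : τ₂ < (τ₁ : ℝ) * ((τ₁ : ℝ) - 1)) :
    dimH (ESet (fun q : ℝ => q ^ (-(τ₁ : ℝ))) (fun q : ℝ => q ^ (-τ₂))) =
      ENNReal.ofReal (2 / ((τ₁ : ℝ) + τ₂)) := by
  apply le_antisymm
  · exact dimH_powESet_le τ₁.cast_nonneg (by positivity)
  · exact le_dimH_powESet hτ₁ hτ₂pos hτ₂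
end
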